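/- Let c₀ ∈ {1,2}. Define ν(0;3,c₀) = 1/3, ν(1;3,c₀) = (2/3)·(π/√3 − ln 3 − 1/2), ν(2;3,c₀) = (8/3)·(ln 3 − 1), ν(3;3,c₀) = 626/105 − 2π/√3 − 2·ln 3, ν(4;3,c₀) = (4/3)·(π/√3 − 23/35 − ln 3), ν(5;3,c₀) = (4/3)·ln 3 − 193/135, and ν(r;3,c₀) = 8/(3(2r−5)(2r−3)(2r−1)) for r ≥ 6. Then there is an absolute constant C such that for all integers Q ≥ 2 and r ≥ 0 with r ≤ (Q/ln Q)^{1/3}, one has |ν(Q;r,3,c₀) − ν(r;3,c₀)| ≤ C·(ln Q)/Q. -/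

import Mathlib

open MeasureTheory

/-- The Farey series Φ_Q: all irreducible fractions a/q with 0 ≤ a ≤ q ≤ Q, as a finset of ℚ
(rationals in [0,1] with denominator at most Q). -/
def farey (Q : ℕ) : Finset ℚ :=
  (Finset.Icc 1 Q).biUnion fun q => (Finset.range (q + 1)).image fun a : ℕ => (a : ℚ) / (q : ℚ)

/-- N(Q;r,D,c₀): the number of tuples of r+2 consecutive fractions of Φ_Q whose first and last
denominators are ≡ c₀ (mod D) and whose r interior denominators are ≢ c₀ (mod D). -/
noncomputable def NN (Q r D c0 : ℕ) : ℕ :=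
  Set.ncard {f : Fin (r + 2) → ℚ |
    (∀ i, f i ∈ farey Q) ∧
    (∀ i : Fin (r + 1), f i.castSucc < f i.succ ∧
      ∀ z ∈ farey Q, ¬ (f i.castSucc < z ∧ z < f i.succ)) ∧
    (f 0).den % D = c0 % D ∧
    (f (Fin.last (r + 1))).den % D = c0 % D ∧
    ∀ i : Fin (r + 2), i ≠ 0 → i ≠ Fin.last (r + 1) → (f i).den % D ≠ c0 % D}

/-- N(Q;D,c₀): the number of fractions of Φ_Q whose denominator is ≡ c₀ (mod D). -/
def ND (Q D c0 : ℕ) : ℕ :=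
  ((farey Q).filter fun x => x.den % D = c0 % D).card

/-- The proportion ν(Q;r,D,c₀). -/
noncomputable def nuQ (Q r D c0 : ℕ) : ℝ :=
  (NN Q r D c0 : ℝ) / (ND Q D c0 : ℝ)

/-- The limiting proportions ν(r;3,c₀). -/
noncomputable def nulim : ℕ → ℝ
  | 0 => 1 / 3
  | 1 => 2 / 3 * (Real.pi / Real.sqrt 3 - Real.log 3 - 1 / 2)
  | 2 => 8 / 3 * (Real.log 3 - 1)
  | 3 => 626 / 105 - 2 * Real.pi / Real.sqrt 3 - 2 * Real.log 3
  | 4 => 4 / 3 * (Real.pi / Real.sqrt 3 - 23 / 35 - Real.log 3)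
  | 5 => 4 / 3 * Real.log 3 - 193 / 135
  | r => 8 / (3 * (2 * (r : ℝ) - 5) * (2 * (r : ℝ) - 3) * (2 * (r : ℝ) - 1))

/-!
Consecutive denominators in the Farey sequence of order `Q` are exactly the coprime pairs `(a, b)`
with `a, b ≤ Q < a + b`, and the denominator following them is `k b - a` with the index
`k = ⌊(Q + a) / b⌋`. So the residues modulo `3` of all later denominators depend on those of `a` and
`b` and on the successive indices modulo `3`.

A zero residue stands between opposite nonzero residues. Hence the interior of a gap of the residue
`-e` is the single residue `e`, or a run of residues `e` with a `0` added before it, after it (these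
two cases are exchanged by the symmetry reversing the sequence) or on both sides. A run of residues
`e` requires indices congruent to `2` modulo `3`. An index which is at least `5` has both its
neighbours equal to `1`, so all indices inside a long run are `2`: the denominators are then in
arithmetic progression, which confines `(a, b) / Q` to a triangle and gives a rational density. In
short runs one index may be an arbitrary number in a class modulo `3`. The areas of the regions of
constant index then add up to series with the values `π / √3` and `log 3`.

It remains to count the coprime lattice points of a region `Q • R` in given residue classes. For
regions between two piecewise linear graphs, slicing gives an error linear in the dilation, and
Möbius inversion turns this into `O(Q log Q)`, with an absolute constant since only finitely many
shapes occur besides the triangles.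
-/

namespace FareyGap

open Filter Topology Finset

theorem tendsto_one_div_three_mul_add (c : ℝ) :
    Tendsto (fun N : ℕ => 1 / (3 * (N : ℝ) + c)) atTop (𝓝 0) := by
  simpa [Function.comp_def] using tendsto_inv_atTop_zero.comp
    (tendsto_atTop_add_const_right _ c
      (tendsto_natCast_atTop_atTop.const_mul_atTop (r := (3 : ℝ)) (by norm_num)))

theorem tendsto_sum_one_div_succ_sub (c : ℝ) :
    Tendsto (fun N : ℕ => ∑ j ∈ range N, (1 / (3 * ((j + 1 : ℕ) : ℝ) + c) - 1 / (3 * (j : ℝ) + c)))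
      atTop (𝓝 (-(1 / c))) := by
  simp only [sum_range_sub (fun j : ℕ => 1 / (3 * (j : ℝ) + c))]
  simpa using (tendsto_one_div_three_mul_add c).sub_const (1 / c)

theorem cotTerm_one_third (j : ℕ) :
    cotTerm (1 / 3) j = ((3 / (3 * j + 4) - 3 / (3 * j + 2) : ℝ) : ℂ) := by
  have hreal : (1 / (1 / 3 - (j + 1)) + 1 / (1 / 3 + (j + 1)) : ℝ)
      = 3 / (3 * j + 4) - 3 / (3 * j + 2) := by
    rw [show (1 / 3 - (j + 1) : ℝ) = -((3 * j + 2) / 3) by ring,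
      show (1 / 3 + (j + 1) : ℝ) = (3 * j + 4) / 3 by ring, one_div, one_div, inv_neg, inv_div,
      inv_div, neg_add_eq_sub]
  rw [← hreal, cotTerm]
  push_cast
  rfl

theorem pi_mul_cot_pi_div_three :
    (Real.pi : ℂ) * Complex.cot (Real.pi * (1 / 3)) = ((Real.pi / √3 : ℝ) : ℂ) := by
  rw [show (Real.pi : ℂ) * (1 / 3) = ((Real.pi / 3 : ℝ) : ℂ) by push_cast; ring, Complex.cot,
    ← Complex.ofReal_cos, ← Complex.ofReal_sin, Real.cos_pi_div_three, Real.sin_pi_div_three]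
  push_cast
  ring

theorem one_third_mem_integerComplement : (1 / 3 : ℂ) ∈ Complex.integerComplement := by
  rintro ⟨n, hn⟩
  have h : ((3 * n : ℤ) : ℂ) = 1 := by
    push_cast
    rw [hn]
    norm_num
  have : 3 * n = 1 := by exact_mod_cast h
  omega

theorem tendsto_sum_one_div_sub_one_div :
    Tendsto (fun N : ℕ => ∑ j ∈ range N, (1 / (3 * (j : ℝ) + 1) - 1 / (3 * (j : ℝ) + 2)))
      atTop (𝓝 (Real.pi / (3 * √3))) := by
  have hcot := tendsto_logDeriv_euler_cot_sub one_third_mem_integerComplement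
  simp only [pi_mul_cot_pi_div_three, cotTerm_one_third, ← Complex.ofReal_sum] at hcot
  have hre := ((Complex.continuous_re.tendsto _).comp hcot).div_const 3
  have hlim := hre.sub (tendsto_sum_one_div_succ_sub 1)
  rw [show ((Real.pi / √3 : ℝ) - 1 / (1 / 3) : ℂ).re / 3 - -(1 / 1) = Real.pi / (3 * √3) by
    norm_num [Complex.ofReal_re]; ring] at hlim
  refine hlim.congr fun N => ?_
  simp only [Function.comp_apply, Complex.ofReal_re]
  rw [sum_div, ← sum_sub_distrib]
  refine sum_congr rfl fun j _ => ?_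
  push_cast
  ring

theorem sum_eq_harmonic_sub_harmonic (N : ℕ) :
    ∑ j ∈ range N, (1 / (3 * (j : ℝ) + 1) + 1 / (3 * (j : ℝ) + 2) - 2 / (3 * (j : ℝ) + 3))
      = (harmonic (3 * N) : ℝ) - harmonic N := by
  induction N with
  | zero => simp
  | succ n ih =>
    rw [sum_range_succ, ih, show 3 * (n + 1) = 3 * n + 1 + 1 + 1 by ring]
    simp only [harmonic_succ]
    push_cast
    rw [show (3 * (n : ℝ) + 1 + 1) = 3 * n + 2 by ring,
      show (3 * (n : ℝ) + 2 + 1) = 3 * (n + 1) by ring,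
      show (3 * (n : ℝ) + 3) = 3 * (n + 1) by ring]
    have : (0 : ℝ) < n + 1 := by positivity
    field_simp
    ring

theorem tendsto_sum_log_three :
    Tendsto (fun N : ℕ => ∑ j ∈ range N,
      (1 / (3 * (j : ℝ) + 1) + 1 / (3 * (j : ℝ) + 2) - 2 / (3 * (j : ℝ) + 3)))
      atTop (𝓝 (Real.log 3)) := by
  have hthree : Tendsto (fun N : ℕ => 3 * N) atTop atTop :=
    tendsto_id.const_mul_atTop' (by norm_num)
  have hlim := ((Real.tendsto_harmonic_sub_log.comp hthree).sub
    Real.tendsto_harmonic_sub_log).add_const (Real.log 3)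
  rw [sub_self, zero_add] at hlim
  refine hlim.congr' ?_
  filter_upwards [eventually_gt_atTop 0] with N hN
  have hN' : (N : ℝ) ≠ 0 := by positivity
  rw [sum_eq_harmonic_sub_harmonic]
  simp only [Function.comp_apply]
  push_cast
  rw [Real.log_mul (by norm_num) hN']
  ring

/-- The area of the cell of the Farey triangle on which the index equals `k`. -/
noncomputable def cellArea (k : ℕ) : ℝ := 4 / ((k : ℝ) * (k + 1) * (k + 2))

theorem cellArea_eq {k : ℕ} (hk : 0 < k) :
    cellArea k = 2 / (k : ℝ) - 4 / (k + 1) + 2 / (k + 2) := by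
  have : (0 : ℝ) < k := by exact_mod_cast hk
  unfold cellArea
  field_simp
  ring

theorem cellArea_nonneg (k : ℕ) : 0 ≤ cellArea k := by
  unfold cellArea
  positivity

theorem cellArea_anti {k l : ℕ} (hk : 0 < k) (hkl : k ≤ l) : cellArea l ≤ cellArea k := by
  unfold cellArea
  gcongr

/-- The total area of the cells of index `3 * j + 2 + i`, where `j` ranges over `ℕ`. -/
noncomputable def classArea : Fin 3 → ℝ
  | 0 => 2 * (Real.log 3 - 1)
  | 1 => 3 - Real.pi / √3 - Real.log 3
  | 2 => Real.pi / √3 - Real.log 3 - 2 / 3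

theorem tendsto_sum_cellArea (i : Fin 3) :
    Tendsto (fun N : ℕ => ∑ j ∈ range N, cellArea (3 * j + 2 + i)) atTop (𝓝 (classArea i)) := by
  have hA := tendsto_sum_one_div_sub_one_div
  have hL := tendsto_sum_log_three
  have hT := tendsto_sum_one_div_succ_sub
  fin_cases i <;> simp only [classArea]
  · rw [show 2 * (Real.log 3 - 1) = 2 * Real.log 3 + 2 * -(1 / 1) by ring]
    refine ((hL.const_mul 2).add ((hT 1).const_mul 2)).congr fun N => ?_
    simp only [mul_sum, ← sum_add_distrib]
    refine sum_congr rfl fun j _ => ?_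
    rw [cellArea_eq (by positivity)]
    push_cast
    ring
  · rw [show 3 - Real.pi / √3 - Real.log 3 = -3 * (Real.pi / (3 * √3)) + -1 * Real.log 3
      + (-4 * -(1 / 1) + 2 * -(1 / 2)) by ring]
    refine (((hA.const_mul (-3)).add (hL.const_mul (-1))).add
      (((hT 1).const_mul (-4)).add ((hT 2).const_mul 2))).congr fun N => ?_
    simp only [mul_sum, ← sum_add_distrib]
    refine sum_congr rfl fun j _ => ?_
    rw [cellArea_eq (by positivity)]
    push_cast
    ring
  · rw [show Real.pi / √3 - Real.log 3 - 2 / 3 = 3 * (Real.pi / (3 * √3)) + -1 * Real.log 3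
      + (2 * -(1 / 1) + -4 * -(1 / 2) + 2 * -(1 / 3)) by ring]
    refine (((hA.const_mul 3).add (hL.const_mul (-1))).add
      ((((hT 1).const_mul 2).add ((hT 2).const_mul (-4))).add
        ((hT 3).const_mul 2))).congr fun N => ?_
    simp only [mul_sum, ← sum_add_distrib]
    refine sum_congr rfl fun j _ => ?_
    rw [cellArea_eq (by positivity)]
    push_cast
    ring

theorem cellArea_three_mul_add_two_le (n : ℕ) :
    cellArea (3 * n + 2) ≤ 1 / ((n : ℝ) + 1) ^ 2 - 1 / ((n + 1 : ℕ) + 1 : ℝ) ^ 2 := by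
  have hn : (0 : ℝ) ≤ n := Nat.cast_nonneg n
  unfold cellArea
  push_cast
  rw [div_sub_div _ _ (by positivity) (by positivity),
    div_le_div_iff₀ (by positivity) (by positivity)]
  have : 0 ≤ (n : ℝ) ^ 2 := by positivity
  have : 0 ≤ (n : ℝ) ^ 3 := by positivity
  have : 0 ≤ (n : ℝ) ^ 4 := by positivity
  nlinarith

theorem abs_classArea_sub_sum_le (i : Fin 3) (N : ℕ) :
    |classArea i - ∑ j ∈ range N, cellArea (3 * j + 2 + i)| ≤ 1 / ((N : ℝ) + 1) ^ 2 := by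
  have htail {M : ℕ} (hM : N ≤ M) : ∑ j ∈ Ico N M, cellArea (3 * j + 2 + i)
      ≤ 1 / ((N : ℝ) + 1) ^ 2 := calc
    _ ≤ ∑ j ∈ Ico N M, (1 / ((j : ℝ) + 1) ^ 2 - 1 / ((j + 1 : ℕ) + 1 : ℝ) ^ 2) :=
      sum_le_sum fun j _ => (cellArea_anti (by positivity) (by omega)).trans
        (cellArea_three_mul_add_two_le j)
    _ = 1 / ((N : ℝ) + 1) ^ 2 - 1 / ((M : ℝ) + 1) ^ 2 :=
      (sum_congr rfl fun _ _ => (neg_sub_neg _ _).symm).trans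
        ((sum_Ico_sub (fun j : ℕ => -(1 / ((j : ℝ) + 1) ^ 2)) hM).trans (neg_sub_neg _ _))
    _ ≤ _ := sub_le_self _ (by positivity)
  refine le_of_tendsto ((tendsto_sum_cellArea i).sub_const _).abs ?_
  filter_upwards [eventually_ge_atTop N] with M hM
  rw [← sum_Ico_eq_sub _ hM, abs_of_nonneg (sum_nonneg fun j _ => cellArea_nonneg _)]
  exact htail hM

section ResidueClass

variable {m : ℕ}

/-- The positive integers up to `M` in the residue class `α`. -/
def classUpTo (α : ZMod m) (M : ℕ) : Finset ℕ := {y ∈ Icc 1 M | (y : ZMod m) = α}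

theorem mem_classUpTo {α : ZMod m} {M y : ℕ} :
    y ∈ classUpTo α M ↔ (1 ≤ y ∧ y ≤ M) ∧ (y : ZMod m) = α := by
  simp [classUpTo]

variable [NeZero m]

theorem exists_mem_Ioc_natCast_eq (β : ZMod m) (n : ℕ) :
    ∃ x ∈ Set.Ioc n (n + m), (x : ZMod m) = β := by
  refine ⟨n + 1 + (β - (n + 1)).val, ⟨by omega, ?_⟩, by simp⟩
  have := (β - (n + 1)).val_lt
  omega

theorem card_residueClass_le {S : Finset ℕ} {β : ZMod m} {L U : ℝ} (hLU : L ≤ U)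
    (hS : ∀ x ∈ S, (x : ZMod m) = β ∧ L ≤ x ∧ (x : ℝ) ≤ U) :
    (#S : ℝ) ≤ (U - L) / m + 1 := by
  have hm : (0 : ℝ) < m := Nat.cast_pos.2 (NeZero.pos m)
  have hrep (x : ℕ) (hx : x ∈ S) : ∃ j : ℤ, (x : ℤ) = β.val + m * j := by
    have h : ((x : ℤ) : ZMod m) = (β.val : ℤ) := by simpa using (hS x hx).1
    obtain ⟨j, hj⟩ := (ZMod.intCast_eq_intCast_iff_dvd_sub _ _ _).1 h.symm
    exact ⟨j, by omega⟩
  choose! j hj using hrep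
  have hjR (x : ℕ) (hx : x ∈ S) : (x : ℝ) = β.val + m * j x := by exact_mod_cast hj x hx
  have hcard : #S ≤ #(Icc ⌈(L - β.val) / m⌉ ⌊(U - β.val) / m⌋) := by
    refine card_le_card_of_injOn j (fun x hx => ?_) fun x hx y hy hxy => ?_
    · obtain ⟨-, hL, hU⟩ := hS x hx
      rw [hjR x hx] at hL hU
      rw [mem_coe, mem_Icc, Int.ceil_le, Int.le_floor, div_le_iff₀ hm, le_div_iff₀ hm]
      constructor <;> linarith
    · have := (hj x hx).trans (hxy ▸ (hj y hy).symm)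
      exact_mod_cast this
  rw [Int.card_Icc] at hcard
  have hlen : ((⌊(U - β.val) / m⌋ + 1 - ⌈(L - β.val) / m⌉).toNat : ℝ) ≤ (U - L) / m + 1 := by
    rw [← Int.cast_natCast (R := ℝ), Int.toNat_eq_max]
    push_cast
    refine max_le ?_ (by have := sub_nonneg.2 hLU; positivity)
    have h1 := Int.floor_le ((U - β.val) / m)
    have h2 := Int.le_ceil ((L - β.val) / m)
    have h3 : (U - L) / m = (U - β.val) / m - (L - β.val) / m := by ring
    linarith
  exact (Nat.cast_le.2 hcard).trans hlen

theorem le_card_residueClass {S : Finset ℕ} {β : ZMod m} {L U : ℝ} (hL : 0 ≤ L)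
    (hS : ∀ x : ℕ, (x : ZMod m) = β → L < x → (x : ℝ) < U → x ∈ S) :
    (U - L) / m - 1 ≤ #S := by
  have hm : (0 : ℝ) < m := Nat.cast_pos.2 (NeZero.pos m)
  have hmem {j : ℤ} (hj : j ∈ Ioo ⌊(L - β.val) / m⌋ ⌈(U - β.val) / m⌉) :
      L < β.val + m * j ∧ (β.val + m * j : ℝ) < U := by
    rw [mem_Ioo, Int.floor_lt, Int.lt_ceil, div_lt_iff₀ hm, lt_div_iff₀ hm] at hj
    constructor <;> linarith [hj.1, hj.2]
  have hnonneg {j : ℤ} (hj : j ∈ Ioo ⌊(L - β.val) / m⌋ ⌈(U - β.val) / m⌉) :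
      (0 : ℤ) ≤ β.val + m * j := by
    have h : (0 : ℝ) ≤ β.val + m * j := hL.trans (hmem hj).1.le
    exact_mod_cast h
  have hcard : #(Ioo ⌊(L - β.val) / m⌋ ⌈(U - β.val) / m⌉) ≤ #S := by
    refine card_le_card_of_injOn (fun j => (β.val + m * j).toNat) (fun j hj => ?_)
      fun i hi j hj hij => ?_
    · have hcast : (((β.val + m * j : ℤ).toNat : ℤ) : ℝ) = β.val + m * j := by
        rw [Int.toNat_of_nonneg (hnonneg hj)]
        push_cast
        rfl
      rw [Int.cast_natCast] at hcast
      refine hS _ ?_ ?_ ?_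
      · rw [← Int.cast_natCast (R := ZMod m), Int.toNat_of_nonneg (hnonneg hj)]
        simp
      · rw [hcast]; exact (hmem hj).1
      · rw [hcast]; exact (hmem hj).2
    · have h := congrArg (Nat.cast : ℕ → ℤ) hij
      simp only [Int.toNat_of_nonneg (hnonneg hi), Int.toNat_of_nonneg (hnonneg hj)] at h
      exact mul_left_cancel₀ (Nat.cast_ne_zero.2 (NeZero.ne m)) (add_left_cancel h)
  rw [Int.card_Ioo] at hcard
  have hlen : (⌈(U - β.val) / m⌉ - ⌊(L - β.val) / m⌋ - 1 : ℝ) ≤ #S := by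
    have h := (Int.self_le_toNat _).trans (Int.ofNat_le.2 hcard)
    exact_mod_cast h
  have h1 := Int.floor_le ((L - β.val) / m)
  have h2 := Int.le_ceil ((U - β.val) / m)
  have h3 : (U - L) / m = (U - β.val) / m - (L - β.val) / m := by ring
  linarith

theorem abs_card_residueClass_sub_le {S : Finset ℕ} {β : ZMod m} {L U : ℝ} (hL : 0 ≤ L)
    (hS : ∀ x ∈ S, (x : ZMod m) = β ∧ L ≤ x ∧ (x : ℝ) ≤ U)
    (hS' : ∀ x : ℕ, (x : ZMod m) = β → L < x → (x : ℝ) < U → x ∈ S) :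
    |(#S : ℝ) - max (U - L) 0 / m| ≤ 1 := by
  rcases le_or_gt L U with hLU | hUL
  · rw [max_eq_left (sub_nonneg.2 hLU), abs_le]
    constructor <;> linarith [card_residueClass_le hLU hS, le_card_residueClass hL hS']
  · have hempty : S = ∅ := eq_empty_of_forall_notMem fun x hx => by linarith [(hS x hx).2]
    rw [hempty, max_eq_right (sub_nonpos.2 hUL.le)]
    simp

theorem abs_card_classUpTo_sub_le (α : ZMod m) {X : ℝ} (hX : 0 ≤ X) :
    |(#(classUpTo α ⌊X⌋₊) : ℝ) - X / m| ≤ 1 := by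
  have h := abs_card_residueClass_sub_le (S := classUpTo α ⌊X⌋₊) (β := α) (U := X) le_rfl
    (fun x hx => ?_) fun x hα hx0 hxX => ?_
  · simpa [hX] using h
  · rw [mem_classUpTo, Nat.le_floor_iff hX] at hx
    exact ⟨hx.2, Nat.cast_nonneg _, hx.1.2⟩
  · rw [mem_classUpTo, Nat.le_floor_iff hX]
    exact ⟨⟨by exact_mod_cast hx0, hxX.le⟩, hα⟩

theorem sum_classUpTo_eq {r : ℕ} (hr1 : 1 ≤ r) (hrm : r ≤ m) (M : ℕ) (g : ℕ → ℝ)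
    (hg : ∀ y, M < y → g y = 0) :
    ∑ y ∈ classUpTo (r : ZMod m) M, g y = ∑ j ∈ range (M + 1), g (r + m * j) := by
  have hinj : Set.InjOn (fun j : ℕ => r + m * j) (range (M + 1)) := fun a _ b _ h =>
    Nat.eq_of_mul_eq_mul_left (NeZero.pos m) (Nat.add_left_cancel h)
  rw [← sum_image (g := fun j => r + m * j) (f := g) hinj]
  refine sum_subset (fun y hy => ?_) fun y hy hy' => ?_
  · rw [mem_classUpTo, ZMod.natCast_eq_natCast_iff] at hy
    obtain ⟨⟨hy1, hyM⟩, hyr⟩ := hy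
    have hry : r ≤ y := by
      by_contra! hlt
      have := Nat.le_of_dvd (by omega) ((Nat.modEq_iff_dvd' hlt.le).1 hyr)
      omega
    obtain ⟨j, hj⟩ := (Nat.modEq_iff_dvd' hry).1 hyr.symm
    have := Nat.le_mul_of_pos_left j (NeZero.pos m)
    exact mem_image.2 ⟨j, mem_range.2 (by omega), by omega⟩
  · obtain ⟨j, -, rfl⟩ := mem_image.1 hy
    refine hg _ (not_le.1 fun hle => hy' (mem_classUpTo.2 ⟨⟨by omega, hle⟩, ?_⟩))
    simp

theorem abs_sum_range_max_sub_le {h : ℝ} (hh : 0 < h) (n : ℕ) {S : ℝ} (hS : -h ≤ S)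
    (hSn : S ≤ n * h) :
    |∑ j ∈ range n, max (S - h * j) 0 - S * (S + h) / (2 * h)| ≤ h / 8 := by
  induction n generalizing S with
  | zero =>
    have hle : S * (S + h) ≤ 0 :=
      mul_nonpos_of_nonpos_of_nonneg (by simpa using hSn) (by linarith)
    have heq : -(S * (S + h) / (2 * h)) = h / 8 - (2 * S + h) ^ 2 / (8 * h) := by
      field_simp
      ring
    have hsq : 0 ≤ (2 * S + h) ^ 2 / (8 * h) := by positivity
    rw [range_zero, sum_empty, zero_sub, abs_neg,
      abs_of_nonpos (div_nonpos_of_nonpos_of_nonneg hle (by positivity)), heq]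
    linarith
  | succ n ih =>
    rcases le_or_gt 0 S with hS0 | hS0
    · have hshift (j : ℕ) : S - h * ((j + 1 : ℕ) : ℝ) = (S - h) - h * j := by push_cast; ring
      rw [sum_range_succ']
      simp only [Nat.cast_zero, mul_zero, sub_zero, max_eq_left hS0, hshift]
      convert ih (S := S - h) (by linarith) (by push_cast at hSn; linarith) using 2
      field_simp
      ring
    · have hlast : max (S - h * (n : ℝ)) 0 = 0 :=
        max_eq_right (by nlinarith [n.cast_nonneg (α := ℝ)])
      rw [sum_range_succ, hlast, add_zero]
      exact ih hS (hS0.le.trans (by positivity))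

theorem abs_half_sub_div_le {x y : ℝ} (hx : 0 ≤ x) (hxy : x ≤ y) : |1 / 2 - x / y| ≤ 1 / 2 := by
  have h0 : 0 ≤ x / y := div_nonneg hx (hx.trans hxy)
  have h1 : x / y ≤ 1 := div_le_one_of_le₀ hxy (hx.trans hxy)
  rw [abs_le]
  constructor <;> linarith

theorem exists_abs_sum_max_sub_sub_le (α : ZMod m) : ∃ c : ℝ, |c| ≤ 1 / 2 ∧
    ∀ (S b : ℝ) (M : ℕ), 0 ≤ S → 0 < b → S ≤ b * (M + 1) →
    |∑ y ∈ classUpTo α M, max (S - b * y) 0 - S ^ 2 / (2 * m * b) - c * S| ≤ m * b / 4 := by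
  obtain ⟨r, ⟨hr0, hrm⟩, rfl⟩ := exists_mem_Ioc_natCast_eq α 0
  rw [zero_add] at hrm
  have hm : (1 : ℝ) ≤ m := Nat.one_le_cast.2 (NeZero.one_le)
  have hr0' : (0 : ℝ) < r := Nat.cast_pos.2 hr0
  have hrm' : (r : ℝ) ≤ m := Nat.cast_le.2 hrm
  refine ⟨1 / 2 - r / m, abs_half_sub_div_le hr0'.le hrm', fun S b M hS hb hSM => ?_⟩
  have hvanish (y : ℕ) (hy : M < y) : max (S - b * y) 0 = 0 := by
    have : (M : ℝ) + 1 ≤ y := by exact_mod_cast hy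
    exact max_eq_right (by nlinarith)
  have hshift (j : ℕ) : S - b * ((r + m * j : ℕ) : ℝ) = (S - b * r) - m * b * j := by
    push_cast; ring
  rw [sum_classUpTo_eq hr0 hrm M _ hvanish]
  simp only [hshift]
  have hprog := abs_sum_range_max_sub_le (h := m * b) (by positivity) (M + 1) (S := S - b * r)
    (by nlinarith) (by push_cast; nlinarith [mul_nonneg (sub_nonneg.2 hm) (hS.trans hSM)])
  have hmain : (S - b * r) * (S - b * r + m * b) / (2 * (m * b))
      = S ^ 2 / (2 * m * b) + (1 / 2 - r / m) * S - b / (2 * m) * (r * (m - r)) := by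
    field_simp
    ring
  have hoffset : b / (2 * m) * (r * (m - r)) ≤ m * b / 8 := by
    rw [div_mul_eq_mul_div, div_le_div_iff₀ (by positivity) (by norm_num)]
    nlinarith [mul_nonneg hb.le (sq_nonneg ((m : ℝ) - 2 * r))]
  have hoffset' : 0 ≤ b / (2 * m) * (r * (m - r)) := by
    have := sub_nonneg.2 hrm'
    positivity
  rw [abs_le] at hprog ⊢
  constructor <;> linarith [hprog.1, hprog.2]

theorem abs_sum_max_sub_le (α : ZMod m) {S b : ℝ} {M : ℕ} (hS : 0 ≤ S) (hb : 0 < b)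
    (hSM : S ≤ b * (M + 1)) :
    |∑ y ∈ classUpTo α M, max (S - b * y) 0 - S ^ 2 / (2 * m * b)| ≤ (1 / 2 + m / 4) * S := by
  have hm : (1 : ℝ) ≤ m := Nat.one_le_cast.2 (NeZero.one_le)
  rcases le_total b S with hbS | hSb
  · obtain ⟨c, hc, hsum⟩ := exists_abs_sum_max_sub_sub_le α
    have hcS : |c * S| ≤ 1 / 2 * S := by
      rw [abs_mul, abs_of_nonneg hS]
      gcongr
    calc _ = |(∑ y ∈ classUpTo α M, max (S - b * y) 0 - S ^ 2 / (2 * m * b) - c * S) + c * S| := by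
          rw [sub_add_cancel]
      _ ≤ m * b / 4 + 1 / 2 * S :=
          (abs_add_le _ _).trans (add_le_add (hsum S b M hS hb hSM) hcS)
      _ ≤ _ := by nlinarith
  · have hzero : ∑ y ∈ classUpTo α M, max (S - b * y) 0 = 0 := by
      refine sum_eq_zero fun y hy => max_eq_right ?_
      have : (1 : ℝ) ≤ y := by exact_mod_cast (mem_classUpTo.1 hy).1.1
      nlinarith
    rw [hzero, zero_sub, abs_neg, abs_of_nonneg (by positivity), div_le_iff₀ (by positivity)]
    nlinarith [mul_nonneg hS hb.le, mul_nonneg hS (sub_nonneg.2 hSb),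
      mul_nonneg (mul_nonneg hS hb.le) (sub_nonneg.2 hm)]

end ResidueClass

section Density

variable {m : ℕ}

open Classical in
/-- The lattice points with positive coordinates at most `X`, in the residue class `(α, β)` modulo
`m`, whose quotient by `X` lies in `R`. -/
noncomputable def latticePoints (R : Set (ℝ × ℝ)) (α β : ZMod m) (X : ℝ) : Finset (ℕ × ℕ) :=
  {p ∈ classUpTo α ⌊X⌋₊ ×ˢ classUpTo β ⌊X⌋₊ | ((p.1 : ℝ) / X, (p.2 : ℝ) / X) ∈ R}

theorem mem_latticePoints {R : Set (ℝ × ℝ)} {α β : ZMod m} {X : ℝ} {p : ℕ × ℕ} :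
    p ∈ latticePoints R α β X ↔ ((1 ≤ p.1 ∧ p.1 ≤ ⌊X⌋₊) ∧ (1 ≤ p.2 ∧ p.2 ≤ ⌊X⌋₊)) ∧
      (p.1 : ZMod m) = α ∧ (p.2 : ZMod m) = β ∧ ((p.1 : ℝ) / X, (p.2 : ℝ) / X) ∈ R := by
  simp only [latticePoints, mem_filter, mem_product, mem_classUpTo]
  tauto

theorem latticePoints_mono {R R' : Set (ℝ × ℝ)} (h : R ⊆ R') (α β : ZMod m) (X : ℝ) :
    latticePoints R α β X ⊆ latticePoints R' α β X := fun p hp => by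
  rw [mem_latticePoints] at hp ⊢
  exact ⟨hp.1, hp.2.1, hp.2.2.1, h hp.2.2.2⟩

theorem disjoint_latticePoints {R R' : Set (ℝ × ℝ)} (h : Disjoint R R') (α β : ZMod m) (X : ℝ) :
    Disjoint (latticePoints R α β X) (latticePoints R' α β X) :=
  Finset.disjoint_left.2 fun _ hp hp' =>
    Set.disjoint_left.1 h (mem_latticePoints.1 hp).2.2.2 (mem_latticePoints.1 hp').2.2.2

open Classical in
theorem card_latticePoints (R : Set (ℝ × ℝ)) (α β : ZMod m) (X : ℝ) :
    #(latticePoints R α β X) = ∑ y ∈ classUpTo α ⌊X⌋₊,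
      #((classUpTo β ⌊X⌋₊).filter fun x : ℕ => ((y : ℝ) / X, (x : ℝ) / X) ∈ R) := by
  simp only [latticePoints, card_filter, sum_product]

/-- `R` has area `a` in the sense that, for every modulus `m`, the lattice points of `X • R` in any
residue class modulo `m` number `a X² / m²`, up to an error of at most `E X` with `E` independent of
`m`. -/
def HasDensity (R : Set (ℝ × ℝ)) (a E : ℝ) : Prop :=
  ∀ (m : ℕ) [NeZero m] (α β : ZMod m) (X : ℝ), 1 ≤ X →
    |(#(latticePoints R α β X) : ℝ) - a * X ^ 2 / m ^ 2| ≤ E * X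

theorem HasDensity.union {R R' : Set (ℝ × ℝ)} {a a' E E' : ℝ} (h : HasDensity R a E)
    (h' : HasDensity R' a' E') (hd : Disjoint R R') : HasDensity (R ∪ R') (a + a') (E + E') := by
  intro m _ α β X hX
  have hunion : latticePoints (R ∪ R') α β X = latticePoints R α β X ∪ latticePoints R' α β X := by
    ext p
    simp only [mem_union, mem_latticePoints, Set.mem_union]
    tauto
  rw [hunion, card_union_of_disjoint (disjoint_latticePoints hd α β X), Nat.cast_add, add_mul,
    add_mul, add_div, add_sub_add_comm]
  exact (abs_add_le _ _).trans (add_le_add (h m α β X hX) (h' m α β X hX))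

theorem HasDensity.diff {R R' : Set (ℝ × ℝ)} {a a' E E' : ℝ} (h : HasDensity R a E)
    (h' : HasDensity R' a' E') (hd : R' ⊆ R) : HasDensity (R \ R') (a - a') (E + E') := by
  intro m _ α β X hX
  have hdiff : latticePoints (R \ R') α β X = latticePoints R α β X \ latticePoints R' α β X := by
    ext p
    simp only [Finset.mem_sdiff, mem_latticePoints, Set.mem_sdiff]
    tauto
  have hsub := latticePoints_mono hd α β X
  rw [hdiff, card_sdiff_of_subset hsub, Nat.cast_sub (card_le_card hsub), sub_mul, sub_div,
    sub_sub_sub_comm, add_mul]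
  exact (abs_sub _ _).trans (add_le_add (h m α β X hX) (h' m α β X hX))

theorem HasDensity.diff_of_inter {R R' : Set (ℝ × ℝ)} {a a' E E' : ℝ} (h : HasDensity R a E)
    (h' : HasDensity (R ∩ R') a' E') : HasDensity (R \ R') (a - a') (E + E') := by
  rw [← Set.sdiff_self_inter]
  exact h.diff h' Set.inter_subset_left

theorem HasDensity.mono {R : Set (ℝ × ℝ)} {a E E' : ℝ} (h : HasDensity R a E) (hE : E ≤ E') :
    HasDensity R a E' := fun m _ α β X hX =>
  (h m α β X hX).trans (mul_le_mul_of_nonneg_right hE (by linarith))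

/-- Over `(0, 1]` in the first coordinate, `R` is the region between the graphs of `lo` and `hi`,
up to its boundary. -/
structure IsBetween (R : Set (ℝ × ℝ)) (lo hi : ℝ → ℝ) : Prop where
  lo_nonneg : ∀ t, 0 < t → t ≤ 1 → 0 ≤ lo t
  hi_le : ∀ t, 0 < t → t ≤ 1 → hi t ≤ 1
  le_of_mem : ∀ t x, 0 < t → t ≤ 1 → 0 < x → x ≤ 1 → (t, x) ∈ R → lo t ≤ x ∧ x ≤ hi t
  mem_of_lt : ∀ t x, 0 < t → t ≤ 1 → lo t < x → x < hi t → (t, x) ∈ R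

theorem mul_max_sub_mul_div {X : ℝ} (hX : 0 < X) (s b y : ℝ) :
    X * max (s - b * (y / X)) 0 = max (s * X - b * y) 0 := by
  rw [mul_max_of_nonneg _ _ hX.le, mul_zero, show X * (s - b * (y / X)) = s * X - b * y by
    field_simp]

theorem mem_Ioc_of_mem_classUpTo {α : ZMod m} {X : ℝ} (hX : 0 < X) {y : ℕ}
    (hy : y ∈ classUpTo α ⌊X⌋₊) : 0 < (y : ℝ) / X ∧ (y : ℝ) / X ≤ 1 := by
  rw [mem_classUpTo, Nat.le_floor_iff hX.le] at hy
  exact ⟨div_pos (Nat.cast_pos.2 hy.1.1) hX, (div_le_one hX).2 hy.1.2⟩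

theorem sum_mul_eq_of_piecewiseLinear {len : ℝ → ℝ} {n : ℕ} {c₀ : ℝ} {c s b : Fin n → ℝ}
    (hlen : ∀ t, 0 < t → t ≤ 1 → len t = c₀ + ∑ i, c i * max (s i - b i * t) 0)
    (α : ZMod m) {X : ℝ} (hX : 0 < X) :
    ∑ y ∈ classUpTo α ⌊X⌋₊, X * len (y / X) = c₀ * X * #(classUpTo α ⌊X⌋₊)
      + ∑ i, c i * ∑ y ∈ classUpTo α ⌊X⌋₊, max (s i * X - b i * y) 0 := by
  simp only [mul_sum]
  rw [sum_comm, ← nsmul_eq_mul', ← sum_const, ← sum_add_distrib]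
  refine sum_congr rfl fun y hy => ?_
  obtain ⟨ht0, ht1⟩ := mem_Ioc_of_mem_classUpTo hX hy
  rw [hlen _ ht0 ht1, mul_add, mul_sum, mul_comm X c₀]
  congr 1
  refine sum_congr rfl fun i _ => ?_
  rw [← mul_max_sub_mul_div hX, mul_left_comm]

variable [NeZero m]

open Classical in
theorem IsBetween.abs_card_row_sub_le {R : Set (ℝ × ℝ)} {lo hi : ℝ → ℝ} (h : IsBetween R lo hi)
    (β : ZMod m) {X t : ℝ} (hX : 0 < X) (ht0 : 0 < t) (ht1 : t ≤ 1) :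
    |(#((classUpTo β ⌊X⌋₊).filter fun x : ℕ => (t, (x : ℝ) / X) ∈ R) : ℝ)
      - X * max (hi t - lo t) 0 / m| ≤ 1 := by
  rw [mul_max_of_nonneg _ _ hX.le, mul_sub, mul_zero]
  have hlo := mul_nonneg hX.le (h.lo_nonneg t ht0 ht1)
  have hhi := mul_le_mul_of_nonneg_left (h.hi_le t ht0 ht1) hX.le
  refine abs_card_residueClass_sub_le (β := β) hlo (fun x hx => ?_) fun x hxβ hxL hxU => ?_
  · rw [mem_filter] at hx
    obtain ⟨hx0, hx1⟩ := mem_Ioc_of_mem_classUpTo hX hx.1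
    have hbetween := h.le_of_mem _ _ ht0 ht1 hx0 hx1 hx.2
    rw [le_div_iff₀' hX, div_le_iff₀' hX] at hbetween
    exact ⟨(mem_classUpTo.1 hx.1).2, hbetween⟩
  · refine mem_filter.2 ⟨mem_classUpTo.2 ⟨⟨?_, Nat.le_floor (by linarith)⟩, hxβ⟩, ?_⟩
    · exact Nat.cast_pos.1 (hlo.trans_lt hxL)
    · exact h.mem_of_lt _ _ ht0 ht1 ((lt_div_iff₀' hX).2 hxL) ((div_lt_iff₀' hX).2 hxU)

theorem IsBetween.abs_card_sub_le {R : Set (ℝ × ℝ)} {lo hi : ℝ → ℝ} (h : IsBetween R lo hi)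
    (α β : ZMod m) {X : ℝ} (hX : 0 < X) (B : Finset ℕ)
    (hB : ∀ y : ℕ, 1 ≤ y → (y : ℝ) ≤ X → y ∉ B → hi (y / X) < lo (y / X)) :
    |(#(latticePoints R α β X) : ℝ)
      - (∑ y ∈ classUpTo α ⌊X⌋₊, X * max (hi (y / X) - lo (y / X)) 0) / m| ≤ #B := by
  classical
  have hrow : ∀ y ∈ classUpTo α ⌊X⌋₊,
      |(#((classUpTo β ⌊X⌋₊).filter fun x : ℕ => ((y : ℝ) / X, (x : ℝ) / X) ∈ R) : ℝ)
        - X * max (hi (y / X) - lo (y / X)) 0 / m| ≤ if y ∈ B then 1 else 0 := by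
    intro y hy
    obtain ⟨ht0, ht1⟩ := mem_Ioc_of_mem_classUpTo hX hy
    split_ifs with hyB
    · exact h.abs_card_row_sub_le β hX ht0 ht1
    rw [mem_classUpTo, Nat.le_floor_iff hX.le] at hy
    have hlt := hB y hy.1.1 hy.1.2 hyB
    have hempty : (classUpTo β ⌊X⌋₊).filter (fun x : ℕ => ((y : ℝ) / X, (x : ℝ) / X) ∈ R) = ∅ := by
      refine filter_eq_empty_iff.2 fun x hx hxR => hlt.not_ge ?_
      obtain ⟨hx0, hx1⟩ := mem_Ioc_of_mem_classUpTo hX hx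
      exact (h.le_of_mem _ _ ht0 ht1 hx0 hx1 hxR).1.trans (h.le_of_mem _ _ ht0 ht1 hx0 hx1 hxR).2
    rw [max_eq_right (by linarith), hempty]
    simp
  rw [card_latticePoints, sum_div, Nat.cast_sum, ← sum_sub_distrib]
  calc _ ≤ ∑ y ∈ classUpTo α ⌊X⌋₊, if y ∈ B then (1 : ℝ) else 0 :=
        (abs_sum_le_sum_abs _ _).trans (sum_le_sum hrow)
    _ ≤ #B := by
        rw [← sum_filter, sum_const, nsmul_eq_mul, mul_one]
        exact Nat.cast_le.2 (card_le_card fun y hy => (mem_filter.1 hy).2)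

theorem abs_mul_sum_max_sub_le (α : ZMod m) {c s b X : ℝ} (hs : 0 ≤ s) (hb : 0 < b) (hsb : s ≤ b)
    (hX : 0 ≤ X) :
    |c * (∑ y ∈ classUpTo α ⌊X⌋₊, max (s * X - b * y) 0) / m
      - c * (s ^ 2 / (2 * b)) * X ^ 2 / m ^ 2| ≤ |c| * s * X := by
  have hm : (1 : ℝ) ≤ m := Nat.one_le_cast.2 NeZero.one_le
  have hm' : (1 / 2 + m / 4 : ℝ) / m ≤ 1 := by
    rw [div_le_one (by linarith)]
    linarith
  have hsX : s * X ≤ b * ((⌊X⌋₊ : ℝ) + 1) :=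
    mul_le_mul hsb (Nat.lt_floor_add_one X).le hX hb.le
  have hsum := abs_sum_max_sub_le α (mul_nonneg hs hX) hb hsX
  have heq : c * (∑ y ∈ classUpTo α ⌊X⌋₊, max (s * X - b * y) 0) / m
      - c * (s ^ 2 / (2 * b)) * X ^ 2 / m ^ 2
      = c / m * (∑ y ∈ classUpTo α ⌊X⌋₊, max (s * X - b * y) 0 - (s * X) ^ 2 / (2 * m * b)) := by
    field_simp
  rw [heq, abs_mul, abs_div, abs_of_pos (by linarith : (0 : ℝ) < m)]
  calc _ ≤ |c| / m * ((1 / 2 + m / 4) * (s * X)) := by gcongr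
    _ = |c| * s * X * ((1 / 2 + m / 4) / m) := by ring
    _ ≤ |c| * s * X := mul_le_of_le_one_right (by positivity) hm'

end Density

theorem IsBetween.hasDensity {R : Set (ℝ × ℝ)} {lo hi : ℝ → ℝ} (h : IsBetween R lo hi) {n : ℕ}
    (c₀ : ℝ) (c s b : Fin n → ℝ) (hs : ∀ i, 0 ≤ s i) (hb : ∀ i, 0 < b i) (hsb : ∀ i, s i ≤ b i)
    (hlen : ∀ t, 0 < t → t ≤ 1 →
      max (hi t - lo t) 0 = c₀ + ∑ i, c i * max (s i - b i * t) 0) :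
    HasDensity R (c₀ + ∑ i, c i * (s i ^ 2 / (2 * b i))) (1 + |c₀| + ∑ i, |c i| * s i) := by
  intro m _ α β X hX
  have hX0 : 0 < X := by linarith
  have hm : (1 : ℝ) ≤ m := Nat.one_le_cast.2 NeZero.one_le
  have hrows := h.abs_card_sub_le α β hX0 (Icc 1 ⌊X⌋₊) fun y h1 h2 h3 =>
    absurd (mem_Icc.2 ⟨h1, Nat.le_floor h2⟩) h3
  rw [Nat.card_Icc, Nat.add_sub_cancel, sum_mul_eq_of_piecewiseLinear hlen α hX0] at hrows
  have hterms : |∑ i, (c i * (∑ y ∈ classUpTo α ⌊X⌋₊, max (s i * X - b i * y) 0) / m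
      - c i * (s i ^ 2 / (2 * b i)) * X ^ 2 / m ^ 2)| ≤ (∑ i, |c i| * s i) * X := by
    rw [sum_mul]
    exact (abs_sum_le_sum_abs _ _).trans
      (sum_le_sum fun i _ => abs_mul_sum_max_sub_le α (hs i) (hb i) (hsb i) hX0.le)
  have hconst : |c₀ * X / m * (#(classUpTo α ⌊X⌋₊) - X / m)| ≤ |c₀| * X := by
    rw [abs_mul, abs_div, abs_mul, abs_of_pos hX0, Nat.abs_cast]
    exact (mul_le_of_le_one_right (by positivity) (abs_card_classUpTo_sub_le α hX0.le)).trans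
      (div_le_self (by positivity) hm)
  have hsplit : (#(latticePoints R α β X) : ℝ)
      - (c₀ + ∑ i, c i * (s i ^ 2 / (2 * b i))) * X ^ 2 / m ^ 2
      = (#(latticePoints R α β X) - (c₀ * X * #(classUpTo α ⌊X⌋₊)
          + ∑ i, c i * ∑ y ∈ classUpTo α ⌊X⌋₊, max (s i * X - b i * y) 0) / m)
        + c₀ * X / m * (#(classUpTo α ⌊X⌋₊) - X / m)
        + ∑ i, (c i * (∑ y ∈ classUpTo α ⌊X⌋₊, max (s i * X - b i * y) 0) / m
          - c i * (s i ^ 2 / (2 * b i)) * X ^ 2 / m ^ 2) := by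
    rw [sum_sub_distrib, ← sum_div, ← sum_div, ← sum_mul]
    ring
  rw [hsplit, add_mul, add_mul, one_mul]
  exact (abs_add_three _ _ _).trans
    (add_le_add_three (hrows.trans (Nat.floor_le hX0.le)) hconst hterms)

/-- The Farey triangle, which contains `(q, q') / Q` for all consecutive denominators `q`, `q'` of
the Farey series of order `Q`. -/
def fareyTriangle : Set (ℝ × ℝ) := {p | 0 < p.1 ∧ p.1 ≤ 1 ∧ p.2 ≤ 1 ∧ 1 < p.1 + p.2}

/-- The part of the Farey triangle where the index `⌊(1 + x) / t⌋` of `(t, x)` is at least `k`. -/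
def indexGE (k : ℝ) : Set (ℝ × ℝ) := {p | p ∈ fareyTriangle ∧ k * p.1 ≤ 1 + p.2}

/-- The part of the Farey triangle cut out by `a x - b t > 1`. -/
def wedge (a b : ℝ) : Set (ℝ × ℝ) := {p | p ∈ fareyTriangle ∧ 1 < a * p.2 - b * p.1}

theorem mem_fareyTriangle {t x : ℝ} :
    (t, x) ∈ fareyTriangle ↔ 0 < t ∧ t ≤ 1 ∧ x ≤ 1 ∧ 1 < t + x := Iff.rfl

theorem mem_indexGE {k t x : ℝ} :
    (t, x) ∈ indexGE k ↔ (t, x) ∈ fareyTriangle ∧ k * t ≤ 1 + x := Iff.rfl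

theorem mem_wedge {a b t x : ℝ} :
    (t, x) ∈ wedge a b ↔ (t, x) ∈ fareyTriangle ∧ 1 < a * x - b * t := Iff.rfl

theorem indexGE_subset_fareyTriangle (k : ℝ) : indexGE k ⊆ fareyTriangle := fun _ hp => hp.1

theorem wedge_subset_fareyTriangle (a b : ℝ) : wedge a b ⊆ fareyTriangle := fun _ hp => hp.1

theorem indexGE_anti {k l : ℝ} (h : k ≤ l) : indexGE l ⊆ indexGE k := fun _ hp =>
  ⟨hp.1, (mul_le_mul_of_nonneg_right h hp.1.1.le).trans hp.2⟩

theorem isBetween_of_subset_fareyTriangle {R : Set (ℝ × ℝ)} {lo : ℝ → ℝ} (hR : R ⊆ fareyTriangle)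
    (hle : ∀ t x, (t, x) ∈ R → lo t ≤ x)
    (hlt : ∀ t x, (t, x) ∈ fareyTriangle → lo t < x → (t, x) ∈ R) :
    IsBetween R (fun t => max (1 - t) (lo t)) (fun _ => 1) where
  lo_nonneg t _ ht := le_max_of_le_left (sub_nonneg.2 ht)
  hi_le _ _ _ := le_rfl
  le_of_mem t x _ _ _ hx h :=
    ⟨max_le (by linarith [(mem_fareyTriangle.1 (hR h)).2.2.2]) (hle t x h), hx⟩
  mem_of_lt t x h0 h1 h2 h3 := by
    rw [max_lt_iff] at h2
    exact hlt t x ⟨h0, h1, h3.le, by dsimp only; linarith⟩ h2.2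

theorem hasDensity_fareyTriangle : HasDensity fareyTriangle (1 / 2) 3 := by
  have h := isBetween_of_subset_fareyTriangle subset_rfl (lo := fun t => 1 - t)
    (fun t x h => by linarith [(mem_fareyTriangle.1 h).2.2.2]) fun _ _ h _ => h
  convert h.hasDensity (n := 1) 1 (fun _ => -1) (fun _ => 1) (fun _ => 1) (by simp) (by simp)
    (by simp) fun t h0 h1 => ?_ using 1
  · norm_num
  · norm_num
  · rw [max_self, sub_sub_cancel, max_eq_left h0.le, Fin.sum_univ_one, max_eq_left (by linarith)]
    ring

theorem max_one_sub_max_eq {s b t : ℝ} (ht : 0 < t) :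
    max (1 - max (1 - t) (1 - s + b * t)) 0
      = max (s - b * t) 0 - max (s - (b + 1) * t) 0 := by
  rw [add_mul]
  grind

theorem hasDensity_of_line {R : Set (ℝ × ℝ)} {s b : ℝ} (hR : R ⊆ fareyTriangle)
    (hle : ∀ t x, (t, x) ∈ R → 1 - s + b * t ≤ x)
    (hlt : ∀ t x, (t, x) ∈ fareyTriangle → 1 - s + b * t < x → (t, x) ∈ R)
    (hs : 0 ≤ s) (hb : 0 < b) (hsb : s ≤ b) :
    HasDensity R (s ^ 2 / (2 * b * (b + 1))) (1 + 2 * s) := by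
  have h := isBetween_of_subset_fareyTriangle hR hle hlt
  convert h.hasDensity 0 ![1, -1] ![s, s] ![b, b + 1] ?_ ?_ ?_ fun t ht _ => ?_ using 1
  · simp only [Fin.sum_univ_two, Matrix.cons_val_zero, Matrix.cons_val_one]
    field_simp
    ring
  · simp [Fin.sum_univ_two]
    ring
  · simp [Fin.forall_fin_two, hs]
  · simp only [Fin.forall_fin_two, Matrix.cons_val_zero, Matrix.cons_val_one]
    constructor <;> linarith
  · simp only [Fin.forall_fin_two, Matrix.cons_val_zero, Matrix.cons_val_one]
    constructor <;> linarith
  · rw [max_one_sub_max_eq ht]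
    simp [Fin.sum_univ_two, sub_eq_add_neg]

theorem hasDensity_indexGE {k : ℝ} (hk : 2 ≤ k) : HasDensity (indexGE k) (2 / (k * (k + 1))) 5 := by
  convert hasDensity_of_line (s := 2) (b := k) (indexGE_subset_fareyTriangle k)
    (fun t x h => ?_) (fun t x h hlt => ?_) (by norm_num) (by linarith) hk using 1
  · field_simp
  · norm_num
  · linarith [(mem_indexGE.1 h).2]
  · exact mem_indexGE.2 ⟨h, by linarith⟩

theorem hasDensity_wedge {a b : ℝ} (ha : 1 < a) (hb : a - 1 ≤ b) :
    HasDensity (wedge a b) ((a - 1) ^ 2 / (2 * b * (a + b))) 3 := by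
  have ha0 : 0 < a := by linarith
  have hb0 : 0 < b := by linarith
  have hline (t : ℝ) : 1 - (a - 1) / a + b / a * t = (1 + b * t) / a := by
    field_simp
    ring
  have h := hasDensity_of_line (s := (a - 1) / a) (b := b / a) (wedge_subset_fareyTriangle a b)
    (fun t x h => ?_) (fun t x h hlt => ?_) (div_nonneg (by linarith) ha0.le) (by positivity)
    (div_le_div_of_nonneg_right hb ha0.le)
  · convert h.mono (E' := 3) ?_ using 1
    · field_simp
      ring
    · linarith [div_le_one_of_le₀ (show a - 1 ≤ a by linarith) ha0.le]
  · rw [hline, div_le_iff₀' ha0]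
    linarith [(mem_wedge.1 h).2]
  · rw [hline, div_lt_iff₀' ha0] at hlt
    exact mem_wedge.2 ⟨h, by linarith⟩

theorem isBetween_indexGE_inter_wedge (k : ℝ) :
    IsBetween (indexGE k ∩ wedge 2 1)
      (fun t => max (1 - t) (max (k * t - 1) ((1 + t) / 2))) (fun _ => 1) := by
  refine isBetween_of_subset_fareyTriangle (fun p hp => hp.1.1) (fun t x h => ?_)
    fun t x h hlt => ?_
  · have hk := (mem_indexGE.1 h.1).2
    have hw := (mem_wedge.1 h.2).2
    exact max_le (by linarith) (by linarith)
  · rw [max_lt_iff] at hlt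
    exact ⟨mem_indexGE.2 ⟨h, by linarith⟩, mem_wedge.2 ⟨h, by linarith⟩⟩

theorem hasDensity_indexGE_three_inter_wedge :
    HasDensity (indexGE 3 ∩ wedge 2 1) (2 / 15) 5 := by
  convert (isBetween_indexGE_inter_wedge 3).hasDensity 0 ![1, -1 / 2, -1 / 2] ![2, 3, 1]
    ![3, 5, 3] (by simp [Fin.forall_fin_succ]) (by simp [Fin.forall_fin_succ])
    (by simp [Fin.forall_fin_succ]; norm_num) fun t _ _ => ?_ using 1
  · simp only [Fin.sum_univ_three, Matrix.cons_val_zero, Matrix.cons_val_one, Matrix.cons_val]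
    norm_num
  · simp only [Fin.sum_univ_three, Matrix.cons_val_zero, Matrix.cons_val_one, Matrix.cons_val]
    norm_num [abs_of_neg]
  · simp only [Fin.sum_univ_three, Matrix.cons_val_zero, Matrix.cons_val_one, Matrix.cons_val]
    grind

theorem hasDensity_indexGE_four_inter_wedge :
    HasDensity (indexGE 4 ∩ wedge 2 1) (2 / 21) 5 := by
  convert (isBetween_indexGE_inter_wedge 4).hasDensity 0 ![1, -1, -1] ![2, 3 / 2, 1 / 2]
    ![4, 7 / 2, 3 / 2] (by simp [Fin.forall_fin_succ]; norm_num) (by simp [Fin.forall_fin_succ])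
    (by simp [Fin.forall_fin_succ]; norm_num) fun t _ _ => ?_ using 1
  · simp only [Fin.sum_univ_three, Matrix.cons_val_zero, Matrix.cons_val_one, Matrix.cons_val]
    norm_num
  · simp only [Fin.sum_univ_three, Matrix.cons_val_zero, Matrix.cons_val_one, Matrix.cons_val]
    norm_num
  · simp only [Fin.sum_univ_three, Matrix.cons_val_zero, Matrix.cons_val_one, Matrix.cons_val]
    grind

theorem hasDensity_indexGE_three_diff_wedge : HasDensity (indexGE 3 \ wedge 2 1) (1 / 30) 10 := by
  convert (hasDensity_indexGE (k := 3) (by norm_num)).diff_of_inter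
    hasDensity_indexGE_three_inter_wedge using 1 <;> norm_num

theorem hasDensity_indexGE_four_diff_wedge : HasDensity (indexGE 4 \ wedge 2 1) (1 / 210) 10 := by
  convert (hasDensity_indexGE (k := 4) (by norm_num)).diff_of_inter
    hasDensity_indexGE_four_inter_wedge using 1 <;> norm_num

theorem hasDensity_wedge_two_diff {n : ℕ} (hn : 1 ≤ n) :
    HasDensity (wedge 2 (2 * n - 1) \ wedge 2 (2 * n + 1))
      (2 / ((2 * n - 1) * (2 * n + 1) * (2 * n + 3))) 6 := by
  have hn' : (1 : ℝ) ≤ n := Nat.one_le_cast.2 hn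
  convert (hasDensity_wedge (a := 2) (b := 2 * n - 1) (by norm_num) (by linarith)).diff
    (hasDensity_wedge (a := 2) (b := 2 * n + 1) (by norm_num) (by linarith))
    (fun p hp => ⟨hp.1, by linarith [hp.2, hp.1.1]⟩) using 1
  · have : (2 * (n : ℝ) - 1) ≠ 0 := by linarith
    have : (2 : ℝ) + (2 * n - 1) ≠ 0 := by linarith
    field_simp
    ring
  · norm_num

theorem hasDensity_wedge_three_diff_wedge_two : HasDensity (wedge 3 7 \ wedge 2 5) (1 / 70) 6 := by
  convert (hasDensity_wedge (a := 3) (b := 7) (by norm_num) (by norm_num)).diff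
    (hasDensity_wedge (a := 2) (b := 5) (by norm_num) (by norm_num))
    (fun p hp => ⟨hp.1, by linarith [hp.2, hp.1.1]⟩) using 1 <;> norm_num

theorem hasDensity_wedge_two_diff_wedge_three : HasDensity (wedge 2 3 \ wedge 3 7) (1 / 210) 6 := by
  convert (hasDensity_wedge (a := 2) (b := 3) (by norm_num) (by norm_num)).diff
    (hasDensity_wedge (a := 3) (b := 7) (by norm_num) (by norm_num))
    (fun p hp => ⟨hp.1, by
      obtain ⟨⟨_, _, _, _⟩, _⟩ := hp
      linarith⟩) using 1 <;> norm_num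

/-- The part of the Farey triangle where the index is exactly `k`. -/
def indexCell (k : ℕ) : Set (ℝ × ℝ) := indexGE k \ indexGE (k + 1)

/-- The part of the Farey triangle where the index is at least `2` and congruent to `2 + i`
modulo `3`. -/
def indexClass (i : Fin 3) : Set (ℝ × ℝ) := ⋃ j : ℕ, indexCell (3 * j + 2 + i)

theorem mem_indexCell {k : ℕ} {t x : ℝ} : (t, x) ∈ indexCell k ↔
    (t, x) ∈ fareyTriangle ∧ k * t ≤ 1 + x ∧ 1 + x < (k + 1) * t := by
  rw [indexCell, Set.mem_sdiff, mem_indexGE, mem_indexGE, not_and, not_le]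
  tauto

theorem disjoint_indexCell {k l : ℕ} (h : k < l) : Disjoint (indexCell k) (indexCell l) :=
  Set.disjoint_left.2 fun _ hk hl => hk.2 (indexGE_anti (by exact_mod_cast h) hl.1)

theorem isBetween_indexCell (k : ℕ) :
    IsBetween (indexCell k) (fun t => max (1 - t) (k * t - 1))
      (fun t => min 1 ((k + 1) * t - 1)) where
  lo_nonneg t _ ht := le_max_of_le_left (by linarith)
  hi_le _ _ _ := min_le_left _ _
  le_of_mem t x _ _ _ hx h := by
    obtain ⟨⟨_, _, _, hsum⟩, hk, hk'⟩ := mem_indexCell.1 h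
    exact ⟨max_le (by linarith) (by linarith), le_min hx (by linarith)⟩
  mem_of_lt t x h0 h1 h2 h3 := by
    rw [max_lt_iff] at h2
    rw [lt_min_iff] at h3
    exact mem_indexCell.2 ⟨⟨h0, h1, h3.1.le, by dsimp only; linarith⟩, by linarith, by linarith⟩

theorem max_indexCell_length (k : ℕ) {t : ℝ} (ht : 0 < t) :
    max (min 1 (((k : ℝ) + 1) * t - 1) - max (1 - t) (k * t - 1)) 0
      = max (2 - (k : ℝ) * t) 0 - 2 * max (2 - ((k : ℝ) + 1) * t) 0
        + max (2 - ((k : ℝ) + 2) * t) 0 := by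
  rw [add_mul, add_mul, one_mul]
  generalize (k : ℝ) * t = u
  grind

theorem card_Icc_ceil_floor_le {a b : ℝ} (ha : a ≤ b) (hb : 0 ≤ b) :
    (#(Icc ⌈a⌉₊ ⌊b⌋₊) : ℝ) ≤ b - a + 1 := by
  rw [Nat.card_Icc, sub_add_eq_add_sub]
  rcases le_total ⌈a⌉₊ (⌊b⌋₊ + 1) with h | h
  · rw [Nat.cast_sub h, Nat.cast_succ]
    linarith [Nat.floor_le hb, Nat.le_ceil a]
  · rw [Nat.sub_eq_zero_of_le h, Nat.cast_zero]
    linarith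

theorem indexCell_length_neg {k : ℕ} (hk : 0 < k) {X : ℝ} (hX : 0 < X) {y : ℕ}
    (hy : y ∉ Icc ⌈2 * X / (k + 2)⌉₊ ⌊2 * X / k⌋₊) :
    min 1 ((k + 1) * (y / X) - 1) < max (1 - y / X) (k * (y / X) - 1) := by
  have hk0 : (0 : ℝ) < k := Nat.cast_pos.2 hk
  rw [mem_Icc, not_and_or, not_le, not_le, Nat.lt_ceil, Nat.floor_lt (by positivity),
    lt_div_iff₀ (by positivity), div_lt_iff₀ hk0] at hy
  rcases hy with hy | hy
  · have : ((k : ℝ) + 2) * (y / X) < 2 := by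
      rw [← mul_div_assoc, div_lt_iff₀ hX]
      linarith
    exact (min_le_right _ _).trans_lt ((by linarith : _ < 1 - y / X).trans_le (le_max_left _ _))
  · have : 2 < (k : ℝ) * (y / X) := by
      rw [← mul_div_assoc, lt_div_iff₀ hX]
      linarith
    exact (min_le_left _ _).trans_lt
      ((by linarith : _ < k * (y / X) - 1).trans_le (le_max_right _ _))

section IndexCount

variable {m : ℕ}

theorem sum_indexCell_length_eq (k : ℕ) (α : ZMod m) {X : ℝ} (hX : 0 < X) :
    ∑ y ∈ classUpTo α ⌊X⌋₊, X * max (min 1 (((k : ℝ) + 1) * (y / X) - 1)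
        - max (1 - y / X) (k * (y / X) - 1)) 0
      = ∑ y ∈ classUpTo α ⌊X⌋₊, max (2 * X - (k : ℝ) * y) 0
        - 2 * ∑ y ∈ classUpTo α ⌊X⌋₊, max (2 * X - ((k : ℝ) + 1) * y) 0
        + ∑ y ∈ classUpTo α ⌊X⌋₊, max (2 * X - ((k : ℝ) + 2) * y) 0 := by
  rw [mul_sum, ← sum_sub_distrib, ← sum_add_distrib]
  refine sum_congr rfl fun y hy => ?_
  rw [max_indexCell_length k (mem_Ioc_of_mem_classUpTo hX hy).1, ← mul_max_sub_mul_div hX,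
    ← mul_max_sub_mul_div hX, ← mul_max_sub_mul_div hX]
  ring

theorem sum_card_latticePoints_indexCell_le (i : Fin 3) (α β : ZMod m) (X : ℝ) (N : ℕ) :
    ∑ j ∈ range N, #(latticePoints (indexCell (3 * j + 2 + i)) α β X)
      ≤ #(latticePoints (indexClass i) α β X) := by
  rw [← card_biUnion]
  · exact card_le_card (biUnion_subset.2 fun j _ =>
      latticePoints_mono (Set.subset_iUnion (fun j : ℕ => indexCell (3 * j + 2 + i)) j) α β X)
  · intro j _ j' _ hne
    rcases hne.lt_or_gt with h | h
    · exact disjoint_latticePoints (disjoint_indexCell (by omega)) α β X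
    · exact (disjoint_latticePoints (disjoint_indexCell (by omega)) α β X).symm

theorem card_latticePoints_indexClass_le (i : Fin 3) (α β : ZMod m) (X : ℝ) (N : ℕ) :
    #(latticePoints (indexClass i) α β X)
      ≤ ∑ j ∈ range N, #(latticePoints (indexCell (3 * j + 2 + i)) α β X)
        + #(latticePoints (indexGE (3 * N + 2)) α β X) := by
  refine (card_le_card fun p hp => ?_).trans
    ((card_union_le _ _).trans (add_le_add_left card_biUnion_le _))
  rw [mem_latticePoints] at hp
  obtain ⟨hp1, hpα, hpβ, hp2⟩ := hp
  obtain ⟨j, hj⟩ := Set.mem_iUnion.1 hp2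
  rw [mem_union, mem_biUnion]
  rcases lt_or_ge j N with h | h
  · exact Or.inl ⟨j, mem_range.2 h, mem_latticePoints.2 ⟨hp1, hpα, hpβ, hj⟩⟩
  · refine Or.inr (mem_latticePoints.2 ⟨hp1, hpα, hpβ, indexGE_anti ?_ hj.1⟩)
    have : 3 * N + 2 ≤ 3 * j + 2 + i := by omega
    exact_mod_cast this

variable [NeZero m]

/- The class-dependent constants `c` of the three sums cancel in the second difference; without
this the error would be of order `X` for each `k`, too large to be summed over `k`. -/
theorem abs_sum_indexCell_length_sub_le {k : ℕ} (hk : 2 ≤ k) (α : ZMod m) {X : ℝ} (hX : 0 < X) :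
    |(∑ y ∈ classUpTo α ⌊X⌋₊, X * max (min 1 (((k : ℝ) + 1) * (y / X) - 1)
        - max (1 - y / X) (k * (y / X) - 1)) 0) / m - cellArea k * X ^ 2 / m ^ 2| ≤ k + 1 := by
  have hk2 : (2 : ℝ) ≤ k := Nat.ofNat_le_cast.2 hk
  have hm : (0 : ℝ) < m := Nat.cast_pos.2 (NeZero.pos m)
  obtain ⟨c, -, hc⟩ := exists_abs_sum_max_sub_sub_le α
  have hsum {b : ℝ} (hb : 2 ≤ b) := hc (2 * X) b ⌊X⌋₊ (by linarith) (by linarith)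
    (mul_le_mul hb (Nat.lt_floor_add_one X).le hX.le (by linarith))
  have harea : cellArea k * X ^ 2 / m ^ 2 = ((2 * X) ^ 2 / (2 * m * k)
      - 2 * ((2 * X) ^ 2 / (2 * m * (k + 1))) + (2 * X) ^ 2 / (2 * m * (k + 2))) / m := by
    rw [cellArea_eq (by omega)]
    field_simp
    ring
  rw [sum_indexCell_length_eq k α hX, harea, ← sub_div, abs_div, abs_of_pos hm, div_le_iff₀ hm,
    abs_le]
  have h0 := abs_le.1 (hsum hk2)
  have h1 := abs_le.1 (hsum (by linarith : (2 : ℝ) ≤ k + 1))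
  have h2 := abs_le.1 (hsum (by linarith : (2 : ℝ) ≤ k + 2))
  constructor <;> linarith [h0.1, h0.2, h1.1, h1.2, h2.1, h2.2]

theorem abs_card_indexCell_sub_le {k : ℕ} (hk : 2 ≤ k) (α β : ZMod m) {X : ℝ} (hX : 0 < X) :
    |(#(latticePoints (indexCell k) α β X) : ℝ) - cellArea k * X ^ 2 / m ^ 2|
      ≤ 4 * X / (k * (k + 2)) + (k + 2) := by
  have hk0 : (0 : ℝ) < k := Nat.cast_pos.2 (by omega)
  have hrows := (isBetween_indexCell k).abs_card_sub_le α β hX _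
    fun y _ _ hy => indexCell_length_neg (by omega) hX hy
  have hrange := card_Icc_ceil_floor_le (a := 2 * X / (k + 2)) (b := 2 * X / k)
    (by gcongr; linarith) (by positivity)
  have hwidth : 2 * X / k - 2 * X / (k + 2) = 4 * X / (k * (k + 2)) := by
    field_simp
    ring
  calc _ ≤ _ := abs_sub_le _ _ _
    _ ≤ (4 * X / (k * (k + 2)) + 1) + (k + 1) :=
      add_le_add (hrows.trans (hrange.trans_eq (by rw [hwidth])))
        (abs_sum_indexCell_length_sub_le hk α hX)
    _ = _ := by ring

theorem sum_one_div_sub_one_div_le (N : ℕ) :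
    ∑ j ∈ range N, (1 / ((j : ℝ) + 1) - 1 / ((j + 1 : ℕ) + 1 : ℝ)) ≤ 1 := by
  rw [sum_range_sub' (fun j : ℕ => 1 / ((j : ℝ) + 1)) N, Nat.cast_zero, zero_add, div_one]
  linarith [show 0 ≤ 1 / ((N : ℝ) + 1) by positivity]

theorem abs_sum_card_indexCell_sub_le (i : Fin 3) (α β : ZMod m) {X : ℝ} (hX : 0 < X) (N : ℕ) :
    |∑ j ∈ range N, (#(latticePoints (indexCell (3 * j + 2 + i)) α β X) : ℝ)
      - (∑ j ∈ range N, cellArea (3 * j + 2 + i)) * X ^ 2 / m ^ 2| ≤ X + N * (3 * N + 3) := by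
  have hcell : ∀ j ∈ range N, |(#(latticePoints (indexCell (3 * j + 2 + i)) α β X) : ℝ)
      - cellArea (3 * j + 2 + i) * X ^ 2 / m ^ 2|
      ≤ X * (1 / ((j : ℝ) + 1) - 1 / ((j + 1 : ℕ) + 1 : ℝ)) + (3 * N + 3) := by
    intro j hj
    refine (abs_card_indexCell_sub_le (by omega) α β hX).trans (add_le_add ?_ ?_)
    · have htelescope : X * (1 / ((j : ℝ) + 1) - 1 / ((j + 1 : ℕ) + 1 : ℝ))
          = 4 * X / ((2 * j + 2) * (2 * j + 2 + 2)) := by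
        push_cast
        field_simp
        ring
      have hindex : 2 * j + 2 ≤ ((3 * j + 2 + i : ℕ) : ℝ) := by
        exact_mod_cast (by omega : 2 * j + 2 ≤ 3 * j + 2 + i)
      rw [htelescope]
      gcongr
    · rw [mem_range] at hj
      have : 3 * j + 2 + i + 2 ≤ 3 * N + 3 := by omega
      exact_mod_cast this
  rw [sum_mul, sum_div, ← sum_sub_distrib]
  calc _ ≤ ∑ j ∈ range N, (X * (1 / ((j : ℝ) + 1) - 1 / ((j + 1 : ℕ) + 1 : ℝ)) + (3 * N + 3)) :=
        (abs_sum_le_sum_abs _ _).trans (sum_le_sum hcell)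
    _ ≤ X + N * (3 * N + 3) := by
        rw [sum_add_distrib, ← mul_sum, sum_const, card_range, nsmul_eq_mul]
        linarith [mul_le_of_le_one_right hX.le (sum_one_div_sub_one_div_le N)]

theorem mul_sq_div_sq_le_of_le {a X : ℝ} {N : ℕ} (hX : 0 < X) (hN : X ≤ (N : ℝ) ^ 2) (ha : 0 ≤ a)
    (haN : a ≤ 1 / ((N : ℝ) + 1) ^ 2) : a * X ^ 2 / m ^ 2 ≤ X := by
  have hm : (1 : ℝ) ≤ m ^ 2 := one_le_pow₀ (Nat.one_le_cast.2 NeZero.one_le)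
  calc _ ≤ a * X ^ 2 := div_le_self (by positivity) hm
    _ ≤ 1 / ((N : ℝ) + 1) ^ 2 * (X * (N + 1) ^ 2) := by
      rw [sq X]
      gcongr
      exact hN.trans (by gcongr; linarith)
    _ = X := by field_simp

end IndexCount

theorem hasDensity_indexClass (i : Fin 3) : HasDensity (indexClass i) (classArea i) 26 := by
  intro m _ α β X hX
  have hX0 : 0 < X := by linarith
  obtain ⟨N, hNX, hN⟩ : ∃ N : ℕ, X ≤ (N : ℝ) ^ 2 ∧ N * (3 * N + 3) ≤ 18 * X := by
    have hsq : √X * √X = X := Real.mul_self_sqrt hX0.le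
    have hsqrt : 1 ≤ √X := Real.one_le_sqrt.2 hX
    have hle : √X ≤ ⌈√X⌉₊ := Nat.le_ceil _
    have hlt : (⌈√X⌉₊ : ℝ) < √X + 1 := Nat.ceil_lt_add_one (by positivity)
    exact ⟨⌈√X⌉₊, by nlinarith, by nlinarith⟩
  have hlower := Nat.cast_le (α := ℝ).2 (sum_card_latticePoints_indexCell_le i α β X N)
  have hupper := Nat.cast_le (α := ℝ).2 (card_latticePoints_indexClass_le i α β X N)
  push_cast at hlower hupper
  have htail : (#(latticePoints (indexGE (3 * N + 2)) α β X) : ℝ) ≤ 6 * X := by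
    have h := (abs_le.1 (hasDensity_indexGE (k := 3 * N + 2) (by linarith [N.cast_nonneg (α := ℝ)])
      m α β X hX)).2
    have harea := mul_sq_div_sq_le_of_le (m := m) hX0 hNX
      (a := 2 / ((3 * N + 2) * (3 * N + 2 + 1))) (by positivity) (by
        rw [div_le_div_iff₀ (by positivity) (by positivity)]
        nlinarith [N.cast_nonneg (α := ℝ)])
    linarith
  have harea : |classArea i * X ^ 2 / m ^ 2
      - (∑ j ∈ range N, cellArea (3 * j + 2 + i)) * X ^ 2 / m ^ 2| ≤ X := by
    rw [← sub_div, ← sub_mul, abs_div, abs_mul, abs_of_nonneg (sq_nonneg X),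
      abs_of_nonneg (sq_nonneg (m : ℝ))]
    exact mul_sq_div_sq_le_of_le hX0 hNX (abs_nonneg _) (abs_classArea_sub_sum_le i N)
  have hcells := abs_sum_card_indexCell_sub_le i α β hX0 N
  rw [abs_le] at harea hcells ⊢
  constructor <;> linarith [harea.1, harea.2, hcells.1, hcells.2]

theorem indexClass_subset_indexGE (i : Fin 3) : indexClass i ⊆ indexGE (2 + (i : ℕ)) :=
  Set.iUnion_subset fun j p hp => indexGE_anti (by
    push_cast
    linarith [Nat.cast_nonneg (α := ℝ) j]) hp.1

theorem indexGE_diff_subset_indexClass (i : Fin 3) :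
    indexGE (2 + (i : ℕ)) \ indexGE (3 + (i : ℕ)) ⊆ indexClass i := fun p hp => by
  refine Set.mem_iUnion.2 ⟨0, ?_⟩
  rw [indexCell]
  push_cast
  convert hp using 2
  ring_nf

theorem indexGE_five_subset_wedge : indexGE 5 ⊆ wedge 2 1 := by
  rintro p ⟨⟨ht, ht1, hx, hsum⟩, hindex⟩
  exact ⟨⟨ht, ht1, hx, hsum⟩, by linarith⟩

theorem indexClass_one_inter_indexGE_four_subset_wedge : indexClass 1 ∩ indexGE 4 ⊆ wedge 2 1 := by
  rintro p ⟨hp, hp4⟩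
  obtain ⟨j, hj⟩ := Set.mem_iUnion.1 hp
  refine indexGE_five_subset_wedge ?_
  rcases Nat.eq_zero_or_pos j with rfl | hj0
  · refine absurd ?_ hj.2
    norm_num
    exact hp4
  · refine indexGE_anti ?_ hj.1
    have : 5 ≤ 3 * j + 2 + (1 : Fin 3) := by omega
    exact_mod_cast this

theorem hasDensity_fareyTriangle_diff_union_indexClass_two :
    HasDensity ((fareyTriangle \ indexGE 2) ∪ indexClass 2) (1 / 6 + classArea 2) 34 := by
  convert (hasDensity_fareyTriangle.diff (hasDensity_indexGE le_rfl)
    (indexGE_subset_fareyTriangle 2)).union (hasDensity_indexClass 2) ?_ using 1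
  · norm_num
  · norm_num
  · exact Set.disjoint_left.2 fun p hp hp' =>
      hp.2 (indexGE_anti (by norm_num) (indexClass_subset_indexGE 2 hp'))

theorem hasDensity_indexClass_two_inter_wedge :
    HasDensity (indexClass 2 ∩ wedge 2 1) (classArea 2 - 1 / 210) 36 := by
  have hge := indexClass_subset_indexGE 2
  have hcell := indexGE_diff_subset_indexClass 2
  have hwedge := indexGE_five_subset_wedge
  norm_num at hge hcell
  convert (hasDensity_indexClass 2).diff hasDensity_indexGE_four_diff_wedge
    (by grind) using 1
  · ext p
    grind
  · norm_num

theorem hasDensity_indexClass_one_inter_wedge :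
    HasDensity (indexClass 1 ∩ wedge 2 1) (classArea 1 - 1 / 35) 46 := by
  have hge := indexClass_subset_indexGE 1
  have hcell := indexGE_diff_subset_indexClass 1
  have hwedge := indexClass_one_inter_indexGE_four_subset_wedge
  norm_num at hge hcell
  convert (hasDensity_indexClass 1).diff (hasDensity_indexGE_three_diff_wedge.diff
    hasDensity_indexGE_four_diff_wedge (Set.sdiff_subset_sdiff_left (indexGE_anti (by norm_num))))
    (by grind) using 1
  · ext p
    grind
  · norm_num
  · norm_num

theorem hasDensity_indexClass_zero_inter_indexGE_three :
    HasDensity (indexClass 0 ∩ indexGE 3) (classArea 0 - 1 / 6) 36 := by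
  have hge := indexClass_subset_indexGE 0
  have hcell := indexGE_diff_subset_indexClass 0
  norm_num at hge hcell
  convert (hasDensity_indexClass 0).diff ((hasDensity_indexGE le_rfl).diff
    (hasDensity_indexGE (k := 3) (by norm_num)) (indexGE_anti (by norm_num))) (by grind)
    using 1
  · ext p
    grind
  · norm_num
  · norm_num

section Coprime

open ArithmeticFunction (moebius)

variable {m : ℕ}

/-- The lattice points of `Q • R` in the class `(α, β)` with coprime coordinates. -/
noncomputable def coprimePoints (R : Set (ℝ × ℝ)) (α β : ZMod m) (Q : ℕ) : Finset (ℕ × ℕ) :=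
  {p ∈ latticePoints R α β Q | Nat.Coprime p.1 p.2}

/-- The proportion of all lattice points which are coprime and lie in a given residue class
`(α, β)` modulo `m` with `IsCoprime α β`, with its Möbius series truncated at `Q`. -/
noncomputable def coprimeDensity (m Q : ℕ) : ℝ :=
  ∑ d ∈ Icc 1 Q with Nat.Coprime d m, (moebius d : ℝ) / ((m : ℝ) ^ 2 * (d : ℝ) ^ 2)

theorem sum_divisors_moebius (n : ℕ) : ∑ d ∈ n.divisors, moebius d = if n = 1 then 1 else 0 := by
  rw [← ArithmeticFunction.coe_zeta_mul_apply, ArithmeticFunction.coe_zeta_mul_moebius,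
    ArithmeticFunction.one_apply]

theorem ite_coprime_eq_sum_moebius {a b Q : ℕ} (ha : 1 ≤ a) (haQ : a ≤ Q) :
    (if Nat.Coprime a b then (1 : ℤ) else 0)
      = ∑ d ∈ Icc 1 Q, if d ∣ a ∧ d ∣ b then moebius d else 0 := by
  have hdivisors : (Nat.gcd a b).divisors = {d ∈ Icc 1 Q | d ∣ a ∧ d ∣ b} := by
    ext d
    rw [Nat.mem_divisors, mem_filter, mem_Icc, Nat.dvd_gcd_iff]
    refine ⟨fun h => ⟨⟨Nat.pos_of_dvd_of_pos h.1.1 ha, (Nat.le_of_dvd ha h.1.1).trans haQ⟩, h.1⟩,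
      fun h => ⟨h.2, (Nat.gcd_pos_of_pos_left b ha).ne'⟩⟩
  rw [← sum_filter, ← hdivisors, sum_divisors_moebius]

theorem card_coprimePoints_eq_sum_moebius (R : Set (ℝ × ℝ)) (α β : ZMod m) (Q : ℕ) :
    (#(coprimePoints R α β Q) : ℤ) = ∑ d ∈ Icc 1 Q, moebius d *
      #{p ∈ latticePoints R α β Q | d ∣ p.1 ∧ d ∣ p.2} := by
  have h : ∀ p ∈ latticePoints R α β Q, (if Nat.Coprime p.1 p.2 then (1 : ℤ) else 0)
      = ∑ d ∈ Icc 1 Q, if d ∣ p.1 ∧ d ∣ p.2 then moebius d else 0 := fun p hp => by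
    rw [mem_latticePoints, Nat.floor_natCast] at hp
    exact ite_coprime_eq_sum_moebius hp.1.1.1 hp.1.1.2
  rw [coprimePoints, card_filter]
  push_cast
  rw [sum_congr rfl h, sum_comm]
  refine sum_congr rfl fun d _ => ?_
  rw [← sum_filter, sum_const, nsmul_eq_mul, mul_comm]

theorem card_filter_dvd_eq_zero {R : Set (ℝ × ℝ)} {α β : ZMod m} (hαβ : IsCoprime α β) (Q : ℕ)
    {d : ℕ} (hd : ¬ Nat.Coprime d m) :
    #{p ∈ latticePoints R α β Q | d ∣ p.1 ∧ d ∣ p.2} = 0 := by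
  rw [card_eq_zero, filter_eq_empty_iff]
  rintro p hp ⟨h1, h2⟩
  obtain ⟨-, hα, hβ, -⟩ := mem_latticePoints.1 hp
  refine hd ((ZMod.isUnit_iff_coprime d m).1 (hαβ.isUnit_of_dvd' ?_ ?_))
  · exact hα ▸ Nat.cast_dvd_cast h1
  · exact hβ ▸ Nat.cast_dvd_cast h2

theorem natCast_mul_eq_iff {d : ℕ} (hd : Nat.Coprime d m) (x a : ZMod m) :
    (d : ZMod m) * x = a ↔ x = (d : ZMod m)⁻¹ * a := by
  have hinv := ZMod.coe_mul_inv_eq_one d hd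
  constructor
  · rintro rfl
    rw [← mul_assoc, mul_comm _ (d : ZMod m), hinv, one_mul]
  · rintro rfl
    rw [← mul_assoc, hinv, one_mul]

theorem mul_mem_latticePoints {R : Set (ℝ × ℝ)} {α β : ZMod m} {Q d : ℕ} (hd0 : 0 < d)
    (hd : Nat.Coprime d m) {p : ℕ × ℕ} :
    (d * p.1, d * p.2) ∈ latticePoints R α β Q ↔
      p ∈ latticePoints R ((d : ZMod m)⁻¹ * α) ((d : ZMod m)⁻¹ * β) ((Q : ℝ) / d) := by
  have hfloor : ⌊(Q : ℝ) / d⌋₊ = Q / d := Nat.floor_div_eq_div Q d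
  have hscale : ∀ x : ℕ, ((d * x : ℕ) : ℝ) / Q = x / ((Q : ℝ) / d) := fun x => by
    have : (d : ℝ) ≠ 0 := by exact_mod_cast hd0.ne'
    push_cast
    field_simp
  simp only [mem_latticePoints, hfloor, hscale, Nat.floor_natCast, Nat.le_div_iff_mul_le hd0,
    Nat.cast_mul (α := ZMod m), natCast_mul_eq_iff hd, Nat.succ_le_iff, Nat.mul_pos_iff_of_pos_left,
    hd0, mul_comm _ d]

theorem card_filter_dvd_eq (R : Set (ℝ × ℝ)) (α β : ZMod m) (Q : ℕ) {d : ℕ} (hd0 : 0 < d)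
    (hd : Nat.Coprime d m) : #{p ∈ latticePoints R α β Q | d ∣ p.1 ∧ d ∣ p.2}
      = #(latticePoints R ((d : ZMod m)⁻¹ * α) ((d : ZMod m)⁻¹ * β) ((Q : ℝ) / d)) := by
  symm
  refine card_bij (fun p _ => (d * p.1, d * p.2)) ?_ ?_ ?_
  · intro p hp
    exact mem_filter.2 ⟨(mul_mem_latticePoints hd0 hd).2 hp, dvd_mul_right _ _, dvd_mul_right _ _⟩
  · intro p _ q _ h
    simp only [Prod.mk.injEq] at h
    exact Prod.ext (Nat.eq_of_mul_eq_mul_left hd0 h.1) (Nat.eq_of_mul_eq_mul_left hd0 h.2)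
  · rintro ⟨_, _⟩ hp
    obtain ⟨hp, ⟨x, rfl⟩, y, rfl⟩ := mem_filter.1 hp
    exact ⟨(x, y), (mul_mem_latticePoints (p := (x, y)) hd0 hd).1 hp, rfl⟩

theorem card_coprimePoints_eq_sum_coprime (R : Set (ℝ × ℝ)) {α β : ZMod m} (hαβ : IsCoprime α β)
    (Q : ℕ) : (#(coprimePoints R α β Q) : ℝ) = ∑ d ∈ Icc 1 Q with Nat.Coprime d m, (moebius d : ℝ)
      * #(latticePoints R ((d : ZMod m)⁻¹ * α) ((d : ZMod m)⁻¹ * β) ((Q : ℝ) / d)) := by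
  have h := congrArg (Int.cast (R := ℝ)) (card_coprimePoints_eq_sum_moebius R α β Q)
  push_cast at h
  rw [h, sum_filter]
  refine sum_congr rfl fun d hd => ?_
  split_ifs with hdm
  · rw [card_filter_dvd_eq _ _ _ _ (mem_Icc.1 hd).1 hdm]
  · rw [card_filter_dvd_eq_zero hαβ _ hdm, Nat.cast_zero, mul_zero]

theorem abs_moebius_cast_le_one (d : ℕ) : |(moebius d : ℝ)| ≤ 1 := by
  exact_mod_cast ArithmeticFunction.abs_moebius_le_one (n := d)

theorem sum_Icc_one_div_le_one_add_log (n : ℕ) :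
    ∑ d ∈ Icc 1 n, 1 / (d : ℝ) ≤ 1 + Real.log n := by
  have h := harmonic_le_one_add_log n
  rw [harmonic_eq_sum_Icc] at h
  push_cast at h
  simpa only [one_div] using h

theorem HasDensity.abs_card_coprimePoints_sub_le [NeZero m] {R : Set (ℝ × ℝ)} {a E : ℝ}
    (h : HasDensity R a E) {α β : ZMod m} (hαβ : IsCoprime α β) (Q : ℕ) :
    |(#(coprimePoints R α β Q) : ℝ) - coprimeDensity m Q * a * (Q : ℝ) ^ 2|
      ≤ E * (Q * (1 + Real.log Q)) := by
  have hE : 0 ≤ E := by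
    simpa only [mul_one] using (abs_nonneg _).trans (h m α β 1 le_rfl)
  rw [card_coprimePoints_eq_sum_coprime R hαβ, coprimeDensity, sum_mul, sum_mul, ← sum_sub_distrib]
  calc _ ≤ ∑ d ∈ Icc 1 Q with Nat.Coprime d m, E * (Q * (1 / (d : ℝ))) := by
        refine (abs_sum_le_sum_abs _ _).trans (sum_le_sum fun d hd => ?_)
        rw [mem_filter, mem_Icc] at hd
        have hd0 : (0 : ℝ) < d := by exact_mod_cast hd.1.1
        have hX : 1 ≤ (Q : ℝ) / d := (one_le_div hd0).2 (by exact_mod_cast hd.1.2)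
        set N := #(latticePoints R ((d : ZMod m)⁻¹ * α) ((d : ZMod m)⁻¹ * β) ((Q : ℝ) / d))
        have hfactor : (moebius d : ℝ) * N - moebius d / ((m : ℝ) ^ 2 * d ^ 2) * a * Q ^ 2
            = moebius d * (N - a * ((Q : ℝ) / d) ^ 2 / m ^ 2) := by
          field_simp
        rw [hfactor, abs_mul, mul_one_div]
        exact (mul_le_of_le_one_left (abs_nonneg _) (abs_moebius_cast_le_one d)).trans
          (h m _ _ _ hX)
    _ ≤ ∑ d ∈ Icc 1 Q, E * (Q * (1 / (d : ℝ))) :=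
        sum_le_sum_of_subset_of_nonneg (filter_subset _ _) fun _ _ _ => by positivity
    _ ≤ E * (Q * (1 + Real.log Q)) := by
        rw [← mul_sum, ← mul_sum]
        gcongr
        exact sum_Icc_one_div_le_one_add_log Q

theorem sum_Ioc_one_inv_sq_le (n : ℕ) : ∑ d ∈ Ioc 1 n, ((d : ℝ) ^ 2)⁻¹ ≤ 3 / 4 := by
  rcases Nat.lt_or_ge n 2 with hn | hn
  · rw [Ioc_eq_empty (by omega), sum_empty]
    norm_num
  · have htail := sum_Ioc_inv_sq_le_sub (α := ℝ) two_ne_zero hn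
    rw [← insert_Ioc_add_one_left_eq_Ioc (by omega : 1 < n), sum_insert (by simp)]
    have : (0 : ℝ) ≤ (n : ℝ)⁻¹ := by positivity
    norm_num at htail ⊢
    linarith

theorem one_div_le_coprimeDensity {Q : ℕ} (hQ : 1 ≤ Q) :
    1 / (4 * (m : ℝ) ^ 2) ≤ coprimeDensity m Q := by
  have hsplit : ({d ∈ Icc 1 Q | Nat.Coprime d m} : Finset ℕ)
      = insert 1 {d ∈ Ioc 1 Q | Nat.Coprime d m} := by
    rw [← Finset.Ioc_insert_left hQ, filter_insert, if_pos (Nat.coprime_one_left m)]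
  have htail : |∑ d ∈ Ioc 1 Q with Nat.Coprime d m, (moebius d : ℝ) / ((m : ℝ) ^ 2 * (d : ℝ) ^ 2)|
      ≤ 1 / (m : ℝ) ^ 2 * (3 / 4) :=
    calc _ ≤ ∑ d ∈ Ioc 1 Q with Nat.Coprime d m, 1 / (m : ℝ) ^ 2 * ((d : ℝ) ^ 2)⁻¹ := by
          refine (abs_sum_le_sum_abs _ _).trans (sum_le_sum fun d _ => ?_)
          rw [abs_div, abs_of_nonneg (by positivity : (0 : ℝ) ≤ (m : ℝ) ^ 2 * (d : ℝ) ^ 2),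
            ← one_div, one_div_mul_one_div]
          exact div_le_div_of_nonneg_right (abs_moebius_cast_le_one d) (by positivity)
      _ ≤ ∑ d ∈ Ioc 1 Q, 1 / (m : ℝ) ^ 2 * ((d : ℝ) ^ 2)⁻¹ :=
          sum_le_sum_of_subset_of_nonneg (filter_subset _ _) fun _ _ _ => by positivity
      _ ≤ 1 / (m : ℝ) ^ 2 * (3 / 4) := by
          rw [← mul_sum]
          gcongr
          exact sum_Ioc_one_inv_sq_le Q
  have hquarter : 1 / (4 * (m : ℝ) ^ 2) = 1 / (m : ℝ) ^ 2 - 1 / (m : ℝ) ^ 2 * (3 / 4) := by ring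
  rw [coprimeDensity, hsplit, sum_insert (by simp), ArithmeticFunction.moebius_apply_one, hquarter,
    Int.cast_one, Nat.cast_one, one_pow, mul_one]
  linarith [(abs_le.1 htail).1]

end Coprime

/-- The pairs of denominators of consecutive fractions of the Farey series of order `Q`. -/
def fareyPairs (Q : ℕ) : Finset (ℕ × ℕ) :=
  {p ∈ Icc 1 Q ×ˢ Icc 1 Q | Q < p.1 + p.2 ∧ Nat.Coprime p.1 p.2}

theorem mem_fareyPairs {Q : ℕ} {p : ℕ × ℕ} : p ∈ fareyPairs Q ↔
    ((1 ≤ p.1 ∧ p.1 ≤ Q) ∧ (1 ≤ p.2 ∧ p.2 ≤ Q)) ∧ Q < p.1 + p.2 ∧ Nat.Coprime p.1 p.2 := by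
  simp [fareyPairs]

/-- The index of a pair `p` of consecutive denominators: if `q` is the denominator after `p.2`, then
`p.1 + q = index Q p * p.2`. -/
def index (Q : ℕ) (p : ℕ × ℕ) : ℕ := (Q + p.1) / p.2

/-- The pair of consecutive denominators following `p`. -/
def nextPair (Q : ℕ) (p : ℕ × ℕ) : ℕ × ℕ := (p.2, index Q p * p.2 - p.1)

theorem index_eq_of_add_eq {Q a b c k : ℕ} (h : a + c = k * b) (hc : c ≤ Q) (hQ : Q < b + c) :
    index Q (a, b) = k := by
  refine Nat.div_eq_of_lt_le ?_ ?_ <;> grind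

theorem nextPair_eq_of_add_eq {Q a b c k : ℕ} (h : a + c = k * b) (hc : c ≤ Q) (hQ : Q < b + c) :
    nextPair Q (a, b) = (b, c) := by
  simp only [nextPair, index_eq_of_add_eq h hc hQ, ← h, Nat.add_sub_cancel_left]

theorem swap_mem_fareyPairs {Q : ℕ} {p : ℕ × ℕ} (hp : p ∈ fareyPairs Q) :
    p.swap ∈ fareyPairs Q := by
  rw [mem_fareyPairs] at hp ⊢
  exact ⟨hp.1.symm, (add_comm _ _).trans_gt hp.2.1, hp.2.2.symm⟩

theorem lt_index_add_one_mul {Q : ℕ} {p : ℕ × ℕ} (hp : p ∈ fareyPairs Q) :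
    Q + p.1 < index Q p * p.2 + p.2 := by
  rw [← add_one_mul, mul_comm]
  exact Nat.lt_mul_div_succ _ (mem_fareyPairs.1 hp).1.2.1

theorem fst_add_nextPair_snd {Q : ℕ} {p : ℕ × ℕ} (hp : p ∈ fareyPairs Q) :
    p.1 + (nextPair Q p).2 = index Q p * p.2 := by
  have hlt := lt_index_add_one_mul hp
  have hle := (mem_fareyPairs.1 hp).1.2.2
  exact Nat.add_sub_cancel' (by omega)

theorem nextPair_mem {Q : ℕ} {p : ℕ × ℕ} (hp : p ∈ fareyPairs Q) : nextPair Q p ∈ fareyPairs Q := by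
  have hadd := fst_add_nextPair_snd hp
  have hlt := lt_index_add_one_mul hp
  have hle : index Q p * p.2 ≤ Q + p.1 := Nat.div_mul_le_self _ _
  obtain ⟨⟨-, hp2⟩, hQ, hcop⟩ := mem_fareyPairs.1 hp
  have hfst : (nextPair Q p).1 = p.2 := rfl
  refine mem_fareyPairs.2 ⟨⟨hp2, by omega, by omega⟩, by omega, ?_⟩
  rw [hfst]
  have hdvd : Nat.gcd p.2 (nextPair Q p).2 ∣ p.1 + (nextPair Q p).2 :=
    hadd ▸ (Nat.gcd_dvd_left _ _).mul_left _
  exact Nat.dvd_one.1 (hcop ▸ Nat.dvd_gcd ((Nat.dvd_add_left (Nat.gcd_dvd_right _ _)).1 hdvd)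
    (Nat.gcd_dvd_left _ _))

theorem nextPair_swap_nextPair {Q : ℕ} {p : ℕ × ℕ} (hp : p ∈ fareyPairs Q) :
    nextPair Q (nextPair Q p).swap = p.swap := by
  have h := mem_fareyPairs.1 hp
  exact nextPair_eq_of_add_eq ((add_comm _ _).trans (fst_add_nextPair_snd hp)) h.1.1.2
    ((add_comm _ _).trans_gt h.2.1)

open Classical in
/-- The pairs of consecutive denominators with the property `C`. -/
noncomputable def pairsWith (Q : ℕ) (C : ℕ × ℕ → Prop) : Finset (ℕ × ℕ) := {p ∈ fareyPairs Q | C p}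

theorem mem_pairsWith {Q : ℕ} {C : ℕ × ℕ → Prop} {p : ℕ × ℕ} :
    p ∈ pairsWith Q C ↔ p ∈ fareyPairs Q ∧ C p := by
  simp [pairsWith]

/-- The number of pairs of consecutive denominators with the property `C`. -/
noncomputable def pairCount (Q : ℕ) (C : ℕ × ℕ → Prop) : ℕ := #(pairsWith Q C)

open Classical in
theorem pairCount_congr {Q : ℕ} {C C' : ℕ × ℕ → Prop} (h : ∀ p ∈ fareyPairs Q, C p ↔ C' p) :
    pairCount Q C = pairCount Q C' :=
  congrArg card (Finset.filter_congr h)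

open Classical in
theorem pairCount_eq_zero {Q : ℕ} {C : ℕ × ℕ → Prop} (h : ∀ p ∈ fareyPairs Q, ¬ C p) :
    pairCount Q C = 0 :=
  card_eq_zero.2 (filter_eq_empty_iff.2 h)

theorem pairCount_or {Q : ℕ} {C C' : ℕ × ℕ → Prop} (h : ∀ p ∈ fareyPairs Q, C p → ¬ C' p) :
    pairCount Q (fun p => C p ∨ C' p) = pairCount Q C + pairCount Q C' := by
  unfold pairCount
  rw [← card_union_of_disjoint]
  · congr 1
    ext p
    simp only [mem_union, mem_pairsWith]
    tauto
  · rw [Finset.disjoint_left]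
    intro p hp hp'
    rw [mem_pairsWith] at hp hp'
    exact h p hp.1 hp.2 hp'.2

theorem pairCount_comp {Q : ℕ} {f g : ℕ × ℕ → ℕ × ℕ} (hf : ∀ p ∈ fareyPairs Q, f p ∈ fareyPairs Q)
    (hg : ∀ p ∈ fareyPairs Q, g p ∈ fareyPairs Q) (hgf : ∀ p ∈ fareyPairs Q, g (f p) = p)
    (hfg : ∀ p ∈ fareyPairs Q, f (g p) = p) (C : ℕ × ℕ → Prop) :
    pairCount Q (fun p => C (f p)) = pairCount Q C := by
  refine card_nbij' f g ?_ ?_ ?_ ?_ <;> intro p hp <;> simp only [mem_coe, mem_pairsWith] at hp ⊢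
  · exact ⟨hf p hp.1, hp.2⟩
  · exact ⟨hg p hp.1, (hfg p hp.1).symm ▸ hp.2⟩
  · exact hgf p hp.1
  · exact hfg p hp.1

theorem pairCount_nextPair (Q : ℕ) (C : ℕ × ℕ → Prop) :
    pairCount Q (fun p => C (nextPair Q p)) = pairCount Q C := by
  refine pairCount_comp (g := fun p => (nextPair Q p.swap).swap) (fun p => nextPair_mem)
    (fun p hp => swap_mem_fareyPairs (nextPair_mem (swap_mem_fareyPairs hp)))
    (fun p hp => ?_) (fun p hp => ?_) C
  · rw [nextPair_swap_nextPair hp, Prod.swap_swap]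
  · rw [nextPair_swap_nextPair (swap_mem_fareyPairs hp), Prod.swap_swap]

/-- The `i`-th denominator of the run of consecutive denominators starting with `p.1` and `p.2`. -/
def den (Q : ℕ) (p : ℕ × ℕ) (i : ℕ) : ℕ := ((nextPair Q)^[i] p).1

/-- The index of the `i`-th and `(i + 1)`-st denominators of the run starting with `p`. -/
def idx (Q : ℕ) (p : ℕ × ℕ) (i : ℕ) : ℕ := index Q ((nextPair Q)^[i] p)

theorem iterate_nextPair_mem {Q : ℕ} {p : ℕ × ℕ} (hp : p ∈ fareyPairs Q) (i : ℕ) :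
    (nextPair Q)^[i] p ∈ fareyPairs Q := by
  induction i with
  | zero => exact hp
  | succ i ih =>
    rw [Function.iterate_succ_apply']
    exact nextPair_mem ih

theorem iterate_nextPair_eq (Q : ℕ) (p : ℕ × ℕ) (i : ℕ) :
    (nextPair Q)^[i] p = (den Q p i, den Q p (i + 1)) := by
  unfold den
  rw [Function.iterate_succ_apply']
  rfl

@[simp] theorem den_zero (Q : ℕ) (p : ℕ × ℕ) : den Q p 0 = p.1 := rfl

@[simp] theorem den_one (Q : ℕ) (p : ℕ × ℕ) : den Q p 1 = p.2 := rfl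

theorem idx_nextPair (Q : ℕ) (p : ℕ × ℕ) (i : ℕ) : idx Q (nextPair Q p) i = idx Q p (i + 1) := rfl

section Run

variable {Q : ℕ} {p : ℕ × ℕ}

theorem den_mem (hp : p ∈ fareyPairs Q) (i : ℕ) : (den Q p i, den Q p (i + 1)) ∈ fareyPairs Q :=
  iterate_nextPair_eq Q p i ▸ iterate_nextPair_mem hp i

theorem den_pos (hp : p ∈ fareyPairs Q) (i : ℕ) : 0 < den Q p i :=
  (mem_fareyPairs.1 (den_mem hp i)).1.1.1

theorem den_le (hp : p ∈ fareyPairs Q) (i : ℕ) : den Q p i ≤ Q :=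
  (mem_fareyPairs.1 (den_mem hp i)).1.1.2

theorem lt_den_add_den (hp : p ∈ fareyPairs Q) (i : ℕ) : Q < den Q p i + den Q p (i + 1) :=
  (mem_fareyPairs.1 (den_mem hp i)).2.1

theorem coprime_den (hp : p ∈ fareyPairs Q) (i : ℕ) :
    Nat.Coprime (den Q p i) (den Q p (i + 1)) :=
  (mem_fareyPairs.1 (den_mem hp i)).2.2

theorem den_add_den_add_two (hp : p ∈ fareyPairs Q) (i : ℕ) :
    den Q p i + den Q p (i + 2) = idx Q p i * den Q p (i + 1) := by
  have h := fst_add_nextPair_snd (iterate_nextPair_mem hp i)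
  rw [← Function.iterate_succ_apply' (nextPair Q), iterate_nextPair_eq Q p (i + 1)] at h
  rw [idx]
  rwa [iterate_nextPair_eq Q p i] at h ⊢

theorem den_iterate (Q : ℕ) (p : ℕ × ℕ) (m i : ℕ) :
    den Q ((nextPair Q)^[m] p) i = den Q p (m + i) := by
  rw [den, den, ← Function.iterate_add_apply, add_comm]

theorem idx_iterate (Q : ℕ) (p : ℕ × ℕ) (m i : ℕ) :
    idx Q ((nextPair Q)^[m] p) i = idx Q p (m + i) := by
  rw [idx, idx, ← Function.iterate_add_apply, add_comm]

end Run

section Reversal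

variable {Q : ℕ} {p : ℕ × ℕ}

theorem nextPair_iterate_swap (hp : p ∈ fareyPairs Q) (m i : ℕ) :
    (nextPair Q)^[i] ((nextPair Q)^[i + m] p).swap = ((nextPair Q)^[m] p).swap := by
  induction i generalizing m with
  | zero => simp
  | succ i ih =>
    rw [Function.iterate_succ_apply', show i + 1 + m = i + (m + 1) by ring, ih,
      Function.iterate_succ_apply', nextPair_swap_nextPair (iterate_nextPair_mem hp m)]

/-- The start of the run which traverses the denominators `den Q p 0, …, den Q p (m + 1)` in
reverse. -/
def revPair (Q m : ℕ) (p : ℕ × ℕ) : ℕ × ℕ := ((nextPair Q)^[m] p).swap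

theorem revPair_mem (hp : p ∈ fareyPairs Q) (m : ℕ) :
    revPair Q m p ∈ fareyPairs Q := swap_mem_fareyPairs (iterate_nextPair_mem hp m)

theorem revPair_revPair (hp : p ∈ fareyPairs Q) (m : ℕ) : revPair Q m (revPair Q m p) = p := by
  have h := nextPair_iterate_swap hp 0 m
  rw [add_zero] at h
  rw [revPair, revPair, h, Function.iterate_zero_apply, Prod.swap_swap]

theorem den_revPair (hp : p ∈ fareyPairs Q) {m i : ℕ} (hi : i ≤ m + 1) :
    den Q (revPair Q m p) i = den Q p (m + 1 - i) := by
  rcases Nat.lt_or_ge m i with him | him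
  · obtain rfl : i = m + 1 := by omega
    have h := nextPair_iterate_swap hp 0 m
    rw [add_zero] at h
    rw [den, revPair, Function.iterate_succ_apply', h, Nat.sub_self]
    rfl
  · obtain ⟨j, rfl⟩ := Nat.exists_eq_add_of_le him
    rw [revPair, den, nextPair_iterate_swap hp j i, iterate_nextPair_eq, Prod.fst_swap,
      show i + j + 1 - i = j + 1 by omega]

theorem idx_revPair (hp : p ∈ fareyPairs Q) {m i : ℕ} (hi : i + 1 ≤ m) :
    idx Q (revPair Q m p) i = idx Q p (m - 1 - i) := by
  obtain ⟨j, rfl⟩ := Nat.exists_eq_add_of_le hi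
  have hrev := den_add_den_add_two (revPair_mem hp (i + 1 + j)) i
  have hfwd := den_add_den_add_two hp j
  rw [den_revPair hp (by omega), den_revPair hp (by omega), den_revPair hp (by omega),
    show i + 1 + j + 1 - i = j + 2 by omega, show i + 1 + j + 1 - (i + 2) = j by omega,
    show i + 1 + j + 1 - (i + 1) = j + 1 by omega, add_comm, hfwd] at hrev
  rw [show i + 1 + j - 1 - i = j by omega]
  exact (Nat.eq_of_mul_eq_mul_right (den_pos hp (j + 1)) hrev).symm

theorem pairCount_revPair (Q m : ℕ) (C : ℕ × ℕ → Prop) :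
    pairCount Q (fun p => C (revPair Q m p)) = pairCount Q C :=
  pairCount_comp (fun _ hp => revPair_mem hp m) (fun _ hp => revPair_mem hp m)
    (fun _ hp => revPair_revPair hp m) (fun _ hp => revPair_revPair hp m) C

end Reversal

section Dynamics

variable {Q : ℕ} {p : ℕ × ℕ}

theorem le_idx_iff (hp : p ∈ fareyPairs Q) (i k : ℕ) :
    k ≤ idx Q p i ↔ k * den Q p (i + 1) ≤ Q + den Q p i := by
  rw [idx, iterate_nextPair_eq, index, Nat.le_div_iff_mul_le (den_pos hp (i + 1))]

theorem mul_den_le_of_le_idx (hp : p ∈ fareyPairs Q) {i k : ℕ} (hk : k ≤ idx Q p i) :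
    k * den Q p (i + 1) ≤ den Q p i + den Q p (i + 2) := by
  rw [den_add_den_add_two hp]
  exact Nat.mul_le_mul_right _ hk

theorem one_le_idx (hp : p ∈ fareyPairs Q) (i : ℕ) : 1 ≤ idx Q p i := by
  rw [le_idx_iff hp]
  have := den_le hp (i + 1)
  omega

theorem idx_succ_eq_one_of_five_le (hp : p ∈ fareyPairs Q) {i : ℕ} (hi : 5 ≤ idx Q p i) :
    idx Q p (i + 1) = 1 := by
  by_contra hne
  have hge : 2 ≤ idx Q p (i + 1) := lt_of_le_of_ne (one_le_idx hp _) (Ne.symm hne)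
  rw [le_idx_iff hp] at hge
  have hmul := mul_den_le_of_le_idx hp hi
  have hle := den_le hp i
  have hlt := lt_den_add_den hp (i + 1)
  grind

theorem idx_eq_one_of_five_le_succ (hp : p ∈ fareyPairs Q) {i : ℕ} (hi : 5 ≤ idx Q p (i + 1)) :
    idx Q p i = 1 := by
  have hrev := idx_revPair hp (m := i + 2) (i := 0) (by omega)
  have hrev' := idx_revPair hp (m := i + 2) (i := 1) (by omega)
  rw [← show i + 2 - 1 - 0 = i + 1 by omega, ← hrev] at hi
  rw [← show i + 2 - 1 - 1 = i by omega, ← hrev']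
  exact idx_succ_eq_one_of_five_le (revPair_mem hp _) hi

theorem den_eq_add_mul_of_idx_eq_two (hp : p ∈ fareyPairs Q) {n : ℕ}
    (h : ∀ l < n, idx Q p (1 + l) = 2) {l : ℕ} (hl : l ≤ n + 1) :
    (den Q p (1 + l) : ℤ) = den Q p 1 + l * ((den Q p 2 : ℤ) - den Q p 1) := by
  induction l using Nat.twoStepInduction with
  | zero => simp
  | one => simp
  | more l ih ih' =>
    have hl0 := ih (by omega)
    have hl1 := ih' (by omega)
    have hadd := den_add_den_add_two hp (1 + l)
    rw [h l (by omega)] at hadd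
    zify at hadd
    push_cast [← add_assoc] at hl1 hadd ⊢
    linear_combination hadd - hl0 + 2 * hl1

theorem den_add_mul_of_idx_eq_one (hp : p ∈ fareyPairs Q) {n : ℕ} (h0 : idx Q p 0 = 1)
    (h : ∀ l < n, idx Q p (1 + l) = 2) {l : ℕ} (hl : l ≤ n + 1) :
    den Q p (1 + l) + l * p.1 = p.2 := by
  have hl := den_eq_add_mul_of_idx_eq_two hp h hl
  have hadd := den_add_den_add_two hp 0
  rw [h0, one_mul, zero_add, zero_add, den_zero, den_one] at hadd
  zify at hadd ⊢
  rw [hl, den_one]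
  linear_combination (l : ℤ) * hadd

theorem idx_lt_three_of_three_le_of_twos (hp : p ∈ fareyPairs Q) {n : ℕ} (h0 : 3 ≤ idx Q p 0)
    (h : ∀ l < n, idx Q p (1 + l) = 2) : idx Q p (1 + n) < 3 := by
  by_contra! hn
  have hden := den_eq_add_mul_of_idx_eq_two hp h (Nat.le_succ n)
  have hden' := den_eq_add_mul_of_idx_eq_two hp h le_rfl
  have hmul := mul_den_le_of_le_idx hp h0
  have hmul' := mul_den_le_of_le_idx hp hn
  have hlt := lt_den_add_den hp 1
  have hlt' := lt_den_add_den hp (1 + n)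
  have hle := den_le hp 0
  have hle' := den_le hp (1 + n + 2)
  rw [← add_assoc] at hden'
  simp only [zero_add, Nat.reduceAdd] at hmul hlt
  zify at *
  linarith

theorem idx_lt_three_of_twos_between (hp : p ∈ fareyPairs Q) {i j : ℕ} (hij : i < j)
    (hi : 3 ≤ idx Q p i) (h : ∀ l, i < l → l < j → idx Q p l = 2) : idx Q p j < 3 := by
  obtain ⟨n, rfl⟩ := Nat.exists_eq_add_of_lt hij
  rw [add_assoc, add_comm n, ← idx_iterate]
  refine idx_lt_three_of_three_le_of_twos (iterate_nextPair_mem hp i) ?_ fun l hl => ?_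
  · rwa [idx_iterate]
  · rw [idx_iterate]
    exact h _ (by omega) (by omega)

theorem idx_eq_two_of_mod_three (hp : p ∈ fareyPairs Q) {n : ℕ} (hn : 3 ≤ idx Q p (1 + n))
    (h : ∀ l < n, idx Q p (1 + l) % 3 = 2) {l : ℕ} (hl : l < n) : idx Q p (1 + l) = 2 := by
  induction hd : n - l using Nat.strong_induction_on generalizing l with
  | _ d ih =>
    by_contra hne
    have hmod := h l hl
    have hlt := idx_lt_three_of_twos_between hp (i := 1 + l) (j := 1 + n) (by omega) (by omega)
      fun k hk hk' => by
        obtain ⟨k, rfl⟩ := Nat.exists_eq_add_of_le (show 1 ≤ k by omega)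
        exact ih (n - k) (by omega) (by omega) rfl
    omega

theorem idx_eq_two_iff_of_twos (hp : p ∈ fareyPairs Q) {n : ℕ} (h0 : idx Q p 0 = 1)
    (h : ∀ l < n, idx Q p (1 + l) = 2) :
    idx Q p (1 + n) = 2 ↔ Q + (2 * (n + 1) + 1) * p.1 < 2 * p.2 := by
  have hden := den_add_mul_of_idx_eq_one hp h0 h (Nat.le_succ n)
  have hden' := den_add_mul_of_idx_eq_one hp h0 h le_rfl
  have htwo := le_idx_iff hp (1 + n) 2
  have hthree := le_idx_iff hp (1 + n) 3
  have hle := (mem_fareyPairs.1 hp).1.2.2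
  rw [← add_assoc, add_one_mul] at hden'
  have hexpand : (2 * (n + 1) + 1) * p.1 = 2 * (n * p.1) + 3 * p.1 := by ring
  omega

theorem idx_one_twos_iff (hp : p ∈ fareyPairs Q) (n : ℕ) :
    (idx Q p 0 = 1 ∧ ∀ l < n, idx Q p (1 + l) = 2) ↔ Q + (2 * n + 1) * p.1 < 2 * p.2 := by
  induction n with
  | zero =>
    have hone := one_le_idx hp 0
    have htwo := le_idx_iff hp 0 2
    simp only [zero_add, den_zero, den_one] at htwo
    simp only [not_lt_zero, false_imp_iff, implies_true, and_true, mul_zero, zero_add, one_mul]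
    omega
  | succ n ih =>
    constructor
    · rintro ⟨h0, h⟩
      exact (idx_eq_two_iff_of_twos hp h0 fun l hl => h l (by omega)).1 (h n (by omega))
    · intro hlt
      obtain ⟨h0, h⟩ := ih.2 (by linarith)
      refine ⟨h0, fun l hl => ?_⟩
      rcases Nat.lt_succ_iff_lt_or_eq.1 hl with hl | rfl
      · exact h l hl
      · exact (idx_eq_two_iff_of_twos hp h0 h).2 hlt

theorem succ_le_idx_after_twos_iff (hp : p ∈ fareyPairs Q) {n : ℕ}
    (h : Q + (2 * n + 1) * p.1 < 2 * p.2) (k : ℕ) :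
    k + 1 ≤ idx Q p (1 + n) ↔ k * p.2 ≤ Q + (k * (n + 1) + 1) * p.1 := by
  obtain ⟨h0, h⟩ := (idx_one_twos_iff hp n).2 h
  have hden := den_add_mul_of_idx_eq_one hp h0 h (Nat.le_succ n)
  have hden' := den_add_mul_of_idx_eq_one hp h0 h le_rfl
  rw [← add_assoc] at hden'
  rw [le_idx_iff hp, ← hden']
  zify at hden hden' ⊢
  constructor <;> intro hle <;> linarith

theorem two_le_idx_after_twos (hp : p ∈ fareyPairs Q) {n : ℕ}
    (h : Q + (2 * n + 1) * p.1 < 2 * p.2) : 2 ≤ idx Q p (1 + n) := by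
  rw [succ_le_idx_after_twos_iff hp h 1]
  have := (mem_fareyPairs.1 hp).1.2.2
  omega

theorem idx_after_twos_lt_five (hp : p ∈ fareyPairs Q) {n : ℕ} (hn : 1 ≤ n)
    (h : Q + (2 * n + 1) * p.1 < 2 * p.2) : idx Q p (1 + n) < 5 := by
  by_contra! hge
  rw [succ_le_idx_after_twos_iff hp h 4] at hge
  have := (mem_fareyPairs.1 hp).1.2.2
  nlinarith [Nat.mul_le_mul_right p.1 hn]

theorem idx_after_twos_lt_four (hp : p ∈ fareyPairs Q) {n : ℕ} (hn : 2 ≤ n)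
    (h : Q + (2 * n + 1) * p.1 < 2 * p.2) : idx Q p (1 + n) < 4 := by
  by_contra! hge
  rw [succ_le_idx_after_twos_iff hp h 3] at hge
  have := (mem_fareyPairs.1 hp).1.2.2
  nlinarith [Nat.mul_le_mul_right p.1 hn]

end Dynamics

section PairDensity

variable {m : ℕ} {C C' : ℕ → ℕ × ℕ → Prop} {a a' E E' : ℝ}

/-- The pairs with the property `C Q` number `a Q²` times the density of the coprime lattice points
in a residue class modulo `m`, up to an error of at most `E Q (1 + log Q)`. -/
def HasPairDensity (m : ℕ) (C : ℕ → ℕ × ℕ → Prop) (a E : ℝ) : Prop :=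
  ∀ Q : ℕ, |(pairCount Q (C Q) : ℝ) - coprimeDensity m Q * a * (Q : ℝ) ^ 2| ≤
    E * ((Q : ℝ) * (1 + Real.log Q))

theorem HasPairDensity.congr (h : HasPairDensity m C a E)
    (hC : ∀ Q, pairCount Q (C' Q) = pairCount Q (C Q)) : HasPairDensity m C' a E := fun Q => by
  rw [hC]
  exact h Q

theorem HasPairDensity.or (h : HasPairDensity m C a E) (h' : HasPairDensity m C' a' E')
    (hC : ∀ Q, ∀ p ∈ fareyPairs Q, C Q p → ¬ C' Q p) :
    HasPairDensity m (fun Q p => C Q p ∨ C' Q p) (a + a') (E + E') := fun Q => by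
  rw [pairCount_or (hC Q), Nat.cast_add, mul_add, add_mul, add_mul, add_sub_add_comm]
  exact (abs_add_le _ _).trans (add_le_add (h Q) (h' Q))

theorem hasPairDensity_of_false (h : ∀ Q, ∀ p ∈ fareyPairs Q, ¬ C Q p) :
    HasPairDensity m C 0 0 := fun Q => by
  simp [pairCount_eq_zero (h Q)]

theorem mem_coprimePoints {R : Set (ℝ × ℝ)} {α β : ZMod m} {Q : ℕ} {p : ℕ × ℕ} :
    p ∈ coprimePoints R α β Q ↔ (((1 ≤ p.1 ∧ p.1 ≤ Q) ∧ (1 ≤ p.2 ∧ p.2 ≤ Q)) ∧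
      (p.1 : ZMod m) = α ∧ (p.2 : ZMod m) = β ∧ ((p.1 : ℝ) / Q, (p.2 : ℝ) / Q) ∈ R) ∧
      Nat.Coprime p.1 p.2 := by
  rw [coprimePoints, mem_filter, mem_latticePoints, Nat.floor_natCast]

section Regions

variable {Q : ℕ} {p : ℕ × ℕ}

theorem cast_pos_of_mem_fareyPairs (hp : p ∈ fareyPairs Q) : (0 : ℝ) < Q := by
  have h := (mem_fareyPairs.1 hp).1.1
  exact Nat.cast_pos.2 (h.1.trans h.2)

theorem mem_fareyTriangle_of_mem_fareyPairs (hp : p ∈ fareyPairs Q) :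
    ((p.1 : ℝ) / Q, (p.2 : ℝ) / Q) ∈ fareyTriangle := by
  have hQ := cast_pos_of_mem_fareyPairs hp
  obtain ⟨⟨⟨h1, h2⟩, -, h4⟩, h5, -⟩ := mem_fareyPairs.1 hp
  rw [mem_fareyTriangle, div_le_one hQ, div_le_one hQ, ← add_div, one_lt_div hQ]
  exact ⟨div_pos (Nat.cast_pos.2 h1) hQ, by exact_mod_cast h2, by exact_mod_cast h4,
    by exact_mod_cast h5⟩

theorem swap_mem_fareyTriangle_of_mem_fareyPairs (hp : p ∈ fareyPairs Q) :
    ((p.2 : ℝ) / Q, (p.1 : ℝ) / Q) ∈ fareyTriangle :=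
  mem_fareyTriangle_of_mem_fareyPairs (swap_mem_fareyPairs hp)

theorem mem_wedge_iff (hp : p ∈ fareyPairs Q) (a b : ℕ) :
    ((p.1 : ℝ) / Q, (p.2 : ℝ) / Q) ∈ wedge a b ↔ Q + b * p.1 < a * p.2 := by
  rw [mem_wedge, and_iff_right (mem_fareyTriangle_of_mem_fareyPairs hp), mul_div_assoc',
    mul_div_assoc', ← sub_div, one_lt_div (cast_pos_of_mem_fareyPairs hp), lt_sub_iff_add_lt]
  norm_cast

theorem swap_mem_wedge_iff (hp : p ∈ fareyPairs Q) (a b : ℕ) :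
    ((p.2 : ℝ) / Q, (p.1 : ℝ) / Q) ∈ wedge a b ↔ Q + b * p.2 < a * p.1 :=
  mem_wedge_iff (swap_mem_fareyPairs hp) a b

theorem swap_mem_indexGE_iff (hp : p ∈ fareyPairs Q) (k : ℕ) :
    ((p.2 : ℝ) / Q, (p.1 : ℝ) / Q) ∈ indexGE k ↔ k ≤ idx Q p 0 := by
  have hQ := cast_pos_of_mem_fareyPairs hp
  rw [le_idx_iff hp, den_zero, den_one, mem_indexGE,
    and_iff_right (swap_mem_fareyTriangle_of_mem_fareyPairs hp), mul_div_assoc',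
    one_add_div hQ.ne', div_le_div_iff_of_pos_right hQ]
  norm_cast

theorem swap_mem_indexClass_iff (hp : p ∈ fareyPairs Q) (i : Fin 3) :
    ((p.2 : ℝ) / Q, (p.1 : ℝ) / Q) ∈ indexClass i ↔
      2 + (i : ℕ) ≤ idx Q p 0 ∧ idx Q p 0 % 3 = (2 + (i : ℕ)) % 3 := by
  have hcell (k : ℕ) : ((p.2 : ℝ) / Q, (p.1 : ℝ) / Q) ∈ indexCell k ↔ idx Q p 0 = k := by
    rw [indexCell, Set.mem_sdiff, ← Nat.cast_succ, swap_mem_indexGE_iff hp,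
      swap_mem_indexGE_iff hp]
    omega
  simp only [indexClass, Set.mem_iUnion, hcell]
  exact ⟨fun ⟨j, hj⟩ => by omega, fun h => ⟨(idx Q p 0 - (2 + i)) / 3, by omega⟩⟩

end Regions

variable {R : Set (ℝ × ℝ)} {α β : ZMod m} {S : ℕ → ℕ × ℕ → Prop}

theorem indexClass_subset_fareyTriangle (i : Fin 3) : indexClass i ⊆ fareyTriangle :=
  (indexClass_subset_indexGE i).trans (indexGE_subset_fareyTriangle _)

variable [NeZero m]

theorem HasDensity.hasPairDensity (h : HasDensity R a E) (hR : R ⊆ fareyTriangle)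
    (hαβ : IsCoprime α β)
    (hS : ∀ Q, ∀ p ∈ fareyPairs Q, S Q p ↔ ((p.1 : ℝ) / Q, (p.2 : ℝ) / Q) ∈ R) :
    HasPairDensity m (fun Q p => (p.1 : ZMod m) = α ∧ (p.2 : ZMod m) = β ∧ S Q p) a E := by
  intro Q
  have hpairs : pairsWith Q (fun p => (p.1 : ZMod m) = α ∧ (p.2 : ZMod m) = β ∧ S Q p)
      = coprimePoints R α β Q := by
    ext p
    rw [mem_pairsWith, mem_coprimePoints]
    constructor
    · rintro ⟨hp, h1, h2, hpS⟩
      have hp' := mem_fareyPairs.1 hp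
      exact ⟨⟨hp'.1, h1, h2, (hS Q p hp).1 hpS⟩, hp'.2.2⟩
    · rintro ⟨⟨hle, h1, h2, hpR⟩, hcop⟩
      have hQ : (0 : ℝ) < Q := Nat.cast_pos.2 (hle.1.1.trans hle.1.2)
      have hlt := (mem_fareyTriangle.1 (hR hpR)).2.2.2
      rw [← add_div, one_lt_div hQ] at hlt
      have hp : p ∈ fareyPairs Q := mem_fareyPairs.2 ⟨hle, by exact_mod_cast hlt, hcop⟩
      exact ⟨hp, h1, h2, (hS Q p hp).2 hpR⟩
  rw [pairCount, hpairs]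
  exact h.abs_card_coprimePoints_sub_le hαβ Q

theorem HasDensity.hasPairDensity_swap (h : HasDensity R a E) (hR : R ⊆ fareyTriangle)
    (hαβ : IsCoprime α β)
    (hS : ∀ Q, ∀ p ∈ fareyPairs Q, S Q p ↔ ((p.2 : ℝ) / Q, (p.1 : ℝ) / Q) ∈ R) :
    HasPairDensity m (fun Q p => (p.1 : ZMod m) = α ∧ (p.2 : ZMod m) = β ∧ S Q p) a E := by
  refine (h.hasPairDensity hR hαβ.symm (S := fun Q p => S Q p.swap)
    fun Q p hp => hS Q p.swap (swap_mem_fareyPairs hp)).congr fun Q => ?_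
  rw [← pairCount_revPair Q 0]
  refine pairCount_congr fun p _ => ?_
  simp only [revPair, Function.iterate_zero, id, Prod.fst_swap, Prod.snd_swap]
  tauto

theorem hasPairDensity_residues (hαβ : IsCoprime α β) :
    HasPairDensity m (fun _ p => (p.1 : ZMod m) = α ∧ (p.2 : ZMod m) = β) (1 / 2) 3 :=
  (hasDensity_fareyTriangle.hasPairDensity subset_rfl hαβ (S := fun _ _ => True) fun _ _ hp =>
    iff_of_true trivial (mem_fareyTriangle_of_mem_fareyPairs hp)).congr fun _ => by
      simp only [and_true]

theorem hasPairDensity_idx_mod_one (hαβ : IsCoprime α β) :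
    HasPairDensity m (fun Q p => (p.1 : ZMod m) = α ∧ (p.2 : ZMod m) = β ∧ idx Q p 0 % 3 = 1)
      (1 / 6 + classArea 2) 34 := by
  refine hasDensity_fareyTriangle_diff_union_indexClass_two.hasPairDensity_swap
    (Set.union_subset Set.sdiff_subset (indexClass_subset_fareyTriangle _)) hαβ fun Q p hp => ?_
  have hge := swap_mem_indexGE_iff hp 2
  have hclass := swap_mem_indexClass_iff hp 2
  have hone := one_le_idx hp 0
  norm_num at hge hclass
  rw [Set.mem_union, Set.mem_sdiff, hge, hclass,
    and_iff_right (swap_mem_fareyTriangle_of_mem_fareyPairs hp)]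
  omega

theorem hasPairDensity_idx_mod_two (hαβ : IsCoprime α β) :
    HasPairDensity m (fun Q p => (p.1 : ZMod m) = α ∧ (p.2 : ZMod m) = β ∧ idx Q p 0 % 3 = 2)
      (classArea 0) 26 := by
  refine (hasDensity_indexClass 0).hasPairDensity_swap (indexClass_subset_fareyTriangle _) hαβ
    fun Q p hp => ?_
  have hclass := swap_mem_indexClass_iff hp 0
  norm_num at hclass
  rw [hclass]
  omega

theorem hasPairDensity_idx_mod_zero (hαβ : IsCoprime α β) :
    HasPairDensity m (fun Q p => (p.1 : ZMod m) = α ∧ (p.2 : ZMod m) = β ∧ idx Q p 0 % 3 = 0)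
      (classArea 1) 26 := by
  refine (hasDensity_indexClass 1).hasPairDensity_swap (indexClass_subset_fareyTriangle _) hαβ
    fun Q p hp => ?_
  have hclass := swap_mem_indexClass_iff hp 1
  have hone := one_le_idx hp 0
  norm_num at hclass
  rw [hclass]
  omega

theorem hasPairDensity_idx_mod_zero_inter_wedge (hαβ : IsCoprime α β) :
    HasPairDensity m (fun Q p => (p.1 : ZMod m) = α ∧ (p.2 : ZMod m) = β ∧
      (idx Q p 0 % 3 = 0 ∧ Q + p.2 < 2 * p.1)) (classArea 1 - 1 / 35) 46 := by
  refine hasDensity_indexClass_one_inter_wedge.hasPairDensity_swap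
    (Set.inter_subset_left.trans (indexClass_subset_fareyTriangle _)) hαβ fun Q p hp => ?_
  have hwedge := swap_mem_wedge_iff hp 2 1
  have hclass := swap_mem_indexClass_iff hp 1
  have hone := one_le_idx hp 0
  norm_num at hwedge hclass
  rw [Set.mem_inter_iff, hwedge, hclass]
  omega

theorem hasPairDensity_idx_mod_one_inter_wedge (hαβ : IsCoprime α β) :
    HasPairDensity m (fun Q p => (p.1 : ZMod m) = α ∧ (p.2 : ZMod m) = β ∧
      (4 ≤ idx Q p 0 ∧ idx Q p 0 % 3 = 1 ∧ Q + p.2 < 2 * p.1)) (classArea 2 - 1 / 210) 36 := by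
  refine hasDensity_indexClass_two_inter_wedge.hasPairDensity_swap
    (Set.inter_subset_left.trans (indexClass_subset_fareyTriangle _)) hαβ fun Q p hp => ?_
  have hwedge := swap_mem_wedge_iff hp 2 1
  have hclass := swap_mem_indexClass_iff hp 2
  norm_num at hwedge hclass
  rw [Set.mem_inter_iff, hwedge, hclass, and_assoc]

theorem hasPairDensity_idx_mod_two_of_five_le (hαβ : IsCoprime α β) :
    HasPairDensity m (fun Q p => (p.1 : ZMod m) = α ∧ (p.2 : ZMod m) = β ∧
      (5 ≤ idx Q p 0 ∧ idx Q p 0 % 3 = 2)) (classArea 0 - 1 / 6) 36 := by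
  refine hasDensity_indexClass_zero_inter_indexGE_three.hasPairDensity_swap
    (Set.inter_subset_left.trans (indexClass_subset_fareyTriangle _)) hαβ fun Q p hp => ?_
  have hge := swap_mem_indexGE_iff hp 3
  have hclass := swap_mem_indexClass_iff hp 0
  norm_num at hge hclass
  rw [Set.mem_inter_iff, hge, hclass]
  omega

theorem hasPairDensity_wedge_two_diff (hαβ : IsCoprime α β) {n : ℕ} (hn : 1 ≤ n) :
    HasPairDensity m (fun Q p => (p.1 : ZMod m) = α ∧ (p.2 : ZMod m) = β ∧
      (Q + (2 * n - 1) * p.1 < 2 * p.2 ∧ 2 * p.2 ≤ Q + (2 * n + 1) * p.1))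
      (2 / ((2 * n - 1) * (2 * n + 1) * (2 * n + 3))) 6 := by
  refine (hasDensity_wedge_two_diff hn).hasPairDensity
    (Set.sdiff_subset.trans (wedge_subset_fareyTriangle _ _)) hαβ fun Q p hp => ?_
  have hlower := mem_wedge_iff hp 2 (2 * n - 1)
  have hupper := mem_wedge_iff hp 2 (2 * n + 1)
  rw [Nat.cast_sub (by omega)] at hlower
  push_cast at hlower hupper
  rw [Set.mem_sdiff, hlower, hupper, not_lt]

theorem hasPairDensity_wedge_three_diff_wedge_two (hαβ : IsCoprime α β) :
    HasPairDensity m (fun Q p => (p.1 : ZMod m) = α ∧ (p.2 : ZMod m) = β ∧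
      (Q + 7 * p.1 < 3 * p.2 ∧ 2 * p.2 ≤ Q + 5 * p.1)) (1 / 70) 6 := by
  refine hasDensity_wedge_three_diff_wedge_two.hasPairDensity
    (Set.sdiff_subset.trans (wedge_subset_fareyTriangle _ _)) hαβ fun Q p hp => ?_
  have hlower := mem_wedge_iff hp 3 7
  have hupper := mem_wedge_iff hp 2 5
  norm_num at hlower hupper
  rw [Set.mem_sdiff, hlower, hupper, not_lt]

theorem hasPairDensity_wedge_two_diff_wedge_three (hαβ : IsCoprime α β) :
    HasPairDensity m (fun Q p => (p.1 : ZMod m) = α ∧ (p.2 : ZMod m) = β ∧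
      (Q + 3 * p.1 < 2 * p.2 ∧ 3 * p.2 ≤ Q + 7 * p.1)) (1 / 210) 6 := by
  refine hasDensity_wedge_two_diff_wedge_three.hasPairDensity
    (Set.sdiff_subset.trans (wedge_subset_fareyTriangle _ _)) hαβ fun Q p hp => ?_
  have hlower := mem_wedge_iff hp 2 3
  have hupper := mem_wedge_iff hp 3 7
  norm_num at hlower hupper
  rw [Set.mem_sdiff, hlower, hupper, not_lt]

end PairDensity

section Residues

/-- The residues modulo `3` of the successive denominators starting with the pair `p`. -/
def res (Q : ℕ) (p : ℕ × ℕ) (i : ℕ) : ZMod 3 := (den Q p i : ZMod 3)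

/-- The residues start with `0`, continue with `s` times `e` and then `f`. -/
def IsWord (e f : ZMod 3) (s Q : ℕ) (p : ℕ × ℕ) : Prop :=
  res Q p 0 = 0 ∧ (∀ i, 1 ≤ i → i ≤ s → res Q p i = e) ∧ res Q p (s + 1) = f

variable {Q : ℕ} {p : ℕ × ℕ}

theorem res_zero : res Q p 0 = (p.1 : ZMod 3) := rfl

theorem res_one : res Q p 1 = (p.2 : ZMod 3) := rfl

theorem res_nextPair (i : ℕ) : res Q (nextPair Q p) i = res Q p (i + 1) := rfl

theorem res_revPair (hp : p ∈ fareyPairs Q) {m i : ℕ} (hi : i ≤ m + 1) :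
    res Q (revPair Q m p) i = res Q p (m + 1 - i) := by
  rw [res, res, den_revPair hp hi]

theorem res_add_res (hp : p ∈ fareyPairs Q) (i : ℕ) :
    res Q p i + res Q p (i + 2) = (idx Q p i : ZMod 3) * res Q p (i + 1) := by
  unfold res
  exact_mod_cast congrArg (Nat.cast : ℕ → ZMod 3) (den_add_den_add_two hp i)

theorem res_succ_ne_zero (hp : p ∈ fareyPairs Q) {i : ℕ} (h : res Q p i = 0) :
    res Q p (i + 1) ≠ 0 := by
  rw [res, ZMod.natCast_eq_zero_iff] at h
  rw [res, Ne, ZMod.natCast_eq_zero_iff]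
  exact fun h' => Nat.not_coprime_of_dvd_of_dvd (by norm_num) h h' (coprime_den hp i)

variable {e : ZMod 3}

theorem res_add_two_eq_mul_iff (hp : p ∈ fareyPairs Q) (he : e ≠ 0) (a b : ZMod 3) {i : ℕ}
    (h0 : res Q p i = a * e) (h1 : res Q p (i + 1) = e) :
    res Q p (i + 2) = b * e ↔ idx Q p i % 3 = (a + b).val := by
  have h := res_add_res hp i
  rw [h0, h1, ← eq_sub_iff_add_eq', ← sub_mul] at h
  rw [h, mul_left_inj' he, sub_eq_iff_eq_add', ← ZMod.val_natCast, (ZMod.val_injective 3).eq_iff]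

theorem res_add_two_eq_iff_of_eq (hp : p ∈ fareyPairs Q) (he : e ≠ 0) {i : ℕ}
    (h0 : res Q p i = e) (h1 : res Q p (i + 1) = e) :
    res Q p (i + 2) = e ↔ idx Q p i % 3 = 2 := by
  simpa [one_add_one_eq_two, ZMod.val_two_eq_two_mod] using
    res_add_two_eq_mul_iff hp he 1 1 (by simpa using h0) h1

theorem res_add_two_eq_iff_of_zero (hp : p ∈ fareyPairs Q) (he : e ≠ 0) {i : ℕ}
    (h0 : res Q p i = 0) (h1 : res Q p (i + 1) = e) :
    res Q p (i + 2) = e ↔ idx Q p i % 3 = 1 := by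
  simpa [ZMod.val_one''] using res_add_two_eq_mul_iff hp he 0 1 (by simpa using h0) h1

theorem res_eq_on_Icc_iff (hp : p ∈ fareyPairs Q) (he : e ≠ 0) (n : ℕ) :
    (∀ i, 1 ≤ i → i ≤ n + 2 → res Q p i = e) ↔
      res Q p 1 = e ∧ res Q p 2 = e ∧ ∀ l < n, idx Q p (1 + l) % 3 = 2 := by
  constructor
  · exact fun h => ⟨h 1 le_rfl (by omega), h 2 (by omega) (by omega), fun l hl =>
      (res_add_two_eq_iff_of_eq hp he (h (1 + l) (by omega) (by omega))
        (h _ (by omega) (by omega))).1 (h _ (by omega) (by omega))⟩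
  · rintro ⟨h1, h2, h3⟩ i
    induction i using Nat.strong_induction_on with
    | _ i ih =>
      intro hi hin
      match i, hi with
      | 1, _ => exact h1
      | 2, _ => exact h2
      | j + 3, _ =>
        have h4 := (res_add_two_eq_iff_of_eq hp he (ih (1 + j) (by omega) (by omega) (by omega))
          (ih (1 + j + 1) (by omega) (by omega) (by omega))).2 (h3 j (by omega))
        rwa [show 1 + j + 2 = j + 3 by ring] at h4

theorem isWord_add_two_iff (hp : p ∈ fareyPairs Q) (he : e ≠ 0) (b : ZMod 3) (n : ℕ) :
    IsWord e (b * e) (n + 2) Q p ↔ ((p.1 : ZMod 3) = 0 ∧ (p.2 : ZMod 3) = e) ∧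
      idx Q p 0 % 3 = 1 ∧ (∀ l < n, idx Q p (1 + l) % 3 = 2) ∧
      idx Q p (1 + n) % 3 = (1 + b).val := by
  rw [IsWord, ← res_zero (Q := Q), ← res_one (Q := Q)]
  have hlast (h : ∀ i, 1 ≤ i → i ≤ n + 2 → res Q p i = e) :=
    res_add_two_eq_mul_iff hp he 1 b (i := 1 + n)
      (by rw [one_mul, h _ (by omega) (by omega)]) (h _ (by omega) (by omega))
  rw [show 1 + n + 2 = n + 2 + 1 by ring] at hlast
  constructor
  · rintro ⟨h0, h, hn⟩
    obtain ⟨h1, h2, h3⟩ := (res_eq_on_Icc_iff hp he n).1 h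
    exact ⟨⟨h0, h1⟩, (res_add_two_eq_iff_of_zero hp he h0 h1).1 h2, h3, (hlast h).1 hn⟩
  · rintro ⟨⟨h0, h1⟩, h2, h3, hn⟩
    have h := (res_eq_on_Icc_iff hp he n).2 ⟨h1, (res_add_two_eq_iff_of_zero hp he h0 h1).2 h2, h3⟩
    exact ⟨h0, h, (hlast h).2 hn⟩

theorem isWord_neg_iff (hp : p ∈ fareyPairs Q) (he : e ≠ 0) (n : ℕ) :
    IsWord e (-e) (n + 2) Q p ↔ ((p.1 : ZMod 3) = 0 ∧ (p.2 : ZMod 3) = e) ∧ idx Q p 0 % 3 = 1 ∧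
      (∀ l < n, idx Q p (1 + l) % 3 = 2) ∧ idx Q p (1 + n) % 3 = 0 := by
  simpa using isWord_add_two_iff hp he (-1) n

theorem isWord_zero_iff (hp : p ∈ fareyPairs Q) (he : e ≠ 0) (n : ℕ) :
    IsWord e 0 (n + 2) Q p ↔ ((p.1 : ZMod 3) = 0 ∧ (p.2 : ZMod 3) = e) ∧ idx Q p 0 % 3 = 1 ∧
      (∀ l < n, idx Q p (1 + l) % 3 = 2) ∧ idx Q p (1 + n) % 3 = 1 := by
  simpa [ZMod.val_one''] using isWord_add_two_iff hp he 0 n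

theorem isWord_one_iff (hp : p ∈ fareyPairs Q) (he : e ≠ 0) (b : ZMod 3) :
    IsWord e (b * e) 1 Q p ↔
      (p.1 : ZMod 3) = 0 ∧ (p.2 : ZMod 3) = e ∧ idx Q p 0 % 3 = b.val := by
  rw [IsWord, ← res_zero (Q := Q), ← res_one (Q := Q)]
  have hlast (h0 : res Q p 0 = 0) (h1 : res Q p 1 = e) :=
    res_add_two_eq_mul_iff hp he 0 b (by rw [h0, zero_mul]) h1
  simp only [zero_add] at hlast
  constructor
  · exact fun ⟨h0, h1, h2⟩ => ⟨h0, h1 1 le_rfl le_rfl, (hlast h0 (h1 1 le_rfl le_rfl)).1 h2⟩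
  · refine fun ⟨h0, h1, h2⟩ => ⟨h0, fun i hi hi' => ?_, (hlast h0 h1).2 h2⟩
    rwa [le_antisymm hi' hi]

theorem not_run_between_neg (hp : p ∈ fareyPairs Q) (he : e ≠ 0) (n : ℕ) (h0 : res Q p 0 = -e)
    (h : ∀ i, 1 ≤ i → i ≤ n + 2 → res Q p i = e) : res Q p (n + 3) ≠ -e := by
  intro hn
  obtain ⟨h1, h2, h3⟩ := (res_eq_on_Icc_iff hp he n).1 h
  have hfirst : idx Q p 0 % 3 = 0 := by
    simpa [h2] using res_add_two_eq_mul_iff hp he (-1) 1 (by simpa using h0) h1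
  have hlast : idx Q p (1 + n) % 3 = 0 := by
    have := res_add_two_eq_mul_iff hp he 1 (-1) (i := 1 + n)
      (by rw [one_mul, h _ (by omega) (by omega)]) (h _ (by omega) (by omega))
    rw [show 1 + n + 2 = n + 3 by ring] at this
    simpa [hn] using this
  have hfirst_pos := one_le_idx hp 0
  have hlast_pos := one_le_idx hp (1 + n)
  have hlt := idx_lt_three_of_twos_between hp (i := 0) (j := 1 + n) (by omega) (by omega)
    fun l hl hl' => by
      obtain ⟨j, rfl⟩ := Nat.exists_eq_add_of_le hl
      exact idx_eq_two_of_mod_three hp (by omega) h3 (by omega)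
  omega

end Residues

section Gaps

/-- The residue `c` occurs at the positions `0` and `r + 1` and not in between. -/
def IsGap (c : ZMod 3) (r Q : ℕ) (p : ℕ × ℕ) : Prop :=
  res Q p 0 = c ∧ (∀ i, 1 ≤ i → i ≤ r → res Q p i ≠ c) ∧ res Q p (r + 1) = c

variable {Q : ℕ} {p : ℕ × ℕ} {e : ZMod 3} {s : ℕ}

theorem ne_neg_iff (he : e ≠ 0) {x : ZMod 3} : x ≠ -e ↔ x = 0 ∨ x = e := by
  decide +revert

theorem IsGap.revPair (hp : p ∈ fareyPairs Q) {c : ZMod 3} {r : ℕ} (h : IsGap c r Q p) :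
    IsGap c r Q (revPair Q r p) := by
  obtain ⟨h0, h1, h2⟩ := h
  refine ⟨?_, fun i hi hi' => ?_, ?_⟩
  · rwa [res_revPair hp (by omega)]
  · rw [res_revPair hp (by omega)]
    exact h1 _ (by omega) (by omega)
  · rwa [res_revPair hp le_rfl, Nat.sub_self]

theorem res_eq_neg_of_res_succ_eq_zero (hp : p ∈ fareyPairs Q) {i : ℕ}
    (h : res Q p (i + 1) = 0) : res Q p i = -res Q p (i + 2) := by
  have hadd := res_add_res hp i
  rw [h, mul_zero] at hadd
  exact eq_neg_of_add_eq_zero_left hadd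

theorem IsWord.isGap_neg (hp : p ∈ fareyPairs Q) (he : e ≠ 0)
    (h : IsWord e (-e) (s + 1) Q (nextPair Q p)) : IsGap (-e) (s + 2) Q p := by
  obtain ⟨h0, h1, h2⟩ := h
  simp only [res_nextPair, zero_add] at h0 h1 h2
  refine ⟨by rw [res_eq_neg_of_res_succ_eq_zero hp h0, h1 1 le_rfl (by omega)],
    fun i hi hi' => (ne_neg_iff he).2 ?_, h2⟩
  match i, hi with
  | 1, _ => exact .inl h0
  | j + 2, _ => exact .inr (h1 (j + 1) (by omega) (by omega))

theorem IsWord.isGap_zero (hp : p ∈ fareyPairs Q) (he : e ≠ 0)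
    (h : IsWord e 0 s Q (nextPair Q p)) : IsGap (-e) (s + 2) Q p := by
  obtain ⟨h0, h1, h2⟩ := h
  simp only [res_nextPair, zero_add] at h0 h1 h2
  have hs : 1 ≤ s := by
    rw [Nat.one_le_iff_ne_zero]
    rintro rfl
    exact res_succ_ne_zero hp h0 h2
  refine ⟨by rw [res_eq_neg_of_res_succ_eq_zero hp h0, h1 1 le_rfl hs],
    fun i hi hi' => (ne_neg_iff he).2 ?_, ?_⟩
  · match i, hi with
    | 1, _ => exact .inl h0
    | j + 2, _ =>
      rcases hi'.eq_or_lt with hj | hj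
      · exact .inl (by rw [hj, h2])
      · exact .inr (h1 (j + 1) (by omega) (by omega))
  · rw [← h1 s hs le_rfl, res_eq_neg_of_res_succ_eq_zero hp h2, neg_neg]

theorem IsGap.res_eq (hp : p ∈ fareyPairs Q) (he : e ≠ 0) (h : IsGap (-e) (s + 2) Q p) {i : ℕ}
    (hi : 1 ≤ i) (his : i ≤ s) : res Q p (i + 1) = e := by
  have hmem (j : ℕ) (hj : 1 ≤ j) (hjs : j ≤ s + 2) := (ne_neg_iff he).1 (h.2.1 j hj hjs)
  refine (hmem (i + 1) (by omega) (by omega)).resolve_left fun hzero => ?_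
  refine h.2.1 i hi (by omega) ?_
  rw [res_eq_neg_of_res_succ_eq_zero hp hzero,
    (hmem (i + 2) (by omega) (by omega)).resolve_left (res_succ_ne_zero hp hzero)]

theorem IsGap.isWord_neg (hp : p ∈ fareyPairs Q) (he : e ≠ 0) (h : IsGap (-e) (s + 2) Q p)
    (hfirst : res Q p 1 = 0) (hlast : res Q p (s + 2) = e) :
    IsWord e (-e) (s + 1) Q (nextPair Q p) := by
  refine ⟨hfirst, fun i hi hi' => ?_, h.2.2⟩
  rcases hi'.eq_or_lt with rfl | hi'
  · exact hlast
  · exact h.res_eq hp he hi (Nat.lt_succ_iff.1 hi')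

theorem IsGap.first_eq_zero_or_last_eq_zero (hp : p ∈ fareyPairs Q) (he : e ≠ 0)
    (h : IsGap (-e) (s + 2) Q p) : res Q p 1 = 0 ∨ res Q p (s + 2) = 0 := by
  by_contra! hne
  refine not_run_between_neg hp he s h.1 (fun i hi hi' => ?_) h.2.2
  refine ((ne_neg_iff he).1 (h.2.1 i hi hi')).resolve_left fun hzero => ?_
  match i, hi with
  | 1, _ => exact hne.1 hzero
  | j + 2, _ =>
    rcases hi'.eq_or_lt with hj | hj
    · exact hne.2 (hj ▸ hzero)
    · exact he ((h.res_eq hp he (i := j + 1) (by omega) (by omega)).symm.trans hzero)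

theorem isGap_iff (hp : p ∈ fareyPairs Q) (he : e ≠ 0) (s : ℕ) :
    IsGap (-e) (s + 2) Q p ↔ (IsWord e (-e) (s + 1) Q (nextPair Q p) ∨
      IsWord e (-e) (s + 1) Q (nextPair Q (revPair Q (s + 2) p))) ∨
      IsWord e 0 s Q (nextPair Q p) := by
  constructor
  · intro h
    have hmem (j : ℕ) (hj : 1 ≤ j) (hjs : j ≤ s + 2) := (ne_neg_iff he).1 (h.2.1 j hj hjs)
    rcases hmem 1 le_rfl (by omega) with hfirst | hfirst
    · rcases hmem (s + 2) (by omega) le_rfl with hlast | hlast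
      · exact .inr ⟨hfirst, fun i => h.res_eq hp he, hlast⟩
      · exact .inl (.inl (h.isWord_neg hp he hfirst hlast))
    · refine .inl (.inr ((h.revPair hp).isWord_neg (revPair_mem hp _) he ?_ ?_))
      · rw [res_revPair hp (by omega)]
        exact (h.first_eq_zero_or_last_eq_zero hp he).resolve_left (hfirst ▸ he)
      · rwa [res_revPair hp (by omega), Nat.add_sub_cancel_left]
  · rintro ((h | h) | h)
    · exact h.isGap_neg hp he
    · simpa only [revPair_revPair hp] using
        (h.isGap_neg (revPair_mem hp _) he).revPair (revPair_mem hp _)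
    · exact h.isGap_zero hp he

theorem HasPairDensity.nextPair {m : ℕ} {C : ℕ → ℕ × ℕ → Prop} {a E : ℝ}
    (h : HasPairDensity m C a E) : HasPairDensity m (fun Q p => C Q (nextPair Q p)) a E :=
  h.congr fun Q => pairCount_nextPair Q (C Q)

theorem HasPairDensity.revPair {m : ℕ} {C : ℕ → ℕ × ℕ → Prop} {a E : ℝ}
    (h : HasPairDensity m C a E) (k : ℕ) :
    HasPairDensity m (fun Q p => C Q (revPair Q k p)) a E :=
  h.congr fun Q => pairCount_revPair Q k (C Q)

theorem hasPairDensity_isGap_add_two (he : e ≠ 0) {a a' E E' : ℝ}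
    (h : HasPairDensity 3 (IsWord e (-e) (s + 1)) a E)
    (h' : HasPairDensity 3 (IsWord e 0 s) a' E') :
    HasPairDensity 3 (IsGap (-e) (s + 2)) (a + a + a') (E + E + E') := by
  have hrev {Q : ℕ} {p : ℕ × ℕ} (hp : p ∈ fareyPairs Q)
      (h : IsWord e (-e) (s + 1) Q (nextPair Q (revPair Q (s + 2) p))) : res Q p 1 = e := by
    have := h.2.1 (s + 1) (by omega) le_rfl
    rwa [res_nextPair, res_revPair hp (by omega), Nat.add_sub_cancel_left] at this
  refine ((h.nextPair.or (h.nextPair.revPair (s + 2)) ?_).or h'.nextPair ?_).congr fun Q =>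
    pairCount_congr fun p hp => isGap_iff hp he s
  · exact fun Q p hp h1 h2 => he ((hrev hp h2).symm.trans h1.1)
  · rintro Q p hp (h1 | h1) h2
    · exact he ((h1.2.1 (s + 1) (by omega) le_rfl).symm.trans h2.2.2)
    · exact he ((hrev hp h1).symm.trans h2.1)

theorem hasPairDensity_isGap_zero (he : e ≠ 0) : HasPairDensity 3 (IsGap (-e) 0) (1 / 2) 3 :=
  (hasPairDensity_residues (α := -e) (β := -e)
    (isCoprime_self.2 (neg_ne_zero.2 he).isUnit)).congr fun Q => pairCount_congr fun p _ => by
      rw [IsGap, res_zero, zero_add, res_one]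
      exact and_congr_right fun _ => and_iff_right fun i hi hi' => by omega

theorem hasPairDensity_isGap_one (he : e ≠ 0) :
    HasPairDensity 3 (IsGap (-e) 1) (1 / 6 + classArea 2) 34 :=
  (hasPairDensity_idx_mod_one (α := -e) (β := e)
    (isCoprime_self.2 he.isUnit).neg_left).congr fun Q => pairCount_congr fun p hp => by
      rw [IsGap, ← res_zero (Q := Q), ← res_one (Q := Q)]
      have hlast (h0 : res Q p 0 = -e) (h1 : res Q p 1 = e) :
          res Q p 2 = -e ↔ idx Q p 0 % 3 = 1 := by
        simpa [show (-1 + -1 : ZMod 3).val = 1 from rfl] using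
          res_add_two_eq_mul_iff hp he (-1) (-1) (by simpa using h0) h1
      constructor
      · rintro ⟨h0, h1, h2⟩
        have hmid : res Q p 1 = e := by
          refine ((ne_neg_iff he).1 (h1 1 le_rfl le_rfl)).resolve_left fun hzero => ?_
          have := res_eq_neg_of_res_succ_eq_zero hp hzero
          rw [h0, h2, neg_neg] at this
          exact (ne_neg_iff he).2 (.inr rfl) this.symm
        exact ⟨h0, hmid, (hlast h0 hmid).1 h2⟩
      · rintro ⟨h0, h1, h2⟩
        refine ⟨h0, fun i hi hi' => (ne_neg_iff he).2 (.inr ?_), (hlast h0 h1).2 h2⟩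
        rwa [le_antisymm hi' hi]

end Gaps

section WordDensities

variable {Q : ℕ} {p : ℕ × ℕ} {e : ZMod 3} {n : ℕ}

theorem hasPairDensity_isWord_neg_one (he : e ≠ 0) :
    HasPairDensity 3 (IsWord e (-e) 1) (classArea 0) 26 :=
  (hasPairDensity_idx_mod_two (α := 0) (isCoprime_zero_left.2 he.isUnit)).congr fun _ =>
    pairCount_congr fun _ hp => by
      simpa using isWord_one_iff hp he (-1)

theorem hasPairDensity_isWord_zero_one (he : e ≠ 0) :
    HasPairDensity 3 (IsWord e 0 1) (classArea 1) 26 :=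
  (hasPairDensity_idx_mod_zero (α := 0) (isCoprime_zero_left.2 he.isUnit)).congr fun _ =>
    pairCount_congr fun _ hp => by
      simpa using isWord_one_iff hp he 0

theorem hasPairDensity_isWord_zero_zero : HasPairDensity 3 (IsWord e 0 0) 0 0 :=
  hasPairDensity_of_false fun _ _ hp h => res_succ_ne_zero hp h.1 h.2.2

theorem idx_zero_eq_one_iff (hp : p ∈ fareyPairs Q) :
    idx Q p 0 = 1 ↔ Q + den Q p 2 < 2 * den Q p 1 := by
  have htwo := le_idx_iff (revPair_mem hp 1) 0 2
  rw [idx_revPair hp le_rfl, den_revPair hp (by omega), den_revPair hp (by omega)] at htwo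
  have hone := one_le_idx hp 0
  simp only [Nat.sub_self, zero_add, Nat.reduceAdd, Nat.reduceSub, tsub_zero] at htwo
  omega

theorem residues_nextPair_iff (hp : p ∈ fareyPairs Q) (h : idx Q p 0 % 3 = 1) :
    ((nextPair Q p).1 : ZMod 3) = e ∧ ((nextPair Q p).2 : ZMod 3) = e ↔
      (p.1 : ZMod 3) = 0 ∧ (p.2 : ZMod 3) = e := by
  simp only [← res_zero (Q := Q), ← res_one (Q := Q), res_nextPair]
  have hidx : (idx Q p 0 : ZMod 3) = 1 := by
    rw [← Nat.cast_one, ZMod.natCast_eq_natCast_iff', h]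
  have hadd := res_add_res hp 0
  rw [hidx, one_mul] at hadd
  constructor
  · rintro ⟨h1, h2⟩
    rw [h1, h2] at hadd
    exact ⟨by simpa using hadd, h1⟩
  · rintro ⟨h0, h1⟩
    rw [h0, h1, zero_add] at hadd
    exact ⟨h1, hadd⟩

theorem idx_zero_eq_one_of_twos (hp : p ∈ fareyPairs Q) (h0 : idx Q p 0 % 3 = 1)
    (h : ∀ l < n, idx Q p (1 + l) = 2) (hn : 3 ≤ idx Q p (1 + n)) : idx Q p 0 = 1 := by
  by_contra hne
  refine (idx_lt_three_of_twos_between hp (i := 0) (j := 1 + n) (by omega) (by omega)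
    fun l hl hl' => ?_).not_ge hn
  obtain ⟨j, rfl⟩ := Nat.exists_eq_add_of_le hl
  exact h j (by omega)

section Neg

theorem isWord_neg_iff_idx (hp : p ∈ fareyPairs Q) (he : e ≠ 0) (n : ℕ) :
    IsWord e (-e) (n + 2) Q p ↔ ((p.1 : ZMod 3) = 0 ∧ (p.2 : ZMod 3) = e) ∧
      (idx Q p 0 = 1 ∧ ∀ l < n, idx Q p (1 + l) = 2) ∧ idx Q p (1 + n) % 3 = 0 := by
  rw [isWord_neg_iff hp he]
  refine and_congr_right fun _ => ⟨fun ⟨h0, h, hn⟩ => ?_, fun ⟨⟨h0, h⟩, hn⟩ => ?_⟩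
  · have hpos := one_le_idx hp (1 + n)
    have htwos (l : ℕ) (hl : l < n) := idx_eq_two_of_mod_three hp (by omega) h hl
    exact ⟨⟨idx_zero_eq_one_of_twos hp h0 htwos (by omega), htwos⟩, hn⟩
  · exact ⟨by rw [h0], fun l hl => by rw [h l hl], hn⟩

theorem isWord_neg_iff_lt (hp : p ∈ fareyPairs Q) (he : e ≠ 0) (hn : 1 ≤ n) :
    IsWord e (-e) (n + 2) Q p ↔ (p.1 : ZMod 3) = 0 ∧ (p.2 : ZMod 3) = e ∧
      Q + (2 * n + 1) * p.1 < 2 * p.2 ∧ 2 * p.2 ≤ Q + (2 * n + 3) * p.1 ∧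
      Q + (3 * n + 4) * p.1 < 3 * p.2 := by
  rw [isWord_neg_iff_idx hp he, idx_one_twos_iff hp, and_assoc]
  refine and_congr_right fun _ => and_congr_right fun _ => and_congr_right fun h => ?_
  have hthree := succ_le_idx_after_twos_iff hp h 2
  have hfour := succ_le_idx_after_twos_iff hp h 3
  rw [show 2 * (n + 1) + 1 = 2 * n + 3 by ring] at hthree
  rw [show 3 * (n + 1) + 1 = 3 * n + 4 by ring] at hfour
  have hlt := idx_after_twos_lt_five hp hn h
  have hge := two_le_idx_after_twos hp h
  omega

theorem hasPairDensity_isWord_neg_two (he : e ≠ 0) :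
    HasPairDensity 3 (IsWord e (-e) 2) (classArea 1 - 1 / 35) 46 :=
  (hasPairDensity_idx_mod_zero_inter_wedge (β := e)
    (isCoprime_self.2 he.isUnit)).nextPair.congr fun Q => pairCount_congr fun p hp => by
      rw [isWord_neg_iff_idx hp he 0, ← and_assoc (a := ((nextPair Q p).1 : ZMod 3) = e),
        idx_nextPair]
      change _ ↔ _ ∧ idx Q p 1 % 3 = 0 ∧ Q + den Q p 2 < 2 * den Q p 1
      rw [← idx_zero_eq_one_iff hp]
      constructor
      · rintro ⟨hres, ⟨h0, -⟩, h1⟩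
        exact ⟨(residues_nextPair_iff hp (by rw [h0])).2 hres, h1, h0⟩
      · rintro ⟨hres, h1, h0⟩
        exact ⟨(residues_nextPair_iff hp (by rw [h0])).1 hres, ⟨h0, by simp⟩, h1⟩

theorem hasPairDensity_isWord_neg_three (he : e ≠ 0) :
    HasPairDensity 3 (IsWord e (-e) 3) (1 / 70) 6 :=
  (hasPairDensity_wedge_three_diff_wedge_two (α := 0)
    (isCoprime_zero_left.2 he.isUnit)).congr fun Q => pairCount_congr fun p hp => by
      rw [isWord_neg_iff_lt hp he (n := 1) le_rfl]
      refine and_congr_right fun _ => and_congr_right fun _ => ?_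
      have := mem_fareyPairs.1 hp
      omega

theorem hasPairDensity_isWord_neg_add_two (he : e ≠ 0) (hn : 2 ≤ n) :
    HasPairDensity 3 (IsWord e (-e) (n + 2))
      (2 / ((2 * n + 1) * (2 * n + 3) * (2 * n + 5))) 6 := by
  convert (hasPairDensity_wedge_two_diff (α := 0) (isCoprime_zero_left.2 he.isUnit)
    (Nat.le_add_left 1 n)).congr fun Q => pairCount_congr fun p hp => ?_ using 1
  · push_cast
    ring
  · rw [isWord_neg_iff_lt hp he (by omega), show 2 * (n + 1) - 1 = 2 * n + 1 by omega,
      show 2 * (n + 1) + 1 = 2 * n + 3 by ring]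
    refine and_congr_right fun _ => and_congr_right fun _ => and_congr_right fun h =>
      and_iff_left ?_
    have hle := (mem_fareyPairs.1 hp).1.2.2
    nlinarith [Nat.mul_le_mul_right p.1 hn]

end Neg

section Zero

theorem IsWord.revPair (hp : p ∈ fareyPairs Q) {s : ℕ} (h : IsWord e 0 s Q p) :
    IsWord e 0 s Q (revPair Q s p) := by
  obtain ⟨h0, h1, h2⟩ := h
  refine ⟨?_, fun i hi hi' => ?_, ?_⟩
  · rwa [res_revPair hp (by omega)]
  · rw [res_revPair hp (by omega)]
    exact h1 _ (by omega) (by omega)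
  · rwa [res_revPair hp le_rfl, Nat.sub_self]

/-- The words `0, e, …, e, 0` with indices `1, 2, …, 2` up to the last one. Up to reversal, these
are all the words `0, e, …, e, 0` whose inner indices are `2`. -/
def IsTwosWord (e : ZMod 3) (n Q : ℕ) (p : ℕ × ℕ) : Prop :=
  IsWord e 0 (n + 2) Q p ∧ idx Q p 0 = 1 ∧ ∀ l < n, idx Q p (1 + l) = 2

theorem isTwosWord_iff (hp : p ∈ fareyPairs Q) (he : e ≠ 0) (n : ℕ) :
    IsTwosWord e n Q p ↔ ((p.1 : ZMod 3) = 0 ∧ (p.2 : ZMod 3) = e) ∧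
      (idx Q p 0 = 1 ∧ ∀ l < n, idx Q p (1 + l) = 2) ∧ idx Q p (1 + n) % 3 = 1 := by
  rw [IsTwosWord, isWord_zero_iff hp he]
  constructor
  · exact fun ⟨⟨hres, _, _, hn⟩, h⟩ => ⟨hres, h, hn⟩
  · exact fun ⟨hres, h, hn⟩ => ⟨⟨hres, by rw [h.1], fun l hl => by rw [h.2 l hl], hn⟩, h⟩

theorem IsTwosWord.four_le_idx (hp : p ∈ fareyPairs Q) (he : e ≠ 0) (h : IsTwosWord e n Q p) :
    4 ≤ idx Q p (1 + n) := by
  obtain ⟨-, htwos, hn⟩ := (isTwosWord_iff hp he n).1 h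
  have hge := two_le_idx_after_twos hp ((idx_one_twos_iff hp n).1 htwos)
  omega

theorem isWord_zero_and_twos_iff (hp : p ∈ fareyPairs Q) (he : e ≠ 0) (n : ℕ) :
    (IsWord e 0 (n + 2) Q p ∧ ∀ l < n, idx Q p (1 + l) = 2) ↔
      IsTwosWord e n Q p ∨ IsTwosWord e n Q (FareyGap.revPair Q (n + 2) p) := by
  have hfirst : idx Q (FareyGap.revPair Q (n + 2) p) 0 = idx Q p (1 + n) := by
    rw [idx_revPair hp (by omega), show n + 2 - 1 - 0 = 1 + n by omega]
  have hmid (l : ℕ) (hl : l < n) :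
      idx Q (FareyGap.revPair Q (n + 2) p) (1 + l) = idx Q p (1 + (n - 1 - l)) := by
    rw [idx_revPair hp (by omega), show n + 2 - 1 - (1 + l) = 1 + (n - 1 - l) by omega]
  constructor
  · rintro ⟨h, htwos⟩
    by_cases h0 : idx Q p 0 = 1
    · exact .inl ⟨h, h0, htwos⟩
    · refine .inr ⟨h.revPair hp, ?_, fun l hl => (hmid l hl).trans (htwos _ (by omega))⟩
      obtain ⟨-, hmod, -, hn⟩ := (isWord_zero_iff hp he n).1 h
      have hlt := mt (idx_zero_eq_one_of_twos hp hmod htwos) h0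
      omega
  · rintro (⟨h, -, htwos⟩ | ⟨h, -, htwos⟩)
    · exact ⟨h, htwos⟩
    · refine ⟨by simpa only [revPair_revPair hp] using h.revPair (revPair_mem hp _),
        fun l hl => ?_⟩
      rw [← htwos (n - 1 - l) (by omega), hmid _ (by omega),
        show n - 1 - (n - 1 - l) = l by omega]

theorem HasPairDensity.isWord_zero_and_twos (he : e ≠ 0) {a E : ℝ}
    (h : HasPairDensity 3 (IsTwosWord e n) a E) :
    HasPairDensity 3 (fun Q p => IsWord e 0 (n + 2) Q p ∧ ∀ l < n, idx Q p (1 + l) = 2)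
      (a + a) (E + E) := by
  refine (h.or (h.revPair (n + 2)) fun Q p hp h1 h2 => ?_).congr fun Q =>
    pairCount_congr fun p hp => isWord_zero_and_twos_iff hp he n
  have hlast := h2.four_le_idx (revPair_mem hp _) he
  rw [idx_revPair hp (by omega), show n + 2 - 1 - (1 + n) = 0 by omega, h1.2.1] at hlast
  omega

theorem hasPairDensity_isTwosWord_zero (he : e ≠ 0) :
    HasPairDensity 3 (IsTwosWord e 0) (classArea 2 - 1 / 210) 36 :=
  (hasPairDensity_idx_mod_one_inter_wedge (β := e)
    (isCoprime_self.2 he.isUnit)).nextPair.congr fun Q => pairCount_congr fun p hp => by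
      rw [← and_assoc (a := ((nextPair Q p).1 : ZMod 3) = e), idx_nextPair]
      change _ ↔ _ ∧ 4 ≤ idx Q p 1 ∧ idx Q p 1 % 3 = 1 ∧ Q + den Q p 2 < 2 * den Q p 1
      rw [← idx_zero_eq_one_iff hp]
      constructor
      · intro h
        obtain ⟨hres, ⟨h0, -⟩, h1⟩ := (isTwosWord_iff hp he 0).1 h
        exact ⟨(residues_nextPair_iff hp (by rw [h0])).2 hres, h.four_le_idx hp he, h1, h0⟩
      · rintro ⟨hres, -, h1, h0⟩
        exact (isTwosWord_iff hp he 0).2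
          ⟨(residues_nextPair_iff hp (by rw [h0])).1 hres, ⟨h0, by simp⟩, h1⟩

theorem hasPairDensity_isTwosWord_one (he : e ≠ 0) :
    HasPairDensity 3 (IsTwosWord e 1) (1 / 210) 6 :=
  (hasPairDensity_wedge_two_diff_wedge_three (α := 0)
    (isCoprime_zero_left.2 he.isUnit)).congr fun Q => pairCount_congr fun p hp => by
      rw [isTwosWord_iff hp he, and_assoc, idx_one_twos_iff hp]
      refine and_congr_right fun _ => and_congr_right fun _ => and_congr_right fun h => ?_
      have hlt := idx_after_twos_lt_five hp le_rfl h
      have hge := two_le_idx_after_twos hp h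
      have hfour := succ_le_idx_after_twos_iff hp h 3
      norm_num at hlt hge hfour ⊢
      omega

theorem not_isTwosWord (hp : p ∈ fareyPairs Q) (he : e ≠ 0) (hn : 2 ≤ n) :
    ¬ IsTwosWord e n Q p := fun h =>
  (h.four_le_idx hp he).not_gt
    (idx_after_twos_lt_four hp hn ((idx_one_twos_iff hp n).1 h.2))

theorem hasPairDensity_isWord_zero_two (he : e ≠ 0) :
    HasPairDensity 3 (IsWord e 0 2) (classArea 2 - 1 / 210 + (classArea 2 - 1 / 210))
      (36 + 36) :=
  ((hasPairDensity_isTwosWord_zero he).isWord_zero_and_twos he).congr fun Q =>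
    pairCount_congr fun p _ => by simp

theorem hasPairDensity_isWord_zero_three_of_five_le (he : e ≠ 0) :
    HasPairDensity 3 (fun Q p => IsWord e 0 3 Q p ∧ 5 ≤ idx Q p 1) (classArea 0 - 1 / 6) 36 :=
  (hasPairDensity_idx_mod_two_of_five_le (β := e)
    (isCoprime_self.2 he.isUnit)).nextPair.congr fun Q => pairCount_congr fun p hp => by
      rw [isWord_zero_iff hp he 1, ← and_assoc (a := ((nextPair Q p).1 : ZMod 3) = e),
        idx_nextPair]
      constructor
      · rintro ⟨⟨hres, h0, h, -⟩, h1⟩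
        exact ⟨(residues_nextPair_iff hp h0).2 hres, h1, h 0 one_pos⟩
      · rintro ⟨hres, h1, h⟩
        have h0 : idx Q p 0 % 3 = 1 := by rw [idx_eq_one_of_five_le_succ hp h1]
        refine ⟨⟨(residues_nextPair_iff hp h0).1 hres, h0, fun l hl => ?_, ?_⟩, h1⟩
        · rwa [Nat.lt_one_iff.1 hl]
        · rw [idx_succ_eq_one_of_five_le hp h1]

theorem hasPairDensity_isWord_zero_three (he : e ≠ 0) :
    HasPairDensity 3 (IsWord e 0 3) (classArea 0 - 1 / 6 + (1 / 210 + 1 / 210))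
      (36 + (6 + 6)) := by
  refine ((hasPairDensity_isWord_zero_three_of_five_le he).or
    ((hasPairDensity_isTwosWord_one he).isWord_zero_and_twos he) fun Q p _ h1 h2 => ?_).congr
    fun Q => pairCount_congr fun p hp => ?_
  · have htwo : idx Q p 1 = 2 := h2.2 0 one_pos
    exact h1.2.not_gt (by omega)
  · rw [← and_or_left, iff_self_and]
    intro h
    have hmod := ((isWord_zero_iff hp he 1).1 h).2.2.1 0 one_pos
    rw [add_zero] at hmod
    simp only [Nat.lt_one_iff, forall_eq, add_zero]
    omega

theorem idx_eq_two_of_isWord_zero (hp : p ∈ fareyPairs Q) (he : e ≠ 0) (hn : 2 ≤ n)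
    (h : IsWord e 0 (n + 2) Q p) {l : ℕ} (hl : l < n) : idx Q p (1 + l) = 2 := by
  obtain ⟨-, -, hmid, -⟩ := (isWord_zero_iff hp he n).1 h
  have hmod := hmid l hl
  by_contra hne
  match l with
  | 0 =>
    rw [add_zero] at hmod hne
    have hnext := hmid 1 hn
    rw [idx_succ_eq_one_of_five_le hp (i := 1) (by omega)] at hnext
    omega
  | j + 1 =>
    have hprev := hmid j (by omega)
    rw [idx_eq_one_of_five_le_succ hp (by rw [add_assoc]; omega)] at hprev
    omega

theorem hasPairDensity_isWord_zero_add_two (he : e ≠ 0) (hn : 2 ≤ n) :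
    HasPairDensity 3 (IsWord e 0 (n + 2)) 0 0 :=
  hasPairDensity_of_false fun _ _ hp h => by
    rcases (isWord_zero_and_twos_iff hp he n).1
      ⟨h, fun _ => idx_eq_two_of_isWord_zero hp he hn h⟩ with h | h
    · exact not_isTwosWord hp he hn h
    · exact not_isTwosWord (revPair_mem hp _) he hn h

end Zero

end WordDensities

theorem HasPairDensity.mono {m : ℕ} {C : ℕ → ℕ × ℕ → Prop} {a E E' : ℝ}
    (h : HasPairDensity m C a E) (hE : E ≤ E') : HasPairDensity m C a E' := fun Q =>
  (h Q).trans <| mul_le_mul_of_nonneg_right hE <|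
    mul_nonneg Q.cast_nonneg (add_nonneg zero_le_one (Real.log_natCast_nonneg Q))

theorem nulim_add_six (n : ℕ) :
    3 / 2 * nulim (n + 6) = 4 / ((2 * n + 7) * (2 * n + 9) * (2 * n + 11)) := by
  simp only [nulim]
  push_cast
  rw [show 2 * ((n : ℝ) + 6) - 5 = 2 * n + 7 by ring,
    show 2 * ((n : ℝ) + 6) - 3 = 2 * n + 9 by ring,
    show 2 * ((n : ℝ) + 6) - 1 = 2 * n + 11 by ring]
  field_simp
  ring

theorem hasPairDensity_isGap {e : ZMod 3} (he : e ≠ 0) (r : ℕ) :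
    HasPairDensity 3 (IsGap (-e) r) (3 / 2 * nulim r) 200 := by
  have of_density {a E : ℝ} (h : HasPairDensity 3 (IsGap (-e) r) a E)
      (ha : a = 3 / 2 * nulim r) (hE : E ≤ 200) :
      HasPairDensity 3 (IsGap (-e) r) (3 / 2 * nulim r) 200 := ha ▸ h.mono hE
  match r with
  | 0 => exact of_density (hasPairDensity_isGap_zero he) (by norm_num [nulim]) (by norm_num)
  | 1 =>
    exact of_density (hasPairDensity_isGap_one he) (by simp only [nulim, classArea]; ring)
      (by norm_num)
  | 2 =>
    exact of_density (hasPairDensity_isGap_add_two he (hasPairDensity_isWord_neg_one he)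
      hasPairDensity_isWord_zero_zero) (by simp only [nulim, classArea]; ring) (by norm_num)
  | 3 =>
    exact of_density (hasPairDensity_isGap_add_two he (hasPairDensity_isWord_neg_two he)
      (hasPairDensity_isWord_zero_one he)) (by simp only [nulim, classArea]; ring) (by norm_num)
  | 4 =>
    exact of_density (hasPairDensity_isGap_add_two he (hasPairDensity_isWord_neg_three he)
      (hasPairDensity_isWord_zero_two he)) (by simp only [nulim, classArea]; ring) (by norm_num)
  | 5 =>
    exact of_density (hasPairDensity_isGap_add_two he
      (hasPairDensity_isWord_neg_add_two he (n := 2) le_rfl)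
      (hasPairDensity_isWord_zero_three he))
      (by simp only [nulim, classArea]; push_cast; ring) (by norm_num)
  | n + 6 =>
    refine of_density (hasPairDensity_isGap_add_two he
      (hasPairDensity_isWord_neg_add_two he (n := n + 3) (by omega))
      (hasPairDensity_isWord_zero_add_two he (n := n + 2) (by omega))) ?_ (by norm_num)
    rw [nulim_add_six]
    push_cast
    ring

section FareyNeighbours

theorem mem_farey {Q : ℕ} {x : ℚ} : x ∈ farey Q ↔ 0 ≤ x ∧ x ≤ 1 ∧ x.den ≤ Q := by
  simp only [farey, mem_biUnion, Finset.mem_Icc, mem_image, Finset.mem_range]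
  constructor
  · rintro ⟨q, ⟨hq, hqQ⟩, a, ha, rfl⟩
    have hq' : (0 : ℚ) < q := Nat.cast_pos.2 hq
    refine ⟨by positivity, ?_, ?_⟩
    · rw [div_le_one hq']
      exact_mod_cast Nat.le_of_lt_succ ha
    · have hdvd := Rat.den_dvd (a : ℤ) (q : ℤ)
      rw [Rat.divInt_eq_div] at hdvd
      push_cast at hdvd
      exact (Nat.le_of_dvd hq (by exact_mod_cast hdvd)).trans hqQ
  · rintro ⟨h0, h1, hx⟩
    have hnum : (x.num.toNat : ℤ) = x.num := Int.toNat_of_nonneg (Rat.num_nonneg.2 h0)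
    refine ⟨x.den, ⟨x.den_pos, hx⟩, x.num.toNat, ?_, ?_⟩
    · have hle : x.num ≤ x.den := by simpa using (Rat.le_iff _ _).1 h1
      omega
    · rw [← Int.cast_natCast x.num.toNat, hnum, Rat.num_div_den]

/-- The rationals `x < y` are neighbours in the Farey sequence of order `Q`, extended periodically
to the whole line. -/
def Adj (Q : ℕ) (x y : ℚ) : Prop :=
  y.num * x.den - x.num * y.den = 1 ∧ (x.den, y.den) ∈ fareyPairs Q

variable {Q : ℕ} {x y z : ℚ}

theorem Adj.lt (h : Adj Q x y) : x < y := by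
  rw [Rat.lt_iff]
  linarith [h.1]

theorem Adj.den_left_le (h : Adj Q x y) : x.den ≤ Q := (mem_fareyPairs.1 h.2).1.1.2

theorem Adj.den_right_le (h : Adj Q x y) : y.den ≤ Q := (mem_fareyPairs.1 h.2).1.2.2

theorem Adj.not_between (h : Adj Q x y) (hz : z.den ≤ Q) : ¬ (x < z ∧ z < y) := by
  rintro ⟨hxz, hzy⟩
  rw [Rat.lt_iff] at hxz hzy
  have hsum : Q < x.den + y.den := (mem_fareyPairs.1 h.2).2.1
  have hden : (z.den : ℤ) = x.den * (y.num * z.den - z.num * y.den) +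
      y.den * (z.num * x.den - x.num * z.den) := by
    linear_combination (-(z.den : ℤ)) * h.1
  have hx : (x.den : ℤ) * 1 ≤ x.den * (y.num * z.den - z.num * y.den) :=
    mul_le_mul_of_nonneg_left (by linarith) x.den.cast_nonneg
  have hy : (y.den : ℤ) * 1 ≤ y.den * (z.num * x.den - x.num * z.den) :=
    mul_le_mul_of_nonneg_left (by linarith) y.den.cast_nonneg
  omega

theorem Adj.unique (h : Adj Q x y) (h' : Adj Q x z) : y = z := by
  rcases lt_trichotomy y z with hlt | heq | hgt
  · exact absurd ⟨h.lt, hlt⟩ (h'.not_between h.den_right_le)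
  · exact heq
  · exact absurd ⟨h'.lt, hgt⟩ (h.not_between h'.den_right_le)

theorem Adj.le_one (h : Adj Q x y) (hx : x < 1) : y ≤ 1 := by
  by_contra! hy
  exact h.not_between (z := 1) (x.den_pos.trans_le h.den_left_le) ⟨hx, hy⟩

theorem isCoprime_num_den (x : ℚ) : IsCoprime x.num (x.den : ℤ) :=
  Int.isCoprime_iff_gcd_eq_one.2 x.reduced

theorem Adj.nextPair_eq (h : Adj Q x y) (h' : Adj Q y z) :
    nextPair Q (x.den, y.den) = (y.den, z.den) := by
  have hdvd : (y.den : ℤ) ∣ (x.den + z.den) * y.num :=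
    ⟨x.num + z.num, by linear_combination h.1 - h'.1⟩
  obtain ⟨k, hk⟩ : y.den ∣ x.den + z.den := by
    exact_mod_cast (isCoprime_num_den y).symm.dvd_of_dvd_mul_right hdvd
  exact nextPair_eq_of_add_eq (by rw [hk, mul_comm]) h'.den_right_le (mem_fareyPairs.1 h'.2).2.1

theorem num_div_and_den_div {m : ℤ} {a : ℕ} (ha : 0 < a) (h : IsCoprime m (a : ℤ)) :
    ((m : ℚ) / a).num = m ∧ ((m : ℚ) / a).den = a := by
  have ha' : (0 : ℤ) < a := by exact_mod_cast ha
  have hcop : Nat.Coprime m.natAbs (a : ℤ).natAbs := Int.isCoprime_iff_gcd_eq_one.1 h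
  exact ⟨by exact_mod_cast Rat.num_div_eq_of_coprime ha' hcop,
    by exact_mod_cast Rat.den_div_eq_of_coprime ha' hcop⟩

theorem exists_adj (hx : x.den ≤ Q) : ∃ y, Adj Q x y := by
  obtain ⟨u, w, huw⟩ := isCoprime_num_den x
  have hpos : (0 : ℤ) < x.den := by exact_mod_cast x.den_pos
  have hdiv := Int.emod_add_mul_ediv (Q + u) x.den
  have hnonneg := Int.emod_nonneg (Q + u) hpos.ne'
  have hlt := Int.emod_lt_of_pos (Q + u) hpos
  -- `b` is the largest solution of `b * x.num ≡ -1` modulo `x.den` up to `Q`.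
  obtain ⟨b, hb⟩ : ∃ b : ℕ, (b : ℤ) = Q - (Q + u) % x.den :=
    ⟨(Q - (Q + u) % x.den).toNat, by omega⟩
  set n : ℤ := w + x.num * ((Q + u) / x.den) with hn
  have hdet : n * x.den - x.num * b = 1 := by
    rw [hn, hb]
    linear_combination huw + x.num * hdiv
  obtain ⟨hnum, hden⟩ := num_div_and_den_div (m := n) (a := b) (by omega)
    ⟨x.den, -x.num, by linarith⟩
  refine ⟨(n : ℚ) / b, by rw [hnum, hden, hdet], ?_⟩
  rw [hden, mem_fareyPairs]
  exact ⟨⟨⟨x.den_pos, hx⟩, by omega, by omega⟩, by dsimp only; omega,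
    Nat.isCoprime_iff_coprime.1 ⟨n, -x.num, by linarith⟩⟩

theorem exists_adj_of_mem {p : ℕ × ℕ} (hp : p ∈ fareyPairs Q) :
    ∃ x y : ℚ, 0 ≤ x ∧ x < 1 ∧ Adj Q x y ∧ (x.den, y.den) = p := by
  obtain ⟨⟨⟨ha, -⟩, hb, -⟩, -, hcop⟩ := mem_fareyPairs.1 hp
  obtain ⟨u, w, huw⟩ := Nat.isCoprime_iff_coprime.2 hcop.symm
  have ha' : (0 : ℤ) < p.1 := by exact_mod_cast ha
  have hdiv := Int.emod_add_mul_ediv (-u) p.1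
  set m : ℤ := (-u) % p.1
  set n : ℤ := w - (-u) / p.1 * p.2 with hn
  have hdet : n * p.1 - m * p.2 = 1 := by
    linear_combination huw - p.2 * hdiv + p.1 * hn
  obtain ⟨hnum_x, hden_x⟩ := num_div_and_den_div ha (m := m) ⟨-p.2, n, by linarith⟩
  obtain ⟨hnum_y, hden_y⟩ := num_div_and_den_div hb (m := n) ⟨p.1, -m, by linarith⟩
  have hden : (((m : ℚ) / p.1).den, ((n : ℚ) / p.2).den) = p := by rw [hden_x, hden_y]
  refine ⟨(m : ℚ) / p.1, (n : ℚ) / p.2, ?_, ?_, ⟨?_, hden.symm ▸ hp⟩, hden⟩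
  · exact div_nonneg (by exact_mod_cast Int.emod_nonneg _ ha'.ne') p.1.cast_nonneg
  · rw [div_lt_one (by exact_mod_cast ha)]
    exact_mod_cast Int.emod_lt_of_pos _ ha'
  · rw [hnum_x, hden_x, hnum_y, hden_y, hdet]

theorem Adj.eq_of_den_eq {x' y' : ℚ} (h : Adj Q x y) (h' : Adj Q x' y')
    (hden : (x.den, y.den) = (x'.den, y'.den)) (hx : x ∈ Set.Ico 0 1) (hx' : x' ∈ Set.Ico 0 1) :
    x = x' := by
  obtain ⟨hden_x, hden_y⟩ := Prod.mk.inj hden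
  have hdet' := h'.1
  rw [← hden_x, ← hden_y] at hdet'
  have hdvd : (x.den : ℤ) ∣ (x.num - x'.num) * y.den :=
    ⟨y.num - y'.num, by linear_combination hdet' - h.1⟩
  have hcop := Nat.isCoprime_iff_coprime.2 (mem_fareyPairs.1 h.2).2.2
  have hnonneg := Rat.num_nonneg.2 hx.1
  have hnonneg' := Rat.num_nonneg.2 hx'.1
  have hlt : x.num < x.den := by simpa using (Rat.lt_iff _ _).1 hx.2
  have hlt' : x'.num < x.den := by simpa [hden_x] using (Rat.lt_iff _ _).1 hx'.2
  have hnum := Int.eq_zero_of_abs_lt_dvd (hcop.dvd_of_dvd_mul_right hdvd) (by rw [abs_lt]; omega)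
  exact Rat.ext (by omega) hden_x

theorem adj_of_mem_farey (hx : x ∈ farey Q) (hy : y ∈ farey Q) (hxy : x < y)
    (h : ∀ z ∈ farey Q, ¬ (x < z ∧ z < y)) : Adj Q x y := by
  obtain ⟨hx0, -, hxQ⟩ := mem_farey.1 hx
  obtain ⟨-, hy1, hyQ⟩ := mem_farey.1 hy
  obtain ⟨z, hz⟩ := exists_adj hxQ
  rcases lt_trichotomy y z with hlt | rfl | hgt
  · exact absurd ⟨hxy, hlt⟩ (hz.not_between hyQ)
  · exact hz
  · exact absurd ⟨hz.lt, hgt⟩ (h z (mem_farey.2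
      ⟨hx0.trans hz.lt.le, hz.le_one (hxy.trans_le hy1), hz.den_right_le⟩))

theorem exists_seq_adj (hx : x.den ≤ Q) :
    ∃ g : ℕ → ℚ, g 0 = x ∧ ∀ i, Adj Q (g i) (g (i + 1)) := by
  choose next hnext using fun z : {z : ℚ // z.den ≤ Q} => exists_adj z.2
  let step (z : {z : ℚ // z.den ≤ Q}) : {z : ℚ // z.den ≤ Q} := ⟨next z, (hnext z).den_right_le⟩
  refine ⟨fun i => (step^[i] ⟨x, hx⟩).1, rfl, fun i => ?_⟩
  simp only [Function.iterate_succ_apply']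
  exact hnext _

theorem lt_one_of_den_ne_one {g : ℕ → ℚ} (hg : ∀ i, Adj Q (g i) (g (i + 1))) (h0 : g 0 < 1)
    {r : ℕ} (h : ∀ i, 1 ≤ i → i ≤ r → (g i).den ≠ 1) : ∀ i ≤ r, g i < 1 := by
  intro i hi
  induction i with
  | zero => exact h0
  | succ i ih =>
    refine ((hg i).le_one (ih (by omega))).lt_of_ne fun hone => h (i + 1) (by omega) hi ?_
    rw [hone, Rat.den_one]

end FareyNeighbours

section GapTuples

/-- The tuples counted by `NN Q r 3 c0`. -/
def gapTuples (Q r c0 : ℕ) : Set (Fin (r + 2) → ℚ) :=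
  {f | (∀ i, f i ∈ farey Q) ∧
    (∀ i : Fin (r + 1), f i.castSucc < f i.succ ∧
      ∀ z ∈ farey Q, ¬ (f i.castSucc < z ∧ z < f i.succ)) ∧
    (f 0).den % 3 = c0 % 3 ∧
    (f (Fin.last (r + 1))).den % 3 = c0 % 3 ∧
    ∀ i : Fin (r + 2), i ≠ 0 → i ≠ Fin.last (r + 1) → (f i).den % 3 ≠ c0 % 3}

theorem NN_eq_ncard_gapTuples (Q r c0 : ℕ) : NN Q r 3 c0 = (gapTuples Q r c0).ncard := rfl

variable {Q r c0 : ℕ} {f : Fin (r + 2) → ℚ} {p q : ℕ × ℕ}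

theorem adj_of_mem_gapTuples (hf : f ∈ gapTuples Q r c0) (i : Fin (r + 1)) :
    Adj Q (f i.castSucc) (f i.succ) :=
  adj_of_mem_farey (hf.1 _) (hf.1 _) (hf.2.1 i).1 (hf.2.1 i).2

theorem iterate_nextPair_eq_of_adj (h : ∀ i : Fin (r + 1), Adj Q (f i.castSucc) (f i.succ))
    (i : Fin (r + 1)) :
    (nextPair Q)^[i] ((f 0).den, (f 1).den) = ((f i.castSucc).den, (f i.succ).den) := by
  obtain ⟨i, hi⟩ := i
  induction i with
  | zero => rfl
  | succ i ih =>
    dsimp only at ih ⊢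
    rw [Function.iterate_succ_apply', ih (by omega)]
    exact (h ⟨i, by omega⟩).nextPair_eq (h ⟨i + 1, hi⟩)

theorem den_eq_of_adj (h : ∀ i : Fin (r + 1), Adj Q (f i.castSucc) (f i.succ))
    (i : Fin (r + 2)) : den Q ((f 0).den, (f 1).den) i = (f i).den := by
  cases i using Fin.cases with
  | zero => rfl
  | succ i =>
    have := iterate_nextPair_eq_of_adj h i
    rw [iterate_nextPair_eq] at this
    exact congrArg Prod.snd this

theorem residues_iff_isGap (h : ∀ i : Fin (r + 1), Adj Q (f i.castSucc) (f i.succ)) :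
    ((f 0).den % 3 = c0 % 3 ∧ (f (Fin.last (r + 1))).den % 3 = c0 % 3 ∧
      ∀ i : Fin (r + 2), i ≠ 0 → i ≠ Fin.last (r + 1) → (f i).den % 3 ≠ c0 % 3) ↔
      IsGap (c0 : ZMod 3) r Q ((f 0).den, (f 1).den) := by
  have hres (i : Fin (r + 2)) :
      (f i).den % 3 = c0 % 3 ↔ res Q ((f 0).den, (f 1).den) i = (c0 : ZMod 3) := by
    rw [res, den_eq_of_adj h i, ZMod.natCast_eq_natCast_iff']
  simp only [IsGap, hres, Ne, Fin.ext_iff, Fin.val_zero, Fin.val_last]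
  constructor
  · exact fun ⟨h0, hlast, hmid⟩ =>
      ⟨h0, fun i hi hi' => hmid ⟨i, by omega⟩ (by dsimp only; omega) (by dsimp only; omega), hlast⟩
  · exact fun ⟨h0, hmid, hlast⟩ => ⟨h0, hlast, fun i hi hi' => hmid i (by omega) (by omega)⟩

theorem mem_Ico_of_mem_gapTuples (hf : f ∈ gapTuples Q r c0) : f 0 ∈ Set.Ico 0 1 :=
  ⟨(mem_farey.1 (hf.1 0)).1,
    (adj_of_mem_gapTuples hf 0).lt.trans_le (mem_farey.1 (hf.1 _)).2.1⟩

theorem injOn_gapTuples :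
    Set.InjOn (fun f : Fin (r + 2) → ℚ => ((f 0).den, (f 1).den)) (gapTuples Q r c0) := by
  intro f hf g hg hden
  have hf' := adj_of_mem_gapTuples hf
  have hg' := adj_of_mem_gapTuples hg
  funext i
  induction i using Fin.induction with
  | zero =>
    exact (hf' 0).eq_of_den_eq (hg' 0) hden (mem_Ico_of_mem_gapTuples hf)
      (mem_Ico_of_mem_gapTuples hg)
  | succ i ih => exact (hf' i).unique (ih ▸ hg' i)

theorem mapsTo_gapTuples :
    Set.MapsTo (fun f : Fin (r + 2) → ℚ => ((f 0).den, (f 1).den)) (gapTuples Q r c0)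
      (pairsWith Q (IsGap (c0 : ZMod 3) r Q) : Set (ℕ × ℕ)) := by
  intro f hf
  have hadj := adj_of_mem_gapTuples hf
  exact mem_coe.2 (mem_pairsWith.2 ⟨(hadj 0).2, (residues_iff_isGap hadj).1 hf.2.2⟩)

theorem NN_le_pairCount_isGap (Q r c0 : ℕ) :
    NN Q r 3 c0 ≤ pairCount Q (IsGap (c0 : ZMod 3) r Q) := by
  rw [NN_eq_ncard_gapTuples, pairCount, ← Set.ncard_coe_finset]
  exact Set.ncard_le_ncard_of_injOn _ mapsTo_gapTuples injOn_gapTuples (finite_toSet _)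

theorem IsGap.exists_gapTuple (hp : p ∈ fareyPairs Q) (hg : IsGap (c0 : ZMod 3) r Q p)
    (hone : ∀ i, 1 ≤ i → i ≤ r → den Q p i ≠ 1) :
    ∃ f ∈ gapTuples Q r c0, ((f 0).den, (f 1).den) = p := by
  obtain ⟨x, y, hx0, hx1, hxy, hpxy⟩ := exists_adj_of_mem hp
  obtain ⟨g, rfl, hadj⟩ := exists_seq_adj hxy.den_left_le
  rw [hxy.unique (hadj 0)] at hpxy
  have hadj' (i : Fin (r + 1)) : Adj Q (g i.castSucc) (g i.succ) := hadj i
  have hden := den_eq_of_adj (f := fun i => g i) hadj'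
  have hgap := residues_iff_isGap (f := fun i => g i) (c0 := c0) hadj'
  have hfirst : ((g (0 : Fin (r + 2))).den, (g (1 : Fin (r + 2))).den) = p := hpxy
  rw [hfirst] at hden hgap
  have hlt := lt_one_of_den_ne_one (r := r) hadj hx1 fun i hi hi' =>
    hden ⟨i, by omega⟩ ▸ hone i hi hi'
  have hmem (i : Fin (r + 2)) : g i ∈ farey Q := by
    refine mem_farey.2 ⟨hx0.trans ?_, ?_, (hadj i).den_left_le⟩
    · exact (strictMono_nat_of_lt_succ fun i => (hadj i).lt).monotone (Nat.zero_le _)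
    · cases i using Fin.cases with
      | zero => exact hx1.le
      | succ i => exact (hadj i).le_one (hlt i (by omega))
  exact ⟨fun i => g i, ⟨hmem, fun i => ⟨(hadj i).lt, fun z hz =>
    (hadj i).not_between (mem_farey.1 hz).2.2⟩, hgap.2 hg⟩, hfirst⟩

theorem revPair_eq_of_den_eq_one (hp : p ∈ fareyPairs Q) {i : ℕ} (h : den Q p i = 1) :
    revPair Q i p = (Q, 1) := by
  have hle := den_le hp (i + 1)
  have hlt := lt_den_add_den hp i
  rw [revPair, iterate_nextPair_eq, h, Prod.swap_prod_mk, Prod.mk.injEq]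
  omega

/-- The denominator `1` is followed by `Q`, so going backwards from it the two runs agree, and each
gap starts at the first residue `c` met on the way. -/
theorem IsGap.eq_of_den_eq_one_of_le {c : ZMod 3} (hp : p ∈ fareyPairs Q) (hq : q ∈ fareyPairs Q)
    (hgap : IsGap c r Q p) (hgap' : IsGap c r Q q) {i j : ℕ} (hi : den Q p i = 1)
    (hj : den Q q j = 1) (hij : i ≤ j) (hjr : j ≤ r) : p = q := by
  obtain ⟨k, rfl⟩ := Nat.exists_eq_add_of_le hij
  have hpq : (nextPair Q)^[k] q = p := by
    have hrev : FareyGap.revPair Q i ((nextPair Q)^[k] q) = FareyGap.revPair Q (i + k) q := by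
      rw [FareyGap.revPair, FareyGap.revPair, Function.iterate_add_apply]
    rw [← revPair_revPair (iterate_nextPair_mem hq k) i, hrev, revPair_eq_of_den_eq_one hq hj,
      ← revPair_eq_of_den_eq_one hp hi, revPair_revPair hp]
  rcases Nat.eq_zero_or_pos k with rfl | hk
  · exact hpq.symm
  · refine absurd ?_ (hgap'.2.1 k hk (by omega))
    rw [← hgap.1, ← hpq, res, res, den_iterate, add_zero]

theorem card_isGap_den_eq_one_le {c : ZMod 3} :
    pairCount Q (fun p => IsGap c r Q p ∧ ∃ i ≤ r, den Q p i = 1) ≤ 1 := by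
  refine card_le_one.2 fun p hp q hq => ?_
  obtain ⟨hp, hgap, i, hi, hpi⟩ := mem_pairsWith.1 hp
  obtain ⟨hq, hgap', j, hj, hqj⟩ := mem_pairsWith.1 hq
  rcases le_total i j with hij | hij
  · exact hgap.eq_of_den_eq_one_of_le hp hq hgap' hpi hqj hij hj
  · exact (hgap'.eq_of_den_eq_one_of_le hq hp hgap hqj hpi hij hi).symm

theorem pairCount_isGap_le_NN_add_one (Q r c0 : ℕ) :
    pairCount Q (IsGap (c0 : ZMod 3) r Q) ≤ NN Q r 3 c0 + 1 := by
  have hsplit : pairCount Q (IsGap (c0 : ZMod 3) r Q) =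
      pairCount Q (fun p => IsGap (c0 : ZMod 3) r Q p ∧ ¬ ∃ i ≤ r, den Q p i = 1) +
        pairCount Q (fun p => IsGap (c0 : ZMod 3) r Q p ∧ ∃ i ≤ r, den Q p i = 1) := by
    rw [← pairCount_or fun p _ h h' => h.2 h'.2]
    exact pairCount_congr fun p _ => by tauto
  refine hsplit.trans_le (Nat.add_le_add ?_ card_isGap_den_eq_one_le)
  have hfin : (gapTuples Q r c0).Finite :=
    Set.Finite.of_injOn mapsTo_gapTuples injOn_gapTuples (finite_toSet _)
  rw [NN_eq_ncard_gapTuples, pairCount, ← Set.ncard_coe_finset]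
  refine (Set.ncard_le_ncard (fun p hp => ?_) (hfin.image _)).trans (Set.ncard_image_le
    (f := fun f : Fin (r + 2) → ℚ => ((f 0).den, (f 1).den)) hfin)
  obtain ⟨hp, hgap, hone⟩ := mem_pairsWith.1 (mem_coe.1 hp)
  exact hgap.exists_gapTuple hp fun i _ hi h => hone ⟨i, hi, h⟩

end GapTuples

section DenominatorCount

variable {Q D c0 : ℕ}

theorem card_farey_lt_one (Q D c0 : ℕ) :
    #{x ∈ farey Q | x.den % D = c0 % D ∧ x < 1} =
      pairCount Q (fun p => (p.1 : ZMod D) = (c0 : ZMod D)) := by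
  choose next hnext using fun (x : ℚ) (hx : x ∈ farey Q) => exists_adj (mem_farey.1 hx).2.2
  refine card_bij (fun x hx => (x.den, (next x (mem_filter.1 hx).1).den)) ?_ ?_ ?_
  · exact fun x hx => mem_pairsWith.2 ⟨(hnext x (mem_filter.1 hx).1).2,
      (ZMod.natCast_eq_natCast_iff' _ _ _).2 (mem_filter.1 hx).2.1⟩
  · intro x hx x' hx' hden
    obtain ⟨hmem, -, hlt⟩ := mem_filter.1 hx
    obtain ⟨hmem', -, hlt'⟩ := mem_filter.1 hx'
    exact (hnext x hmem).eq_of_den_eq (hnext x' hmem') hden ⟨(mem_farey.1 hmem).1, hlt⟩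
      ⟨(mem_farey.1 hmem').1, hlt'⟩
  · intro p hp
    obtain ⟨hp, hres⟩ := mem_pairsWith.1 hp
    obtain ⟨x, y, h0, h1, hxy, rfl⟩ := exists_adj_of_mem hp
    have hmem : x ∈ farey Q := mem_farey.2 ⟨h0, h1.le, hxy.den_left_le⟩
    exact ⟨x, mem_filter.2 ⟨hmem, (ZMod.natCast_eq_natCast_iff' _ _ _).1 hres, h1⟩,
      by rw [hxy.unique (hnext x hmem)]⟩

theorem pairCount_le_ND (Q D c0 : ℕ) :
    pairCount Q (fun p => (p.1 : ZMod D) = (c0 : ZMod D)) ≤ ND Q D c0 := by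
  rw [← card_farey_lt_one]
  exact card_le_card (monotone_filter_right _ fun _ _ h => h.1)

theorem ND_le_pairCount_add_one (Q D c0 : ℕ) :
    ND Q D c0 ≤ pairCount Q (fun p => (p.1 : ZMod D) = (c0 : ZMod D)) + 1 := by
  rw [← card_farey_lt_one]
  refine (card_le_card (t := insert 1 _) fun x hx => ?_).trans (card_insert_le 1 _)
  obtain ⟨hmem, hres⟩ := mem_filter.1 hx
  rw [mem_insert, mem_filter]
  exact (mem_farey.1 hmem).2.1.eq_or_lt.imp_right fun hlt => ⟨hmem, hres, hlt⟩

theorem one_le_ND (hc : ¬ 3 ∣ c0) (hQ : 2 ≤ Q) : 1 ≤ ND Q 3 c0 := by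
  refine card_pos.2 ?_
  obtain h | h : 1 = c0 % 3 ∨ 2 = c0 % 3 := by omega
  · exact ⟨0, mem_filter.2 ⟨mem_farey.2 ⟨le_rfl, zero_le_one, one_le_two.trans hQ⟩, h⟩⟩
  · have hden : ((1 : ℚ) / 2).den = 2 := by norm_num
    exact ⟨1 / 2, mem_filter.2
      ⟨mem_farey.2 ⟨by norm_num, by norm_num, hden.trans_le hQ⟩, by rw [hden, ← h]⟩⟩

theorem hasPairDensity_fst {c : ZMod 3} (hc : c ≠ 0) :
    HasPairDensity 3 (fun _ p => (p.1 : ZMod 3) = c) (3 / 2) 9 := by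
  have h (β : ZMod 3) := hasPairDensity_residues (α := c) (β := β)
    ⟨c⁻¹, 0, by rw [inv_mul_cancel₀ hc, zero_mul, add_zero]⟩
  have hsum := ((h 0).or (h 1) ?_).or (h 2) ?_
  · convert hsum.congr fun Q => pairCount_congr fun p _ => ?_ using 1
    · norm_num
    · norm_num
    · have hcases : ∀ b : ZMod 3, b = 0 ∨ b = 1 ∨ b = 2 := by decide
      have := hcases p.2
      tauto
  · rintro Q p - ⟨-, h0⟩ ⟨-, h1⟩
    exact absurd (h0.symm.trans h1) (by decide)
  · rintro Q p - (⟨-, h0⟩ | ⟨-, h1⟩) ⟨-, h2⟩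
    · exact absurd (h0.symm.trans h2) (by decide)
    · exact absurd (h1.symm.trans h2) (by decide)

theorem natCast_zmod_ne_zero (hc : ¬ D ∣ c0) : (c0 : ZMod D) ≠ 0 :=
  (ZMod.natCast_eq_zero_iff _ _).not.2 hc

theorem eventually_sq_le_ND : ∀ᶠ Q : ℕ in atTop, ∀ c0, ¬ 3 ∣ c0 →
    1 / 48 * (Q : ℝ) ^ 2 ≤ ND Q 3 c0 := by
  have hlog : (fun Q : ℕ => 1 + Real.log Q) =o[atTop] fun Q : ℕ => (Q : ℝ) :=
    ((Asymptotics.isLittleO_const_id_atTop (1 : ℝ)).add Real.isLittleO_log_id_atTop).comp_tendsto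
      tendsto_natCast_atTop_atTop
  filter_upwards [hlog.bound (show (0 : ℝ) < 1 / 432 by norm_num), eventually_ge_atTop 1]
    with Q hQ hQ1 c0 hc
  rw [Real.norm_of_nonneg (by positivity), Real.norm_of_nonneg Q.cast_nonneg] at hQ
  have hcount : (pairCount Q (fun p => (p.1 : ZMod 3) = (c0 : ZMod 3)) : ℝ) ≤ ND Q 3 c0 := by
    exact_mod_cast pairCount_le_ND Q 3 c0
  have hdensity := (abs_le.1 (hasPairDensity_fst (natCast_zmod_ne_zero hc) Q)).1
  have hmain : 1 / (4 * (3 : ℝ) ^ 2) * (3 / 2) * (Q : ℝ) ^ 2 ≤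
      coprimeDensity 3 Q * (3 / 2) * (Q : ℝ) ^ 2 := by
    gcongr
    exact_mod_cast one_div_le_coprimeDensity (m := 3) hQ1
  have herror : (Q : ℝ) * (1 + Real.log Q) ≤ Q * (1 / 432 * Q) := by gcongr
  linarith

theorem exists_mul_sq_le_ND :
    ∃ c : ℝ, 0 < c ∧ ∀ c0, ¬ 3 ∣ c0 → ∀ Q : ℕ, 2 ≤ Q → c * (Q : ℝ) ^ 2 ≤ ND Q 3 c0 := by
  obtain ⟨N, hN⟩ := eventually_atTop.1 eventually_sq_le_ND
  refine ⟨min (1 / 48) (1 / ((N : ℝ) + 1) ^ 2), by positivity, fun c0 hc Q hQ => ?_⟩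
  rcases le_total N Q with hNQ | hQN
  · exact (mul_le_mul_of_nonneg_right (min_le_left _ _) (by positivity)).trans (hN Q hNQ c0 hc)
  · have hQN' : (Q : ℝ) ≤ N + 1 := by exact_mod_cast hQN.trans N.le_succ
    calc min (1 / 48) (1 / ((N : ℝ) + 1) ^ 2) * (Q : ℝ) ^ 2
        ≤ 1 / ((N : ℝ) + 1) ^ 2 * ((N : ℝ) + 1) ^ 2 := by
          gcongr
          exact min_le_right _ _
      _ = 1 := by field_simp
      _ ≤ ND Q 3 c0 := by exact_mod_cast one_le_ND hc hQ

end DenominatorCount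

section Comparison

theorem exists_abs_nulim_le : ∃ M : ℝ, 0 ≤ M ∧ ∀ r, |nulim r| ≤ M := by
  refine ⟨∑ r ∈ range 6, |nulim r| + 1, by positivity, fun r => ?_⟩
  rcases lt_or_ge r 6 with hr | hr
  · have := single_le_sum (f := fun r => |nulim r|) (fun i _ => abs_nonneg _) (mem_range.2 hr)
    linarith
  · obtain ⟨n, rfl⟩ := Nat.exists_eq_add_of_le' hr
    have hnonneg : 0 ≤ ∑ r ∈ range 6, |nulim r| := by positivity
    have hpos : 0 < 3 / 2 * nulim (n + 6) := by
      rw [nulim_add_six]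
      positivity
    have hle : 3 / 2 * nulim (n + 6) ≤ 4 / (7 * 9 * 11) := by
      rw [nulim_add_six]
      gcongr <;> linarith [n.cast_nonneg (α := ℝ)]
    rw [abs_of_pos (by linarith)]
    linarith

theorem abs_NN_sub_le {c0 Q r : ℕ} {M : ℝ} (hc : ¬ 3 ∣ c0) (hM : |nulim r| ≤ M) :
    |(NN Q r 3 c0 : ℝ) - nulim r * ND Q 3 c0| ≤
      1 + 200 * (Q * (1 + Real.log Q)) + M * (9 * (Q * (1 + Real.log Q)) + 1) := by
  have hM0 := (abs_nonneg _).trans hM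
  have hc' := natCast_zmod_ne_zero hc
  have hgap := abs_le.1 (hasPairDensity_isGap (neg_ne_zero.2 hc') r Q)
  rw [neg_neg] at hgap
  have hfst := abs_le.1 (hasPairDensity_fst hc' Q)
  have hNN : |(NN Q r 3 c0 : ℝ) - coprimeDensity 3 Q * (3 / 2 * nulim r) * (Q : ℝ) ^ 2| ≤
      1 + 200 * (Q * (1 + Real.log Q)) := by
    have hle : (NN Q r 3 c0 : ℝ) ≤ pairCount Q (IsGap (c0 : ZMod 3) r Q) := by
      exact_mod_cast NN_le_pairCount_isGap Q r c0
    have hge : (pairCount Q (IsGap (c0 : ZMod 3) r Q) : ℝ) ≤ NN Q r 3 c0 + 1 := by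
      exact_mod_cast pairCount_isGap_le_NN_add_one Q r c0
    exact abs_le.2 ⟨by linarith, by linarith⟩
  have hND : |coprimeDensity 3 Q * (3 / 2) * (Q : ℝ) ^ 2 - ND Q 3 c0| ≤
      9 * (Q * (1 + Real.log Q)) + 1 := by
    have hle : (pairCount Q (fun p => (p.1 : ZMod 3) = (c0 : ZMod 3)) : ℝ) ≤ ND Q 3 c0 := by
      exact_mod_cast pairCount_le_ND Q 3 c0
    have hge : (ND Q 3 c0 : ℝ) ≤
        pairCount Q (fun p => (p.1 : ZMod 3) = (c0 : ZMod 3)) + 1 := by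
      exact_mod_cast ND_le_pairCount_add_one Q 3 c0
    exact abs_le.2 ⟨by linarith, by linarith⟩
  calc |(NN Q r 3 c0 : ℝ) - nulim r * ND Q 3 c0|
      = |((NN Q r 3 c0 : ℝ) - coprimeDensity 3 Q * (3 / 2 * nulim r) * (Q : ℝ) ^ 2) +
          nulim r * (coprimeDensity 3 Q * (3 / 2) * (Q : ℝ) ^ 2 - ND Q 3 c0)| := by ring_nf
    _ ≤ _ := (abs_add_le _ _).trans (add_le_add hNN (by rw [abs_mul]; gcongr))

theorem abs_NN_sub_le_mul_log {c0 Q r : ℕ} {M : ℝ} (hc : ¬ 3 ∣ c0) (hM : |nulim r| ≤ M)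
    (hQ : 2 ≤ Q) :
    |(NN Q r 3 c0 : ℝ) - nulim r * ND Q 3 c0| ≤ (601 + 28 * M) * (Q * Real.log Q) := by
  have hQ' : (2 : ℝ) ≤ Q := by exact_mod_cast hQ
  have hlog : 1 / 2 ≤ Real.log Q := by
    linarith [Real.log_two_gt_d9, Real.log_le_log two_pos hQ']
  have hQlog : (Q : ℝ) * (1 + Real.log Q) ≤ 3 * (Q * Real.log Q) := by nlinarith
  have hone : 1 ≤ Q * Real.log Q := by nlinarith
  have hmul : M * (9 * (Q * (1 + Real.log Q)) + 1) ≤ M * (28 * (Q * Real.log Q)) :=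
    mul_le_mul_of_nonneg_left (by linarith) ((abs_nonneg _).trans hM)
  linarith [abs_NN_sub_le (Q := Q) hc hM]

end Comparison

end FareyGap

open FareyGap in
theorem farey_gap_distribution_general :
    ∃ C : ℝ, 0 < C ∧ ∀ c0 : ℕ, ¬ 3 ∣ c0 → ∀ Q r : ℕ, 2 ≤ Q →
      |nuQ Q r 3 c0 - nulim r| ≤ C * Real.log Q / Q := by
  obtain ⟨M, hM0, hM⟩ := exists_abs_nulim_le
  obtain ⟨c, hc0, hc⟩ := exists_mul_sq_le_ND
  refine ⟨(601 + 28 * M) / c, by positivity, fun c0 hc0 Q r hQ => ?_⟩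
  have hQ0 : (0 : ℝ) < Q := by exact_mod_cast two_pos.trans_le hQ
  have hND0 : (0 : ℝ) < ND Q 3 c0 := by exact_mod_cast one_le_ND hc0 hQ
  calc |nuQ Q r 3 c0 - nulim r|
      = |(NN Q r 3 c0 : ℝ) - nulim r * ND Q 3 c0| / ND Q 3 c0 := by
        rw [nuQ, div_sub' hND0.ne', abs_div, abs_of_pos hND0, mul_comm (nulim r)]
    _ ≤ (601 + 28 * M) * (Q * Real.log Q) / (c * (Q : ℝ) ^ 2) := by
        gcongr
        · exact abs_NN_sub_le_mul_log hc0 (hM r) hQ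
        · exact hc c0 hc0 Q hQ
    _ = (601 + 28 * M) / c * Real.log Q / Q := by field_simp

/-- Main theorem: for c₀ ∈ {1,2} there is an absolute constant C such that for all Q ≥ 2 and
r ≥ 0 with r ≤ (Q/ln Q)^{1/3}, one has |ν(Q;r,3,c₀) − ν(r;3,c₀)| ≤ C·(ln Q)/Q. -/
theorem farey_gap_distribution :
    ∃ C : ℝ, 0 < C ∧ ∀ c0 : ℕ, (c0 = 1 ∨ c0 = 2) → ∀ Q r : ℕ, 2 ≤ Q →
      (r : ℝ) ≤ ((Q : ℝ) / Real.log Q) ^ ((1 : ℝ) / 3) →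
      |nuQ Q r 3 c0 - nulim r| ≤ C * Real.log Q / Q := by
  obtain ⟨C, hC0, hC⟩ := farey_gap_distribution_general
  exact ⟨C, hC0, fun c0 hc Q r hQ _ => hC c0 (by omega) Q r hQ⟩
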